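/- The set of pairs (t,x) ∈ ℚ × ℚ satisfying x⁶ + p(t)x⁴ − q(t)x² + r(t) = 0 is exactly {(−2, 34), (−2, −34)}. -/

import Mathlib

/-- `Q4 R`: elements `a + b i + (c + d i) η` with `i² = -1`, `η² = (1 - i) η + 1`. -/
@[ext] structure Q4 (R : Type) where
  a : R
  b : R
  c : R
  d : R

namespace Q4

instance {R : Type} [DecidableEq R] : DecidableEq (Q4 R) := fun x y =>
  decidable_of_iff (x.a = y.a ∧ x.b = y.b ∧ x.c = y.c ∧ x.d = y.d) Q4.ext_iff.symm

variable {R : Type} [CommRing R]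

instance : Zero (Q4 R) := ⟨⟨0, 0, 0, 0⟩⟩
instance : One (Q4 R) := ⟨⟨1, 0, 0, 0⟩⟩
instance : Add (Q4 R) := ⟨fun x y => ⟨x.a + y.a, x.b + y.b, x.c + y.c, x.d + y.d⟩⟩
instance : Neg (Q4 R) := ⟨fun x => ⟨-x.a, -x.b, -x.c, -x.d⟩⟩
instance : Sub (Q4 R) := ⟨fun x y => ⟨x.a - y.a, x.b - y.b, x.c - y.c, x.d - y.d⟩⟩
instance : Mul (Q4 R) := ⟨fun x y =>
  ⟨x.a * y.a - x.b * y.b + (x.c * y.c - x.d * y.d),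
   x.a * y.b + x.b * y.a + (x.c * y.d + x.d * y.c),
   x.a * y.c - x.b * y.d + x.c * y.a - x.d * y.b
      + ((x.c * y.c - x.d * y.d) + (x.c * y.d + x.d * y.c)),
   x.a * y.d + x.b * y.c + x.c * y.b + x.d * y.a
      + ((x.c * y.d + x.d * y.c) - (x.c * y.c - x.d * y.d))⟩⟩
instance : NatCast (Q4 R) := ⟨fun n => ⟨n, 0, 0, 0⟩⟩
instance : IntCast (Q4 R) := ⟨fun n => ⟨n, 0, 0, 0⟩⟩

@[simp] lemma zero_a : (0 : Q4 R).a = 0 := rfl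
@[simp] lemma zero_b : (0 : Q4 R).b = 0 := rfl
@[simp] lemma zero_c : (0 : Q4 R).c = 0 := rfl
@[simp] lemma zero_d : (0 : Q4 R).d = 0 := rfl
@[simp] lemma one_a : (1 : Q4 R).a = 1 := rfl
@[simp] lemma one_b : (1 : Q4 R).b = 0 := rfl
@[simp] lemma one_c : (1 : Q4 R).c = 0 := rfl
@[simp] lemma one_d : (1 : Q4 R).d = 0 := rfl
@[simp] lemma add_a (x y : Q4 R) : (x + y).a = x.a + y.a := rfl
@[simp] lemma add_b (x y : Q4 R) : (x + y).b = x.b + y.b := rfl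
@[simp] lemma add_c (x y : Q4 R) : (x + y).c = x.c + y.c := rfl
@[simp] lemma add_d (x y : Q4 R) : (x + y).d = x.d + y.d := rfl
@[simp] lemma sub_a (x y : Q4 R) : (x - y).a = x.a - y.a := rfl
@[simp] lemma sub_b (x y : Q4 R) : (x - y).b = x.b - y.b := rfl
@[simp] lemma sub_c (x y : Q4 R) : (x - y).c = x.c - y.c := rfl
@[simp] lemma sub_d (x y : Q4 R) : (x - y).d = x.d - y.d := rfl
@[simp] lemma neg_a (x : Q4 R) : (-x).a = -x.a := rfl
@[simp] lemma neg_b (x : Q4 R) : (-x).b = -x.b := rfl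
@[simp] lemma neg_c (x : Q4 R) : (-x).c = -x.c := rfl
@[simp] lemma neg_d (x : Q4 R) : (-x).d = -x.d := rfl
@[simp] lemma mul_a (x y : Q4 R) :
    (x * y).a = x.a * y.a - x.b * y.b + (x.c * y.c - x.d * y.d) := rfl
@[simp] lemma mul_b (x y : Q4 R) :
    (x * y).b = x.a * y.b + x.b * y.a + (x.c * y.d + x.d * y.c) := rfl
@[simp] lemma mul_c (x y : Q4 R) : (x * y).c = x.a * y.c - x.b * y.d + x.c * y.a - x.d * y.b
      + ((x.c * y.c - x.d * y.d) + (x.c * y.d + x.d * y.c)) := rfl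
@[simp] lemma mul_d (x y : Q4 R) : (x * y).d = x.a * y.d + x.b * y.c + x.c * y.b + x.d * y.a
      + ((x.c * y.d + x.d * y.c) - (x.c * y.c - x.d * y.d)) := rfl
@[simp] lemma natCast_a (n : ℕ) : (n : Q4 R).a = n := rfl
@[simp] lemma natCast_b (n : ℕ) : (n : Q4 R).b = 0 := rfl
@[simp] lemma natCast_c (n : ℕ) : (n : Q4 R).c = 0 := rfl
@[simp] lemma natCast_d (n : ℕ) : (n : Q4 R).d = 0 := rfl
@[simp] lemma intCast_a (n : ℤ) : (n : Q4 R).a = n := rfl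
@[simp] lemma intCast_b (n : ℤ) : (n : Q4 R).b = 0 := rfl
@[simp] lemma intCast_c (n : ℤ) : (n : Q4 R).c = 0 := rfl
@[simp] lemma intCast_d (n : ℤ) : (n : Q4 R).d = 0 := rfl

instance : CommRing (Q4 R) where
  add_assoc x y z := by ext <;> simp <;> ring
  zero_add x := by ext <;> simp
  add_zero x := by ext <;> simp
  add_comm x y := by ext <;> simp <;> ring
  left_distrib x y z := by ext <;> simp <;> ring
  right_distrib x y z := by ext <;> simp <;> ring
  zero_mul x := by ext <;> simp
  mul_zero x := by ext <;> simp
  mul_assoc x y z := by ext <;> simp <;> ring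
  one_mul x := by ext <;> simp
  mul_one x := by ext <;> simp
  neg_add_cancel x := by ext <;> simp
  sub_eq_add_neg x y := by ext <;> simp <;> ring
  mul_comm x y := by ext <;> simp <;> ring
  nsmul := nsmulRec
  zsmul := zsmulRec
  natCast_zero := by ext <;> simp
  natCast_succ n := by ext <;> simp
  intCast_ofNat n := by ext <;> simp
  intCast_negSucc n := by ext <;> simp

@[simp] lemma ofNat_a (n : ℕ) [n.AtLeastTwo] : (ofNat(n) : Q4 R).a = ofNat(n) := rfl
@[simp] lemma ofNat_b (n : ℕ) [n.AtLeastTwo] : (ofNat(n) : Q4 R).b = 0 := rfl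
@[simp] lemma ofNat_c (n : ℕ) [n.AtLeastTwo] : (ofNat(n) : Q4 R).c = 0 := rfl
@[simp] lemma ofNat_d (n : ℕ) [n.AtLeastTwo] : (ofNat(n) : Q4 R).d = 0 := rfl

/-- real and imaginary parts of the relative norm to `ℚ(i)` -/
def P (x : Q4 R) : R :=
  x.a ^ 2 - x.b ^ 2 + (x.a * x.c - x.b * x.d + (x.a * x.d + x.b * x.c)) - (x.c ^ 2 - x.d ^ 2)
def Q (x : Q4 R) : R :=
  2 * x.a * x.b + (x.a * x.d + x.b * x.c - (x.a * x.c - x.b * x.d)) - 2 * x.c * x.d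
def nrm (x : Q4 R) : R := P x ^ 2 + Q x ^ 2
/-- the nontrivial automorphism over `ℚ(i)` -/
def conj (x : Q4 R) : Q4 R := ⟨x.a + x.c + x.d, x.b + x.d - x.c, -x.c, -x.d⟩

lemma P_mul (x y : Q4 R) : P (x * y) = P x * P y - Q x * Q y := by
  simp [P, Q]; ring
lemma Q_mul (x y : Q4 R) : Q (x * y) = P x * Q y + Q x * P y := by
  simp [P, Q]; ring
lemma nrm_mul (x y : Q4 R) : nrm (x * y) = nrm x * nrm y := by
  rw [nrm, P_mul, Q_mul, nrm, nrm]; ring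
lemma mul_conj (x : Q4 R) : x * conj x = ⟨P x, Q x, 0, 0⟩ := by
  ext <;> simp [P, Q, conj] <;> ring
lemma conj_mul (x y : Q4 R) : conj (x * y) = conj x * conj y := by
  ext <;> simp [conj] <;> ring
/-- adjugate: `x * adj x = nrm x` -/
def adj (x : Q4 R) : Q4 R := conj x * ⟨P x, -Q x, 0, 0⟩
lemma mul_adj (x : Q4 R) : x * adj x = ⟨nrm x, 0, 0, 0⟩ := by
  rw [adj, ← mul_assoc, mul_conj]
  ext <;> simp [nrm] <;> ring

end Q4

abbrev O := Q4 ℤ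

namespace Q4

lemma nrm_nonneg (x : O) : 0 ≤ nrm x := by unfold nrm; positivity

def red (n : ℕ) (x : O) : Q4 (ZMod n) := ⟨x.a, x.b, x.c, x.d⟩

lemma red3 : ∀ a b c d : ZMod 3, nrm (⟨a, b, c, d⟩ : Q4 (ZMod 3)) = 0 →
    a = 0 ∧ b = 0 ∧ c = 0 ∧ d = 0 := by
  unfold nrm P Q; decide +kernel

lemma nrm_red (n : ℕ) (x : O) : nrm (red n x) = ((nrm x : ℤ) : ZMod n) := by
  simp [nrm, P, Q, red]

lemma eq_zero_of_nrm_aux (N : ℕ) : ∀ x : O, nrm x = 0 →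
    x.a.natAbs + x.b.natAbs + x.c.natAbs + x.d.natAbs ≤ N → x = 0 := by
  induction N with
  | zero =>
    intro x _ h
    ext <;> simp <;> omega
  | succ k ih =>
    intro x hx h
    have h3 : nrm (red 3 x) = 0 := by rw [nrm_red, hx]; simp
    obtain ⟨h1, h2, h3, h4⟩ := red3 _ _ _ _ h3
    rw [ZMod.intCast_zmod_eq_zero_iff_dvd] at h1 h2 h3 h4
    obtain ⟨a, ha⟩ := h1
    obtain ⟨b, hb⟩ := h2
    obtain ⟨c, hc⟩ := h3
    obtain ⟨d, hd⟩ := h4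
    have hx' : x = 3 * ⟨a, b, c, d⟩ := by
      ext <;> simp [*]
    have hy : nrm (⟨a, b, c, d⟩ : O) = 0 := by
      rw [hx', nrm_mul] at hx
      rcases mul_eq_zero.1 hx with h | h
      · exfalso; revert h; decide
      · exact h
    by_cases h0 : x = 0
    · exact h0
    have := ih ⟨a, b, c, d⟩ hy (by
      have : ¬ (x.a = 0 ∧ x.b = 0 ∧ x.c = 0 ∧ x.d = 0) := by
        rintro ⟨h1, h2, h3, h4⟩; exact h0 (by ext <;> assumption)
      simp only
      push_cast at ha hb hc hd
      omega)
    rw [hx', this, mul_zero]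

lemma eq_zero_of_nrm {x : O} (h : nrm x = 0) : x = 0 := eq_zero_of_nrm_aux _ x h le_rfl

lemma nrm_pos {x : O} (h : x ≠ 0) : 0 < nrm x :=
  lt_of_le_of_ne (nrm_nonneg x) (fun h' => h (eq_zero_of_nrm h'.symm))

instance : Nontrivial O := ⟨0, 1, by decide⟩
instance : IsDomain O := by
  have : NoZeroDivisors O := ⟨by
    intro x y h
    have : nrm x * nrm y = 0 := by rw [← nrm_mul, h]; decide
    rcases mul_eq_zero.1 this with h | h
    · exact Or.inl (eq_zero_of_nrm h)
    · exact Or.inr (eq_zero_of_nrm h)⟩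
  exact NoZeroDivisors.to_isDomain O

end Q4

namespace Q4

lemma core_bounds {u v : ℚ} (hu : |u| ≤ 1/2) (hv : |v| ≤ 1/2) (Pp Qq : ℚ)
    (hP : Pp = u^2 - v^2 + u*v) (hQ : Qq = 2*u*v - (u^2 - v^2)/2) :
    Pp^2 + Qq^2 ≤ 5/16 := by
  have h1 : u^2 ≤ 1/4 := by rw [abs_le] at hu; nlinarith
  have h2 : v^2 ≤ 1/4 := by rw [abs_le] at hv; nlinarith
  have : Pp^2 + Qq^2 = 5/4 * (u^2+v^2)^2 := by rw [hP, hQ]; ring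
  rw [this]
  nlinarith [sq_nonneg u, sq_nonneg v]

/-- same sign case -/
lemma core_same {X Y Pp Qq : ℚ} (hX : |X| ≤ 1/4) (hY : Y^2 ≤ 8/25) (hPQ : Pp^2 + Qq^2 ≤ 5/16)
    (hs : 0 ≤ Y * Qq) : (X - Pp)^2 + (Y - Qq)^2 < 1 := by
  have hP : |Pp| ≤ 14/25 := by
    apply abs_le_of_sq_le_sq _ (by norm_num)
    nlinarith [sq_nonneg Qq]
  have h1 : (X - Pp)^2 ≤ X^2 + 7/25 + Pp^2 := by
    have : |X * Pp| ≤ 1/4 * (14/25) := by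
      rw [abs_mul]; exact mul_le_mul hX hP (abs_nonneg _) (by norm_num)
    rw [abs_le] at this
    nlinarith
  have h2 : X^2 ≤ 1/16 := by rw [abs_le] at hX; nlinarith
  nlinarith

lemma core {x y u v : ℚ} (hx : |x| ≤ 1/2) (hy : |y| ≤ 1/2) (hu : |u| ≤ 1/2) (hv : |v| ≤ 1/2) :
    ∃ k : ℤ, ((x-k)^2 - y^2 - (u^2 - v^2 + u*v))^2 + (2*(x-k)*y - (2*u*v - (u^2 - v^2)/2))^2 < 1 := by
  obtain ⟨Pp, hP⟩ : ∃ Pp, Pp = u^2 - v^2 + u*v := ⟨_, rfl⟩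
  obtain ⟨Qq, hQ⟩ : ∃ Qq, Qq = 2*u*v - (u^2 - v^2)/2 := ⟨_, rfl⟩
  have hPQ := core_bounds hu hv Pp Qq hP hQ
  rw [← hP, ← hQ]
  have hx2 : x^2 ≤ 1/4 := by rw [abs_le] at hx; nlinarith
  have hy2 : y^2 ≤ 1/4 := by rw [abs_le] at hy; nlinarith
  by_cases hs : 0 ≤ (2*x*y) * Qq
  · refine ⟨0, ?_⟩
    have := core_same (X := x^2 - y^2) (Y := 2*x*y) (Pp := Pp) (Qq := Qq)
      (by rw [abs_le]; constructor <;> nlinarith [sq_nonneg x, sq_nonneg y]) (by nlinarith [sq_nonneg x, sq_nonneg y])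
      hPQ hs
    simpa using this
  push Not at hs
  by_cases hsm : x^2 + y^2 < 11/25
  · refine ⟨0, ?_⟩
    have e : (x^2-y^2)^2 + (2*x*y)^2 = (x^2+y^2)^2 := by ring
    have h0 : (x^2-y^2)^2 + (2*x*y)^2 ≤ (11/25)^2 := by
      rw [e]; exact pow_le_pow_left₀ (by positivity) hsm.le 2
    -- weighted inequality
    simp only [Int.cast_zero, sub_zero]
    generalize x^2 - y^2 = X at *
    generalize 2*x*y = Y at *
    nlinarith [sq_nonneg (14 * X + 11 * Pp), sq_nonneg (14 * Y + 11 * Qq)]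
  push Not at hsm
  have hxl : 19/100 ≤ x^2 := by linarith
  have hyl : 19/100 ≤ y^2 := by linarith
  have key : ∀ z : ℚ, (1/2 ≤ |z| ∧ |z| ≤ 113/200) → 0 ≤ (2*z*y)*Qq →
      (z^2 - y^2 - Pp)^2 + (2*z*y - Qq)^2 < 1 := by
    rintro z ⟨hz1, hz2⟩ hz
    have hz3 : 1/4 ≤ z^2 := by rw [← sq_abs]; nlinarith
    have hz4 : z^2 ≤ 32/100 := by rw [← sq_abs]; nlinarith
    exact core_same (by rw [abs_le]; constructor <;> nlinarith) (by nlinarith) hPQ hz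
  rw [abs_le] at hx
  rcases le_total 0 x with h | h
  · refine ⟨1, ?_⟩
    have hx3 : 87/200 ≤ x := by nlinarith
    have := key (x - 1) (by rw [abs_of_neg (by linarith)]; constructor <;> linarith) (by
      have h1 : y * Qq < 0 := by
        by_contra hc
        push Not at hc
        nlinarith
      nlinarith)
    simpa using this
  · refine ⟨-1, ?_⟩
    have hx3 : x ≤ -(87/200) := by nlinarith
    have := key (x + 1) (by rw [abs_of_pos (by linarith)]; constructor <;> linarith) (by
      have h1 : 0 < y * Qq := by
        by_contra hc
        push Not at hc
        nlinarith
      nlinarith)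
    simpa using this

def toQ (x : O) : Q4 ℚ := ⟨x.a, x.b, x.c, x.d⟩

lemma exists_near (x : Q4 ℚ) : ∃ q : O, nrm (x - toQ q) < 1 := by
  have rd : ∀ z : ℚ, |z - round z| ≤ 1/2 := abs_sub_round
  set c := round x.c
  set d := round x.d
  obtain ⟨u, hu⟩ : ∃ u, u = x.c - c := ⟨_, rfl⟩
  obtain ⟨v, hv⟩ : ∃ v, v = x.d - d := ⟨_, rfl⟩
  set b := round (x.b + (v - u)/2)
  set a := round (x.a + (u + v)/2)
  obtain ⟨k, hk⟩ := core (rd (x.a + (u + v)/2)) (rd (x.b + (v - u)/2))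
    (u := u) (v := v) (hu ▸ rd _) (hv ▸ rd _)
  refine ⟨⟨a + k, b, c, d⟩, lt_of_eq_of_lt ?_ hk⟩
  have hc : x.c = u + c := by rw [hu]; ring
  have hd : x.d = v + d := by rw [hv]; ring
  simp only [nrm, P, Q, toQ, sub_a, sub_b, sub_c, sub_d, hc, hd]
  push_cast
  ring

lemma nrm_toQ (x : O) : nrm (toQ x) = ((nrm x : ℤ) : ℚ) := by
  simp [nrm, P, Q, toQ]

lemma exists_quot (x y : O) (hy : y ≠ 0) : ∃ q : O, nrm (x - y * q) < nrm y := by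
  have hn : (0 : ℚ) < ((nrm y : ℤ) : ℚ) := by exact_mod_cast nrm_pos hy
  obtain ⟨q, hq⟩ := exists_near (toQ (x * adj y) * ⟨1 / ((nrm y : ℤ) : ℚ), 0, 0, 0⟩)
  refine ⟨q, ?_⟩
  have e : toQ y * (toQ (x * adj y) * ⟨1 / ((nrm y : ℤ) : ℚ), 0, 0, 0⟩ - toQ q) = toQ (x - y * q) := by
    have h1 : toQ y * toQ (x * adj y) = toQ x * ⟨((nrm y : ℤ) : ℚ), 0, 0, 0⟩ := by
      have : y * (x * adj y) = x * ⟨nrm y, 0, 0, 0⟩ := by rw [← mul_adj]; ring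
      have h2 := congrArg toQ this
      have tm : ∀ s t : O, toQ (s * t) = toQ s * toQ t := by
        intro s t; ext <;> simp [toQ]
      rw [tm, tm x ⟨nrm y, 0, 0, 0⟩] at h2
      rw [h2]; rfl
    rw [mul_sub, ← mul_assoc, h1, mul_assoc]
    have : (⟨((nrm y : ℤ) : ℚ), 0, 0, 0⟩ : Q4 ℚ) * ⟨1 / ((nrm y : ℤ) : ℚ), 0, 0, 0⟩ = 1 := by
      ext <;> simp [hn.ne']
    rw [this, mul_one]
    ext <;> simp [toQ]
  have h3 : nrm (toQ (x - y * q)) < nrm (toQ y) := by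
    rw [← e, nrm_mul]
    rw [nrm_toQ] at *
    exact mul_lt_of_lt_one_right hn hq
  rw [nrm_toQ, nrm_toQ] at h3
  exact_mod_cast h3

open Classical in
noncomputable def eucl : EuclideanDomain O :=
  { (inferInstance : CommRing O), (inferInstance : Nontrivial O) with
    quotient := fun x y => if h : y = 0 then 0 else Classical.choose (exists_quot x y h)
    remainder := fun x y =>
      x - y * (if h : y = 0 then 0 else Classical.choose (exists_quot x y h))
    quotient_zero := by intro x; simp
    quotient_mul_add_remainder_eq := by intro x y; ring
    r := fun x y => (nrm x).toNat < (nrm y).toNat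
    r_wellFounded := (measure fun x : O => (nrm x).toNat).wf
    remainder_lt := by
      intro x y hy
      rw [dif_neg hy]
      have := Classical.choose_spec (exists_quot x y hy)
      have h2 := nrm_pos hy
      omega
    mul_left_not_lt := by
      intro x y hy
      rw [nrm_mul]
      have h2 := nrm_pos hy
      have h1 := nrm_nonneg x
      have : nrm x ≤ nrm x * nrm y := by nlinarith
      omega }

instance : IsPrincipalIdealRing O := @EuclideanDomain.to_principal_ideal_domain O eucl
example : UniqueFactorizationMonoid O := inferInstance
end Q4

namespace Q4

lemma nrm_one : nrm (1 : O) = 1 := by decide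

lemma isUnit_of_nrm {x : O} (h : nrm x = 1) : IsUnit x := by
  have := mul_adj x
  rw [h] at this
  exact IsUnit.of_mul_eq_one _ this

lemma nrm_of_isUnit {x : O} (h : IsUnit x) : nrm x = 1 := by
  obtain ⟨y, hy⟩ := h.exists_right_inv
  have h1 : nrm x * nrm y = 1 := by rw [← nrm_mul, hy, nrm_one]
  have := nrm_nonneg x
  exact Int.eq_one_of_mul_eq_one_right this h1

lemma nrm_dvd {x y : O} (h : x ∣ y) : nrm x ∣ nrm y := by
  obtain ⟨z, rfl⟩ := h
  exact ⟨_, nrm_mul _ _⟩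

lemma prime_of_nrm {x : O} (h : Prime (nrm x)) : Prime x := by
  rw [← irreducible_iff_prime]
  constructor
  · intro hu
    rw [nrm_of_isUnit hu] at h
    exact h.not_isUnit isUnit_one
  · intro a b hab
    have h1 : nrm x = nrm a * nrm b := by rw [hab, nrm_mul]
    rcases h.irreducible.isUnit_or_isUnit h1 with h2 | h2
    · left; apply isUnit_of_nrm
      rcases Int.isUnit_iff.1 h2 with h | h
      · exact h
      · have := nrm_nonneg a; omega
    · right; apply isUnit_of_nrm
      rcases Int.isUnit_iff.1 h2 with h | h
      · exact h
      · have := nrm_nonneg b; omega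

def I : O := ⟨0, 1, 0, 0⟩
def E : O := ⟨0, 0, 1, 0⟩
def pi : O := ⟨-1, 0, 1, 0⟩
def tau : O := ⟨-1, 0, 1, 1⟩
def q : O := ⟨1, -2, 0, 0⟩
def p1 : O := ⟨2, -2, -1, 0⟩
def p2 : O := ⟨4, 1, 0, 0⟩
def t0 : O := ⟨4, 0, -1, -1⟩
def D : O := 2 * t0 * p2

lemma I_sq : I ^ 2 = -1 := by decide
lemma E_sq : E ^ 2 = (1 - I) * E + 1 := by decide
lemma pi_eq : pi = E - 1 := by decide
lemma tau_eq : tau = (1 + I) * E - 1 := by decide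
lemma tau_sq : tau ^ 2 = 1 + 2 * I := by decide
lemma q_eq : q = 1 - 2 * I := by decide
lemma p1_eq : p1 = 2 * (1 - I) - E := by decide
lemma p2_eq : p2 = 4 + I := by decide
lemma t0_eq : t0 = 3 - tau := by decide
lemma t0_eq2 : t0 = (1 + I) * p1 := by decide
lemma onei : 1 + I = - E * pi ^ 2 := by decide
lemma two_eq : (2 : O) = - I * (1 + I) ^ 2 := by decide

lemma prime_pi : Prime pi := prime_of_nrm (by
  have : nrm pi = 2 := by decide
  rw [this]; exact Int.prime_two)
lemma prime_p1 : Prime p1 := prime_of_nrm (by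
  have : nrm p1 = (17 : ℕ) := by decide
  rw [this, ← Nat.prime_iff_prime_int]; norm_num)

/-- divisibility by `pi` -/
lemma pi_dvd (x : O) : pi ∣ x ↔ Even (x.a + x.b + x.c + x.d) := by
  constructor
  · rintro ⟨y, rfl⟩
    simp [pi]
    rw [Int.even_iff]; omega
  · rintro ⟨k, hk⟩
    have h2 : (2 : O) = pi * (pi ^ 3 * (-I * E ^ 2)) := by decide
    have hb : (I : O) - 1 = pi * (pi * (-E) * I) := by decide
    have hE : E - 1 = pi * 1 := by decide
    refine ⟨(pi ^ 3 * (-I * E ^ 2)) * (k : O) + (pi * (-E) * I) * (x.b : O) + (x.c : O) +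
      (I * pi * 0 + I + (pi * (-E) * I)) * (x.d : O), ?_⟩
    have hx : x = (x.a : O) + x.b * I + (x.c + x.d * I) * E := by
      ext <;> simp [I, E]
    have hk' : (x.a : O) + x.b + x.c + x.d = 2 * k := by
      have := congrArg (Int.cast : ℤ → O) hk
      push_cast at this
      rw [this]; ring
    linear_combination hx + hk' + (k : O) * h2 + (x.b + x.d) * hb + (x.c + x.d * I) * hE

end Q4

namespace Q4

def Z9 (x : Q4 (ZMod 8)) : Prop := 2 * x.b = 0 ∧ 2 * x.c = 0 ∧ 2 * x.d = 0 ∧ x.a - x.b + x.c + x.d = 0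
instance (x : Q4 (ZMod 8)) : Decidable (Z9 x) := by unfold Z9; infer_instance

/-- integer criterion -/
def V9 (x : O) : Prop := (4 : ℤ) ∣ x.b ∧ (4 : ℤ) ∣ x.c ∧ (4 : ℤ) ∣ x.d ∧ (8 : ℤ) ∣ x.a - x.b + x.c + x.d
instance (x : O) : Decidable (V9 x) := by unfold V9; infer_instance

lemma pi9 (x : O) : pi ^ 9 ∣ x ↔ V9 x := by
  constructor
  · rintro ⟨y, rfl⟩
    have : pi ^ 9 = ⟨-12, -40, -4, 24⟩ := by decide
    rw [this]
    unfold V9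
    simp
    omega
  · rintro ⟨⟨b, hb⟩, ⟨c, hc⟩, ⟨d, hd⟩, ⟨k, hk⟩⟩
    have h8 : (8 : O) = pi ^ 9 * (pi ^ 3 * (-I * E ^ 2) ^ 3) := by decide
    have h4 : (4 : O) = pi ^ 8 * (-I * E ^ 2) ^ 2 := by decide
    have h1 : 1 + I = pi * (-E * pi) := by decide
    have h3 : I * E - 1 = pi * (I - I * E * pi) := by decide
    have hx : x = (x.a : O) + x.b * I + (x.c + x.d * I) * E := by
      ext <;> simp [I, E]
    have ha : x.a = 8 * k + 4 * b - 4 * c - 4 * d := by omega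
    rw [ha, hb, hc, hd] at hx
    push_cast at hx
    refine ⟨pi ^ 3 * (-I * E ^ 2) ^ 3 * k + (-I * E ^ 2) ^ 2 * (b * (-E * pi) + c
      + d * (I - I * E * pi)), ?_⟩
    rw [hx]
    linear_combination (k : O) * h8 + (b * (1 + I) + c * (E - 1) + d * (I * E - 1)) * h4
      + pi ^ 8 * (-I * E ^ 2) ^ 2 * (b * h1 + d * h3 - c * pi_eq)

lemma red_mul (n : ℕ) (x y : O) : red n (x * y) = red n x * red n y := by
  ext <;> simp [red]
lemma red_sub (n : ℕ) (x y : O) : red n (x - y) = red n x - red n y := by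
  ext <;> simp [red]
lemma red_add (n : ℕ) (x y : O) : red n (x + y) = red n x + red n y := by
  ext <;> simp [red]

lemma Z9_red (x : O) : Z9 (red 8 x) ↔ V9 x := by
  have e : ∀ z : ℤ, (2 * (z : ZMod 8) = 0) ↔ 4 ∣ z := by
    intro z
    have := ZMod.intCast_zmod_eq_zero_iff_dvd (2 * z) 8
    push_cast at this
    rw [this]; omega
  unfold Z9 V9 red
  simp only [e]
  have := ZMod.intCast_zmod_eq_zero_iff_dvd (x.a - x.b + x.c + x.d) 8
  push_cast at this
  rw [this]

def sqL : List O := [⟨1, 0, 0, 0⟩, ⟨3, 2, 0, 0⟩, ⟨5, 0, 1, 3⟩, ⟨1, 2, 3, 1⟩, ⟨3, 2, 1, 3⟩,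
  ⟨7, 0, 0, 0⟩, ⟨1, 2, 0, 0⟩, ⟨3, 0, 3, 1⟩]

lemma sq_fin : ∀ a b c d : ZMod 8, 4 * (a + b + c + d) ≠ 0 →
    ∃ s ∈ sqL.map (red 8), Z9 (⟨a, b, c, d⟩ * ⟨a, b, c, d⟩ - s) := by
  decide +kernel

/-- the residue ring modulo `pi ^ 9` -/
abbrev R9 := O ⧸ (Ideal.span {pi ^ 9} : Ideal O)
def f9 : O →+* R9 := Ideal.Quotient.mk _
lemma f9_eq' (x y : O) : f9 x = f9 y ↔ pi ^ 9 ∣ x - y := by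
  rw [f9, Ideal.Quotient.eq, Ideal.mem_span_singleton]
lemma f9_eq (x y : O) : f9 x = f9 y ↔ V9 (x - y) := by
  rw [f9_eq', pi9]

lemma sq9 {x : O} (h : ¬ pi ∣ x) : ∃ s ∈ sqL, f9 x ^ 2 = f9 s := by
  have h1 : 4 * ((x.a : ZMod 8) + x.b + x.c + x.d) ≠ 0 := by
    rw [pi_dvd] at h
    intro h2
    apply h
    have := ZMod.intCast_zmod_eq_zero_iff_dvd (4 * (x.a + x.b + x.c + x.d)) 8
    push_cast at this
    rw [this] at h2
    rw [Int.even_iff]; omega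
  obtain ⟨s, hs, h2⟩ := sq_fin _ _ _ _ h1
  rw [List.mem_map] at hs
  obtain ⟨s, hs, rfl⟩ := hs
  refine ⟨s, hs, ?_⟩
  rw [← map_pow, f9_eq, ← Z9_red, red_sub, pow_two, red_mul]
  exact h2

def uL : List O := [1, I, E, I * E]

lemma ind_fin : ∀ v ∈ uL, ∀ T ∈ [[], [p1], [p2], [q], [p1, p2], [p1, q], [p2, q], [p1, p2, q]],
    ∀ s ∈ sqL, ∀ s' ∈ sqL, V9 (v * T.prod * s - s') →
    (v = 1 ∧ T = []) ∨ (v = I ∧ T = [p2, q]) := by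
  decide +kernel

lemma ind9 {v : O} (hv : v ∈ uL) {T : List O} (hT : T.Sublist [p1, p2, q]) {x y : O}
    (hx : ¬ pi ∣ x) (hy : ¬ pi ∣ y) (h : f9 (v * T.prod * y ^ 2) = f9 (x ^ 2)) :
    (v = 1 ∧ T = []) ∨ (v = I ∧ T = [p2, q]) := by
  obtain ⟨s, hs, h1⟩ := sq9 hy
  obtain ⟨s', hs', h2⟩ := sq9 hx
  refine ind_fin v hv T ?_ s hs s' hs' ?_
  · rw [← List.mem_sublists] at hT
    revert hT
    simp [List.sublists]
    tauto
  · rw [← f9_eq, map_mul, ← h1, ← map_pow, ← map_mul, h, map_pow, h2]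

end Q4

namespace Q4

lemma dvd_gauss (w x : O) {m : ℤ} (k n : ℤ) (hw : w = ⟨n, k, 0, 0⟩) (hk : IsCoprime k m)
    (hm : m = n ^ 2 + k ^ 2) : w ∣ x ↔ (m ∣ k * x.a - n * x.b ∧ m ∣ k * x.c - n * x.d) := by
  subst hw
  constructor
  · rintro ⟨y, rfl⟩
    simp
    constructor
    · exact ⟨-y.b, by rw [hm]; ring⟩
    · exact ⟨-y.d, by rw [hm]; ring⟩
  · rintro ⟨⟨s, hs⟩, ⟨t, ht⟩⟩
    obtain ⟨f, g, hfg⟩ := hk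
    have h1 : ∀ a b s : ℤ, k * a - n * b = m * s → m ∣ n * a + k * b := by
      intro a b s h
      have : k * (n * a + k * b) = m * (b + n * s) := by
        linear_combination n * h - b * hm
      have h2 : n * a + k * b = m * (f * (b + n * s) + g * (n * a + k * b)) := by
        linear_combination f * this - (n * a + k * b) * hfg
      exact ⟨_, h2⟩
    obtain ⟨s', hs'⟩ := h1 _ _ _ hs
    obtain ⟨t', ht'⟩ := h1 _ _ _ ht
    have hm0 : m ≠ 0 := by
      rintro rfl
      have hk0 : k = 0 := by nlinarith [sq_nonneg n, sq_nonneg k]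
      simp [hk0] at hfg
    refine ⟨⟨s', -s, t', -t⟩, ?_⟩
    ext <;> simp <;> apply mul_left_cancel₀ hm0
    · linear_combination n * hs' + k * hs + x.a * hm
    · linear_combination k * hs' - n * hs + x.b * hm
    · linear_combination n * ht' + k * ht + x.c * hm
    · linear_combination k * ht' - n * ht + x.d * hm

lemma p2_fin : ∀ a b c d : ZMod 17,
    P (⟨a, b, c, d⟩ : Q4 (ZMod 17)) - 4 * Q (⟨a, b, c, d⟩ : Q4 (ZMod 17)) = 0 →
    a - 4 * b = 0 ∧ c - 4 * d = 0 := by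
  have h : ∀ A C : ZMod 17, A ^ 2 + 5 * A * C - C ^ 2 = 0 → A = 0 ∧ C = 0 := by decide +kernel
  intro a b c d h1
  apply h
  rw [← h1]
  unfold P Q
  have h17 : (17 : ZMod 17) = 0 := by decide
  linear_combination (b ^ 2 - b * c - a * d + 5 * b * d - d ^ 2) * h17

lemma q_fin : ∀ a b c d : ZMod 5,
    P (⟨a, b, c, d⟩ : Q4 (ZMod 5)) + 3 * Q (⟨a, b, c, d⟩ : Q4 (ZMod 5)) = 0 →
    a + 3 * b = 0 ∧ c + 3 * d = 0 := by
  unfold P Q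
  decide +kernel

lemma P_red (n : ℕ) (x : O) : P (red n x) = ((P x : ℤ) : ZMod n) := by simp [P, red]
lemma Q_red (n : ℕ) (x : O) : Q (red n x) = ((Q x : ℤ) : ZMod n) := by simp [Q, red]

lemma p2_dvd (x : O) : p2 ∣ x ↔ ((x.a : ZMod 17) - 4 * x.b = 0 ∧ (x.c : ZMod 17) - 4 * x.d = 0) := by
  rw [dvd_gauss p2 x (m := 17) 1 4 rfl (by norm_num) (by norm_num)]
  have h1 := ZMod.intCast_zmod_eq_zero_iff_dvd (1 * x.a - 4 * x.b) 17
  have h2 := ZMod.intCast_zmod_eq_zero_iff_dvd (1 * x.c - 4 * x.d) 17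
  push_cast at h1 h2
  rw [one_mul] at h1 h2
  rw [h1, h2]

lemma q_dvd (x : O) : q ∣ x ↔ ((x.a : ZMod 5) + 3 * x.b = 0 ∧ (x.c : ZMod 5) + 3 * x.d = 0) := by
  rw [dvd_gauss q x (m := 5) (-2) 1 rfl (by norm_num) (by norm_num)]
  have h1 := ZMod.intCast_zmod_eq_zero_iff_dvd (x.a + 3 * x.b) 5
  have h2 := ZMod.intCast_zmod_eq_zero_iff_dvd (x.c + 3 * x.d) 5
  push_cast at h1 h2
  rw [h1, h2]
  constructor <;> rintro ⟨_, _⟩ <;> constructor <;> omega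

lemma p2_dvd_iff (x : O) : p2 ∣ x ↔ ((P x : ℤ) : ZMod 17) - 4 * ((Q x : ℤ) : ZMod 17) = 0 := by
  constructor
  · rintro ⟨y, rfl⟩
    rw [P_mul, Q_mul]
    have h1 : P p2 = 15 := by decide
    have h2 : Q p2 = 8 := by decide
    rw [h1, h2]
    push_cast
    have h17 : (17 : ZMod 17) = 0 := by decide
    linear_combination (-((P y : ℤ) : ZMod 17) - 4 * ((Q y : ℤ) : ZMod 17)) * h17
  · intro h
    rw [← P_red, ← Q_red] at h
    rw [p2_dvd]
    exact p2_fin _ _ _ _ h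

lemma q_dvd_iff (x : O) : q ∣ x ↔ ((P x : ℤ) : ZMod 5) + 3 * ((Q x : ℤ) : ZMod 5) = 0 := by
  constructor
  · rintro ⟨y, rfl⟩
    rw [P_mul, Q_mul]
    have h1 : P q = -3 := by decide
    have h2 : Q q = -4 := by decide
    rw [h1, h2]
    push_cast
    have h17 : (5 : ZMod 5) = 0 := by decide
    linear_combination (-3 * ((P y : ℤ) : ZMod 5) - 1 * ((Q y : ℤ) : ZMod 5)) * h17
  · intro h
    rw [← P_red, ← Q_red] at h
    rw [q_dvd]
    exact q_fin _ _ _ _ h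

instance : Fact (Nat.Prime 17) := ⟨by norm_num⟩
instance : Fact (Nat.Prime 5) := ⟨by norm_num⟩

lemma prime_p2 : Prime p2 := by
  refine ⟨by decide, fun h => ?_, ?_⟩
  · have := nrm_of_isUnit h
    revert this; decide
  · intro a b hab
    rw [p2_dvd_iff] at *
    rw [p2_dvd_iff]
    rw [P_mul, Q_mul] at hab
    push_cast at hab
    rw [← mul_eq_zero]
    have h17 : (17 : ZMod 17) = 0 := by decide
    linear_combination hab + (((Q a : ℤ) : ZMod 17) * ((Q b : ℤ) : ZMod 17)) * h17

lemma prime_q : Prime q := by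
  refine ⟨by decide, fun h => ?_, ?_⟩
  · have := nrm_of_isUnit h
    revert this; decide
  · intro a b hab
    rw [q_dvd_iff] at *
    rw [q_dvd_iff]
    rw [P_mul, Q_mul] at hab
    push_cast at hab
    rw [← mul_eq_zero]
    have h17 : (5 : ZMod 5) = 0 := by decide
    linear_combination hab + (2 * ((Q a : ℤ) : ZMod 5) * ((Q b : ℤ) : ZMod 5)) * h17

/-! valuations and square classes -/

lemma strip {p : O} (hp : Prime p) {x : O} (hx : x ≠ 0) : ∃ k x', x = p ^ k * x' ∧ ¬ p ∣ x' := by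
  obtain ⟨n, a, h1, h2⟩ := WfDvdMonoid.max_power_factor hx hp.irreducible
  exact ⟨n, a, h2, h1⟩

lemma strip_le {p : O} (hp : Prime p) {k j : ℕ} {x y : O} (h : p ^ k * x = p ^ j * y)
    (hx : ¬ p ∣ x) : j ≤ k := by
  by_contra hc
  push Not at hc
  obtain ⟨m, rfl⟩ := Nat.exists_eq_add_of_lt hc
  apply hx
  have h2 : p ^ k * x = p ^ k * (p * (p ^ m * y)) := by rw [h]; ring
  exact ⟨_, mul_left_cancel₀ (pow_ne_zero _ hp.ne_zero) h2⟩

lemma strip_unique {p : O} (hp : Prime p) {k j : ℕ} {x y : O} (h : p ^ k * x = p ^ j * y)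
    (hx : ¬ p ∣ x) (hy : ¬ p ∣ y) : k = j ∧ x = y := by
  have h1 := strip_le hp h hx
  have h2 := strip_le hp h.symm hy
  have h3 : k = j := le_antisymm h2 h1
  subst h3
  exact ⟨rfl, mul_left_cancel₀ (pow_ne_zero _ hp.ne_zero) h⟩

lemma SC0 {x y z : O} (hx : x ≠ 0) (h : x * y = z ^ 2)
    (hc : ∀ p, Prime p → p ∣ x → p ∣ y → False) : ∃ (u : Oˣ) (d : O), x = u * d ^ 2 := by
  have hco : IsCoprime x y := by
    apply isCoprime_of_prime_dvd
    · rintro ⟨h1, h2⟩; exact hx h1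
    · intro p hp h1 h2; exact hc p hp h1 h2
  obtain ⟨d, u, hd⟩ := exists_associated_pow_of_mul_eq_pow' hco h
  exact ⟨u, d, by rw [mul_comm]; exact hd.symm⟩

theorem SC (S : List O) : ∀ (x y z : O), (∀ s ∈ S, Prime s) → x ≠ 0 → y ≠ 0 → x * y = z ^ 2 →
    (∀ p, Prime p → p ∣ x → p ∣ y → ∃ s ∈ S, p ∣ s) →
    ∃ T : List O, T.Sublist S ∧ ∃ (u : Oˣ) (d : O), x = u * T.prod * d ^ 2 := by
  induction S with
  | nil =>
    intro x y z _ hx hy h hc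
    obtain ⟨u, d, h⟩ := SC0 hx h (fun p hp h1 h2 => by simpa using hc p hp h1 h2)
    exact ⟨[], by simp, u, d, by simpa using h⟩
  | cons s S ih =>
    intro x y z hS hx hy h hc
    have hs : Prime s := hS s (by simp)
    have hz : z ≠ 0 := by
      rintro rfl
      rw [zero_pow two_ne_zero] at h
      rcases mul_eq_zero.1 h with h | h
      · exact hx h
      · exact hy h
    obtain ⟨k, x', rfl, hx'⟩ := strip hs hx
    obtain ⟨j, y', rfl, hy'⟩ := strip hs hy
    obtain ⟨l, z', rfl, hz'⟩ := strip hs hz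
    have e : s ^ (k + j) * (x' * y') = s ^ (l * 2) * z' ^ 2 := by
      rw [pow_mul]; linear_combination h
    obtain ⟨e1, e2⟩ := strip_unique hs e (fun h => (hs.dvd_or_dvd h).elim hx' hy')
      (fun h => hz' (hs.dvd_of_dvd_pow h))
    obtain ⟨T, hT, u, d, hd⟩ := ih x' y' z' (fun t ht => hS t (by simp [ht]))
      (by rintro rfl; simp at hx') (by rintro rfl; simp at hy') e2 (by
        intro p hp h1 h2
        obtain ⟨t, ht, hpt⟩ := hc p hp (h1.mul_left _) (h2.mul_left _)
        rw [List.mem_cons] at ht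
        rcases ht with rfl | ht
        · exfalso
          exact hx' (((hp.associated_of_dvd hs hpt).symm.dvd).trans h1)
        · exact ⟨t, ht, hpt⟩)
    rcases Nat.even_or_odd' k with ⟨m, rfl | rfl⟩
    · exact ⟨T, hT.cons _, u, s ^ m * d, by rw [hd]; ring⟩
    · exact ⟨s :: T, hT.cons_cons _, u, s ^ m * d, by rw [hd, List.prod_cons]; ring⟩

end Q4

namespace Q4

def wL : List O := [1, I, pi, I * pi, 1 + I, I * (1 + I), tau, I * tau, pi * tau, I * pi * tau, (1 + I) * tau, I * (1 + I) * tau]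

lemma g0_fin : ∀ x ∈ Finset.Icc (-4 : ℤ) 4, ∀ y ∈ Finset.Icc (-4 : ℤ) 4,
    (x ^ 2 + y ^ 2 ≠ 0) → (x ^ 2 + y ^ 2 ∣ 4 * x - 2 * y) → (x ^ 2 + y ^ 2 ∣ -2 * x - 4 * y) →
    ∃ v ∈ uL, ∃ w ∈ wL, (⟨x, y, 0, 0⟩ : O) = v * (w * w) := by
  decide +kernel

/-- the embedding of the Gaussian integers -/
def jG : GaussianInt →+* O where
  toFun z := ⟨z.re, z.im, 0, 0⟩
  map_one' := by ext <;> simp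
  map_zero' := by ext <;> simp
  map_add' x y := by ext <;> simp
  map_mul' x y := by ext <;> simp; ring

lemma jG_apply (z : GaussianInt) : jG z = ⟨z.re, z.im, 0, 0⟩ := rfl

lemma conj_jG (z : GaussianInt) : conj (jG z) = jG z := by
  ext <;> simp [conj, jG_apply]

lemma conj_add (x y : O) : conj (x + y) = conj x + conj y := by
  ext <;> simp [conj] <;> ring

lemma conj_E : conj E = (1 - I) - E := by decide

lemma unit_norm_one {u : O} (h : u * conj u = 1) : ∃ v ∈ uL, ∃ w : O, u = v * w ^ 2 := by
  by_cases hu : u = -1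
  · exact ⟨1, by decide, I, by rw [hu]; decide⟩
  -- z = 1 + u = A + B E
  obtain ⟨A, hA⟩ : ∃ A : GaussianInt, A = ⟨1 + u.a, u.b⟩ := ⟨_, rfl⟩
  obtain ⟨B, hB⟩ : ∃ B : GaussianInt, B = ⟨u.c, u.d⟩ := ⟨_, rfl⟩
  have hz : 1 + u = jG A + jG B * E := by
    rw [hA, hB]; ext <;> simp [jG_apply, E]
  have hAB : ¬ (A = 0 ∧ B = 0) := by
    rintro ⟨rfl, rfl⟩
    apply hu
    simp at hz
    linear_combination hz
  have hg : EuclideanDomain.gcd A B ≠ 0 := by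
    intro h0
    exact hAB (EuclideanDomain.gcd_eq_zero_iff.1 h0)
  obtain ⟨A0, hA0⟩ := EuclideanDomain.gcd_dvd_left A B
  obtain ⟨B0, hB0⟩ := EuclideanDomain.gcd_dvd_right A B
  have hbez := EuclideanDomain.gcd_eq_gcd_ab A B
  generalize EuclideanDomain.gcd A B = g at *
  generalize EuclideanDomain.gcdA A B = s at *
  generalize EuclideanDomain.gcdB A B = t at *
  have hco : IsCoprime A0 B0 := by
    refine ⟨s, t, mul_left_cancel₀ hg ?_⟩
    rw [hA0, hB0] at hbez
    linear_combination -hbez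
  obtain ⟨G, hG⟩ : ∃ G : GaussianInt, G = A0 ^ 2 + ⟨1, -1⟩ * A0 * B0 - B0 ^ 2 := ⟨_, rfl⟩
  have hGB : IsCoprime G (B0 ^ 2) := by
    apply IsCoprime.pow_right
    have : G = A0 ^ 2 + (⟨1, -1⟩ * A0 - B0) * B0 := by rw [hG]; ring
    rw [this, IsCoprime.add_mul_right_left_iff]
    exact hco.pow_left
  obtain ⟨f, l, hfl⟩ := hGB
  have hfl' : jG f * jG G + jG l * jG B0 ^ 2 = 1 := by
    rw [← map_mul, ← map_pow, ← map_mul, ← map_add, hfl, map_one]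
  obtain ⟨z0, hz0⟩ : ∃ z0 : O, z0 = jG A0 + jG B0 * E := ⟨_, rfl⟩
  obtain ⟨y0, hy0⟩ : ∃ y0 : O, y0 = conj z0 := ⟨_, rfl⟩
  have hy0' : y0 = jG A0 + jG B0 * ((1 - I) - E) := by
    rw [hy0, hz0, conj_add, conj_mul, conj_jG, conj_jG, conj_E]
  have hgz : 1 + u = jG g * z0 := by
    rw [hz, hA0, hB0, hz0, map_mul, map_mul]; ring
  have hgy : 1 + conj u = jG g * y0 := by
    have := congrArg conj hgz
    rw [conj_add, conj_mul, conj_jG] at this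
    rw [hy0, ← this]; congr 1
  have hjg : jG g ≠ 0 := by
    intro h0
    apply hg
    have h1 := congrArg Q4.a h0
    have h2 := congrArg Q4.b h0
    simp [jG_apply] at h1 h2
    exact Zsqrtd.ext h1 h2
  have huy : u * y0 = z0 := by
    apply mul_left_cancel₀ hjg
    linear_combination u * (-hgy) + hgz + h
  have hGzy : jG G = z0 * y0 := by
    rw [hG, hz0, hy0']
    have : jG ⟨1, -1⟩ = 1 - I := by decide
    rw [map_sub, map_add, map_mul, map_mul, map_pow, map_pow, this]
    linear_combination (jG B0 ^ 2) * E_sq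
  have hGy : jG G = u * y0 ^ 2 := by rw [hGzy, ← huy]; ring
  -- y0 ∣ B0 (1 - I) tau
  have hy0z : (u - 1) * y0 = jG B0 * ((1 - I) * tau) := by
    have e : (1 - I) * tau = 2 * E - (1 - I) := by decide
    rw [e]
    linear_combination huy + hz0 - hy0'
  have hdv : jG G ∣ ⟨4, -2, 0, 0⟩ := by
    have e : ((1 - I) * tau) ^ 2 = ⟨4, -2, 0, 0⟩ := by decide
    have e2 : ∃ k, jG B0 ^ 2 * ⟨4, -2, 0, 0⟩ = jG G * k := by
      refine ⟨conj u * (u - 1) ^ 2, ?_⟩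
      rw [← e, hGy]
      linear_combination (-((u - 1) * y0) - jG B0 * ((1 - I) * tau)) * hy0z - (u-1)^2 * y0 ^ 2 * h
    obtain ⟨k, hk⟩ := e2
    refine ⟨jG f * ⟨4, -2, 0, 0⟩ + jG l * k, ?_⟩
    linear_combination -(⟨4, -2, 0, 0⟩ : O) * hfl' + jG l * hk
  obtain ⟨k, hk⟩ := hdv
  have key : ∃ v ∈ uL, ∃ w : O, jG G = v * w ^ 2 := by
    have h1 := congrArg Q4.a hk
    have h2 := congrArg Q4.b hk
    simp [jG_apply] at h1 h2
    rw [jG_apply]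
    generalize G.re = x at *
    generalize G.im = y at *
    have h3 : (x ^ 2 + y ^ 2) * (k.a ^ 2 + k.b ^ 2) = 20 := by
      linear_combination -(x * k.a - y * k.b + 4) * h1 - (x * k.b + y * k.a - 2) * h2
    have h4 : x ^ 2 + y ^ 2 ≤ 20 := by
      have : 0 < k.a ^ 2 + k.b ^ 2 := by
        by_contra hc
        have : k.a ^ 2 + k.b ^ 2 = 0 := le_antisymm (not_lt.1 hc) (by positivity)
        rw [this] at h3; omega
      nlinarith [sq_nonneg x, sq_nonneg y]
    have hx : x ∈ Finset.Icc (-4 : ℤ) 4 := by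
      rw [Finset.mem_Icc]; constructor <;> nlinarith [sq_nonneg y]
    have hy : y ∈ Finset.Icc (-4 : ℤ) 4 := by
      rw [Finset.mem_Icc]; constructor <;> nlinarith [sq_nonneg x]
    obtain ⟨v, hv, w, _, hw⟩ := g0_fin x hx y hy (by rintro h0; rw [h0] at h3; omega)
      ⟨k.a, by linear_combination x * h1 + y * h2⟩ ⟨k.b, by linear_combination x * h2 - y * h1⟩
    exact ⟨v, hv, w, by rw [hw]; ring⟩
  obtain ⟨v, hv, w, hw⟩ := key
  have hvu : ∃ v', v' * v = 1 := by
    have : ∀ v ∈ uL, ∃ v' ∈ ([1, -I, pi * 0 + E - (1 - I), -I * (E - (1 - I))] : List O), v' * v = 1 := by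
      decide
    obtain ⟨v', _, h⟩ := this v hv
    exact ⟨v', h⟩
  obtain ⟨v', hv'⟩ := hvu
  have hyw : y0 ^ 2 ∣ w ^ 2 := ⟨v' * u, by
    linear_combination -w ^ 2 * hv' - v' * hw + v' * hGy⟩
  rw [IsIntegrallyClosed.pow_dvd_pow_iff two_ne_zero] at hyw
  obtain ⟨m, rfl⟩ := hyw
  have hy00 : y0 ≠ 0 := by
    rintro h0
    rw [h0, mul_zero] at huy
    rw [← huy, mul_zero] at hgz
    exact hu (by linear_combination hgz)
  refine ⟨v, hv, m, mul_right_cancel₀ (pow_ne_zero 2 hy00) ?_⟩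
  rw [← hGy, hw]; ring

lemma unit_fin : ∀ a b c d : ZMod 2, ¬ (P (⟨a, b, c, d⟩ : Q4 (ZMod 2)) = 0 ∧
    Q (⟨a, b, c, d⟩ : Q4 (ZMod 2)) = 1) := by
  unfold P Q; decide

theorem units_class {u : O} (hu : IsUnit u) : ∃ v ∈ uL, ∃ w : O, u = v * w ^ 2 := by
  have h := nrm_of_isUnit hu
  unfold nrm at h
  have hP : P u ∈ Finset.Icc (-1 : ℤ) 1 := by
    rw [Finset.mem_Icc]; constructor <;> nlinarith [sq_nonneg (Q u)]
  have hQ : Q u ∈ Finset.Icc (-1 : ℤ) 1 := by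
    rw [Finset.mem_Icc]; constructor <;> nlinarith [sq_nonneg (P u)]
  rw [Finset.mem_Icc] at hP hQ
  have hQ0 : Q u = 0 := by
    by_contra hQ0
    have hQ1 : Q u = 1 ∨ Q u = -1 := by omega
    have hP0 : P u = 0 := by
      rcases hQ1 with h1 | h1 <;> rw [h1] at h <;> nlinarith
    refine unit_fin _ _ _ _ ⟨(P_red 2 u).trans ?_, (Q_red 2 u).trans ?_⟩
    · rw [hP0]; rfl
    · rcases hQ1 with h1 | h1 <;> rw [h1] <;> decide
  have hP1 : P u = 1 ∨ P u = -1 := by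
    have : P u ≠ 0 := by rintro h0; rw [h0, hQ0] at h; omega
    omega
  rcases hP1 with h1 | h1
  · apply unit_norm_one
    rw [mul_conj, h1, hQ0]; rfl
  · have : ∃ v ∈ uL, ∃ w : O, u * E = v * w ^ 2 := by
      apply unit_norm_one
      rw [mul_conj, P_mul, Q_mul, h1, hQ0]
      decide
    obtain ⟨v, hv, w, hw⟩ := this
    have e : E * (E - (1 - I)) = 1 := by decide
    have hu2 : u = v * E * (w * (E - (1 - I))) ^ 2 := by
      linear_combination E * (E - (1 - I)) ^ 2 * hw - u * (1 + E * (E - (1 - I))) * e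
    have : ∀ v ∈ uL, ∃ v' ∈ uL, ∃ k ∈ ([1, E] : List O), v * E = v' * (k * k) := by decide
    obtain ⟨v', hv', k, _, hk⟩ := this v hv
    exact ⟨v', hv', k * (w * (E - (1 - I))), by rw [hu2, hk]; ring⟩

/-- square class lemma with explicit unit representatives -/
theorem SCu (S : List O) (x y z : O) (hS : ∀ s ∈ S, Prime s) (hx : x ≠ 0) (hy : y ≠ 0)
    (h : x * y = z ^ 2) (hc : ∀ p, Prime p → p ∣ x → p ∣ y → ∃ s ∈ S, p ∣ s) :
    ∃ T : List O, T.Sublist S ∧ ∃ v ∈ uL, ∃ d : O, x = v * T.prod * d ^ 2 := by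
  obtain ⟨T, hT, u, d, hd⟩ := SC S x y z hS hx hy h hc
  obtain ⟨v, hv, w, hw⟩ := units_class u.isUnit
  exact ⟨T, hT, v, hv, w * d, by rw [hd, hw]; ring⟩

end Q4

namespace Q4

/-- reduction modulo `p1` -/
def r1 : O →+* ZMod 17 where
  toFun x := x.a + 4 * x.b + 11 * x.c + 10 * x.d
  map_one' := by simp
  map_zero' := by simp
  map_add' x y := by simp; ring
  map_mul' x y := by
    simp
    have h17 : (17 : ZMod 17) = 0 := by decide
    generalize (x.a : ZMod 17) = a
    generalize (x.b : ZMod 17) = b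
    generalize (x.c : ZMod 17) = c
    generalize (x.d : ZMod 17) = d
    generalize (y.a : ZMod 17) = A
    generalize (y.b : ZMod 17) = B
    generalize (y.c : ZMod 17) = C
    generalize (y.d : ZMod 17) = F
    ring_nf
    linear_combination (-b*B - 3*b*F - 3*d*B - 2*b*C - 2*c*B - 7*c*C - 5*c*F - 5*d*C - 6*d*F) * h17

lemma r1_apply (x : O) : r1 x = x.a + 4 * x.b + 11 * x.c + 10 * x.d := rfl

lemma r1_zero (x : O) : r1 x = 0 ↔ p1 ∣ x := by
  constructor
  · intro h
    rw [r1_apply] at h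
    have h1 := ZMod.intCast_zmod_eq_zero_iff_dvd (x.a + 4 * x.b + 11 * x.c + 10 * x.d) 17
    push_cast at h1
    rw [h1] at h
    obtain ⟨k, hk⟩ := h
    have e : p1 * ⟨1, 4, 1, 4⟩ = 17 * ⟨0, 0, 0, 0⟩ + p1 * ⟨1, 4, 1, 4⟩ := by decide
    have hx : x = 17 * k + (I - 4) * (x.b : O) + (E - 11) * x.c + (I * E - 10) * x.d := by
      have : x.a = 17 * k - 4 * x.b - 11 * x.c - 10 * x.d := by linarith
      ext <;> simp [I, E, this]; ring
    have d1 : p1 ∣ (17 : O) := ⟨adj p1, by decide⟩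
    have d4 : ∀ y : O, (17 : O) ∣ y * adj p1 → p1 ∣ y := by
      rintro y ⟨z, hz⟩
      have e : p1 * adj p1 = 17 := by decide
      have h0 : adj p1 ≠ 0 := by decide
      refine ⟨z, mul_right_cancel₀ h0 ?_⟩
      rw [hz, ← e]; ring
    have d2 : p1 ∣ I - 4 := d4 _ (by
      have : (I - 4) * adj p1 = 17 * ⟨((I - 4) * adj p1).a / 17, ((I - 4) * adj p1).b / 17, ((I - 4) * adj p1).c / 17, ((I - 4) * adj p1).d / 17⟩ := by decide
      exact ⟨_, this⟩)
    have d3 : p1 ∣ E - 11 := d4 _ (by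
      have : (E - 11) * adj p1 = 17 * ⟨((E - 11) * adj p1).a / 17, ((E - 11) * adj p1).b / 17, ((E - 11) * adj p1).c / 17, ((E - 11) * adj p1).d / 17⟩ := by decide
      exact ⟨_, this⟩)
    have d5 : p1 ∣ I * E - 10 := d4 _ (by
      have : (I * E - 10) * adj p1 = 17 * ⟨((I * E - 10) * adj p1).a / 17, ((I * E - 10) * adj p1).b / 17, ((I * E - 10) * adj p1).c / 17, ((I * E - 10) * adj p1).d / 17⟩ := by decide
      exact ⟨_, this⟩)
    rw [hx]
    exact (((d1.mul_right _).add (d2.mul_right _)).add (d3.mul_right _)).add (d5.mul_right _)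
  · rintro ⟨y, rfl⟩
    rw [map_mul]
    have : r1 p1 = 0 := by decide
    rw [this, zero_mul]

lemma two_primes {p : O} (hp : Prime p) (h : p ∣ 2) : p ∣ pi := by
  have e : (2 : O) = pi ^ 4 * (-I * E ^ 2) := by decide
  have hu : IsUnit (-I * E ^ 2) := isUnit_of_nrm (by decide)
  rw [e, hu.dvd_mul_right] at h
  exact hp.dvd_of_dvd_pow h

lemma D_primes {p : O} (hp : Prime p) (h : p ∣ D) : ∃ s ∈ [pi, p1, p2], p ∣ s := by
  have e : D = (pi ^ 6 * p1 * p2) * (I * E ^ 3) := by decide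
  have hu : IsUnit (I * E ^ 3) := isUnit_of_nrm (by decide)
  rw [e, hu.dvd_mul_right] at h
  rcases hp.dvd_or_dvd h with h | h
  · rcases hp.dvd_or_dvd h with h | h
    · exact ⟨pi, by simp, hp.dvd_of_dvd_pow h⟩
    · exact ⟨p1, by simp, h⟩
  · exact ⟨p2, by simp, h⟩

lemma pi_parity {k : ℕ} {J J0 m d : O} (hJ : J = pi ^ (2 * k) * J0) (hJ0 : ¬ pi ∣ J0)
    (h : J = pi * m * d ^ 2) (hm : ¬ pi ∣ m) : False := by
  have hd : d ≠ 0 := by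
    rintro rfl
    rw [h, zero_pow two_ne_zero, mul_zero] at hJ
    rcases mul_eq_zero.1 hJ.symm with h | h
    · exact pow_ne_zero _ prime_pi.ne_zero h
    · exact hJ0 (h ▸ dvd_zero _)
  obtain ⟨j, d0, rfl, hd0⟩ := strip prime_pi hd
  have e : pi ^ (2 * j + 1) * (m * d0 ^ 2) = pi ^ (2 * k) * J0 := by
    rw [← hJ, h]; ring
  have := (strip_unique prime_pi e (fun h => (prime_pi.dvd_or_dvd h).elim hm
    (fun h => hd0 (prime_pi.dvd_of_dvd_pow h))) hJ0).1
  omega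

def dL : List O := [1, I, p2, I * p2]

lemma L1_fin1 : ∀ u b : ZMod 17, u * u + 3 * 12 * b * u + 4 * 144 * (b * b) = 0 → b = 0 := by
  decide +kernel
lemma L1_fin2 : ∀ e ∈ [E, I * E, E * p2, I * E * p2], ∀ a d : ZMod 17,
    (r1 e * (d * d) = 2 * (a * a) → d = 0) ∧ (r1 e * (4 * (2 * (a * a))) = d * d → a = 0) := by
  decide +kernel

/-- the key lemma `L1` -/
theorem L1 {A B J : O} (hcop : ∀ p, Prime p → p ∣ A → p ∣ B → False) (hJ0 : J ≠ 0) (hB : B ≠ 0)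
    (h : J * (2 * A ^ 2 - tau * D * B ^ 2 - J) = I * D ^ 2 * B ^ 4)
    {k : ℕ} {J1 : O} (hk : J = pi ^ (2 * k) * J1) (hJ1 : ¬ pi ∣ J1) :
    ∃ d ∈ dL, ∃ l : O, J = d * l ^ 2 := by
  obtain ⟨J', hJ'⟩ : ∃ J', J' = 2 * A ^ 2 - tau * D * B ^ 2 - J := ⟨_, rfl⟩
  rw [← hJ'] at h
  have hD0 : D ≠ 0 := by decide
  have hJ'0 : J' ≠ 0 := by
    rintro rfl
    rw [mul_zero] at h
    have : I * D ^ 2 * B ^ 4 ≠ 0 := mul_ne_zero (by decide) (pow_ne_zero _ hB)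
    exact this h.symm
  have hsq : J * (I * J') = (I * D * B ^ 2) ^ 2 := by linear_combination I * h
  have hIu : IsUnit I := isUnit_of_nrm (by decide)
  have hIJ : I * J' ≠ 0 := mul_ne_zero (by decide) hJ'0
  obtain ⟨T, hT, v, hv, d, hd⟩ := SCu [pi, p1, p2] J (I * J') (I * D * B ^ 2) (by
      simp [prime_pi, prime_p1, prime_p2]) hJ0 hIJ hsq (by
    intro p hp h1 h2
    rw [hIu.dvd_mul_left] at h2
    have h3 : p ∣ I * D ^ 2 * B ^ 4 := h ▸ h1.mul_right _
    rcases hp.dvd_or_dvd h3 with h3 | h3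
    · rcases hp.dvd_or_dvd h3 with h3 | h3
      · exact (hp.not_isUnit (isUnit_of_dvd_unit h3 hIu)).elim
      · exact D_primes hp (hp.dvd_of_dvd_pow h3)
    · have h4 := hp.dvd_of_dvd_pow h3
      have h5 : p ∣ 2 * A ^ 2 := by
        have : 2 * A ^ 2 = J + J' + tau * D * B * B := by rw [hJ']; ring
        rw [this]
        exact (h1.add h2).add (h4.mul_left _)
      rcases hp.dvd_or_dvd h5 with h5 | h5
      · exact ⟨pi, by simp, two_primes hp h5⟩
      · exact (hcop p hp (hp.dvd_of_dvd_pow h5) h4).elim)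
  have hp1D : r1 D = 0 := by decide
  have hJr : r1 J * r1 J' = 0 := by
    rw [← map_mul, h, map_mul, map_mul, map_pow, hp1D]; simp
  have hJs : r1 J + r1 J' = 2 * (r1 A * r1 A) := by
    rw [← map_add, hJ']
    have : J + (2 * A ^ 2 - tau * D * B ^ 2 - J) = 2 * (A * A) - D * (tau * B ^ 2) := by ring
    rw [this, map_sub, map_mul, map_mul, map_mul, hp1D, map_ofNat]; ring
  have h17 : ∀ x : ZMod 17, 2 * (x * x) = 0 → x = 0 := by decide
  obtain ⟨D1, hD1⟩ : ∃ D1 : O, D1 = 2 * (1 + I) * p2 := ⟨_, rfl⟩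
  have hDD : D = p1 * D1 := by rw [hD1]; decide
  have hD1r : r1 D1 = 12 := by rw [hD1]; decide
  -- both divisible by p1
  have hboth : r1 J = 0 → r1 J' = 0 → p1 ∣ A ∧ ¬ p1 ∣ B := by
    intro h1 h2
    rw [h1, h2, add_zero] at hJs
    have := (r1_zero A).1 (h17 _ hJs.symm)
    exact ⟨this, fun h => hcop p1 prime_p1 this h⟩
  -- a common factor
  have hz : ∀ e, J = e * d ^ 2 → ∃ z', e * (I * J') = z' ^ 2 := by
    intro e he
    have hd0 : d ≠ 0 := by rintro rfl; apply hJ0; rw [he]; ring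
    have : d ^ 2 ∣ (I * D * B ^ 2) ^ 2 := ⟨e * (I * J'), by rw [← hsq, he]; ring⟩
    rw [IsIntegrallyClosed.pow_dvd_pow_iff two_ne_zero] at this
    obtain ⟨z', hz'⟩ := this
    refine ⟨z', mul_left_cancel₀ (pow_ne_zero 2 hd0) ?_⟩
    rw [← mul_pow, ← hz', ← hsq, he]; ring
  have caseP1 : ∀ e, r1 e ≠ 0 → J = e * p1 * d ^ 2 → False := by
    intro e he hJe
    obtain ⟨z', hz'⟩ := hz _ hJe
    have h1 : p1 ∣ z' := prime_p1.dvd_of_dvd_pow (n := 2) ⟨e * (I * J'), by rw [← hz']; ring⟩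
    obtain ⟨z2, rfl⟩ := h1
    have h2 : e * (I * J') = p1 * z2 ^ 2 := mul_left_cancel₀ prime_p1.ne_zero (by
      linear_combination hz')
    have h3 : r1 J' = 0 := by
      have := congrArg r1 h2
      have e1 : r1 p1 = 0 := by decide
      have e2 : r1 I ≠ 0 := by decide
      rw [map_mul, map_mul, map_mul, e1, zero_mul] at this
      simpa [he, e2] using this
    have h4 : r1 J = 0 := by rw [r1_zero, hJe]; exact ⟨e * d ^ 2, by ring⟩
    obtain ⟨⟨A1, hA1⟩, hB1⟩ := hboth h4 h3
    obtain ⟨u1, hu1⟩ := (r1_zero J).1 h4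
    have h5 : u1 * (2 * p1 * A1 ^ 2 - tau * D1 * B ^ 2 - u1) = I * D1 ^ 2 * B ^ 4 := by
      apply mul_left_cancel₀ (pow_ne_zero 2 prime_p1.ne_zero)
      rw [hJ', hu1, hA1, hDD] at h
      linear_combination h
    have h6 := congrArg r1 h5
    have e1 : r1 p1 = 0 := by decide
    have e2 : r1 I = 4 := by decide
    have e3 : r1 tau = 3 := by decide
    simp only [map_mul, map_sub, map_pow, e1, e2, e3, hD1r] at h6
    have := L1_fin1 (r1 u1) (r1 B ^ 2) (by linear_combination -h6)
    exact hB1 ((r1_zero B).1 (pow_eq_zero_iff two_ne_zero |>.1 this))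
  have caseE : ∀ e ∈ [E, I * E, E * p2, I * E * p2], J = e * d ^ 2 → False := by
    intro e he hJe
    have he0 : r1 e ≠ 0 := by
      have : ∀ e ∈ [E, I * E, E * p2, I * E * p2], r1 e ≠ 0 := by decide
      exact this e he
    by_cases h1 : r1 J = 0
    · have hpd : r1 d = 0 := by
        rw [hJe, map_mul, map_pow] at h1
        simpa [he0] using h1
      by_cases h2 : r1 J' = 0
      · obtain ⟨_, hB1⟩ := hboth h1 h2
        obtain ⟨d', rfl⟩ := (r1_zero d).1 hpd
        obtain ⟨j', rfl⟩ := (r1_zero J').1 h2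
        rw [hJe, hDD] at h
        have h3 : e * d' ^ 2 * (p1 * j') = I * D1 ^ 2 * B ^ 4 := by
          apply mul_left_cancel₀ (pow_ne_zero 2 prime_p1.ne_zero)
          linear_combination h
        have h4 := congrArg r1 h3
        have e1 : r1 p1 = 0 := by decide
        have e2 : r1 I ≠ 0 := by decide
        have e3 : (12 : ZMod 17) ≠ 0 := by decide
        simp only [map_mul, map_pow, e1, hD1r, zero_mul, mul_zero] at h4
        have h5 : r1 B = 0 := by simpa [e2, e3] using h4.symm
        exact hB1 ((r1_zero B).1 h5)
      · obtain ⟨z', hz'⟩ := hz _ hJe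
        have h3 := congrArg r1 hz'
        rw [h1, zero_add] at hJs
        have e2 : r1 I = 4 := by decide
        rw [map_mul, map_mul, hJs, e2, map_pow, pow_two] at h3
        have := (L1_fin2 e he _ _).2 h3
        rw [this] at hJs
        exact h2 (by rw [hJs]; ring)
    · have h2 : r1 J' = 0 := (mul_eq_zero.1 hJr).resolve_left h1
      rw [h2, add_zero] at hJs
      have h3 : r1 e * (r1 d * r1 d) = 2 * (r1 A * r1 A) := by
        rw [← hJs, hJe, map_mul, map_pow, pow_two]
      have := (L1_fin2 e he _ _).1 h3
      apply h1
      rw [hJe, map_mul, map_pow, this]; ring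
  have hT' : T ∈ ([pi, p1, p2] : List O).sublists := List.mem_sublists.2 hT
  have hpiv : ∀ v ∈ uL, ∀ m ∈ [1, p1, p2, p1 * p2], ¬ Even ((v * m).a + (v * m).b + (v * m).c + (v * m).d) := by
    decide
  have hr1v : ∀ v ∈ uL, r1 v ≠ 0 ∧ r1 (v * p2) ≠ 0 := by decide
  have hpi : ∀ m ∈ [1, p1, p2, p1 * p2], J = v * (pi * m) * d ^ 2 → False := by
    intro m hm hJe
    refine pi_parity hk hJ1 (m := v * m) (d := d) (by rw [hJe]; ring) ?_
    rw [pi_dvd]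
    exact hpiv v hv m hm
  have hsub : ([pi, p1, p2] : List O).sublists = [[], [pi], [p1], [pi, p1], [p2], [pi, p2], [p1, p2], [pi, p1, p2]] := by
    decide
  rw [hsub] at hT'
  have fin1 : J = v * d ^ 2 → ∃ d ∈ dL, ∃ l : O, J = d * l ^ 2 := by
    intro hJe
    simp only [uL, List.mem_cons, List.not_mem_nil, or_false] at hv
    rcases hv with rfl | rfl | rfl | rfl
    · exact ⟨1, by decide, d, hJe⟩
    · exact ⟨I, by decide, d, hJe⟩
    · exact (caseE E (by decide) hJe).elim
    · exact (caseE (I * E) (by decide) hJe).elim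
  have fin2 : J = v * p2 * d ^ 2 → ∃ d ∈ dL, ∃ l : O, J = d * l ^ 2 := by
    intro hJe
    simp only [uL, List.mem_cons, List.not_mem_nil, or_false] at hv
    rcases hv with rfl | rfl | rfl | rfl
    · exact ⟨p2, by decide, d, by rw [hJe]; ring⟩
    · exact ⟨I * p2, by decide, d, hJe⟩
    · exact (caseE (E * p2) (by decide) hJe).elim
    · exact (caseE (I * E * p2) (by decide) hJe).elim
  simp only [List.mem_cons, List.not_mem_nil, or_false] at hT'
  rcases hT' with rfl | rfl | rfl | rfl | rfl | rfl | rfl | rfl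
  · exact fin1 (by rw [hd]; simp)
  · exact (hpi 1 (by simp) (by rw [hd]; simp)).elim
  · exact (caseP1 v (hr1v v hv).1 (by rw [hd]; simp)).elim
  · exact (hpi p1 (by simp) (by rw [hd]; simp)).elim
  · exact fin2 (by rw [hd]; simp)
  · exact (hpi p2 (by simp) (by rw [hd]; simp)).elim
  · exact (caseP1 (v * p2) (hr1v v hv).2 (by rw [hd, List.prod_cons, List.prod_cons, List.prod_nil]; ring)).elim
  · exact (hpi (p1 * p2) (by simp) (by rw [hd]; simp)).elim

end Q4

namespace Q4

/-- reduction modulo `pi` -/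
def r2 : O →+* ZMod 2 where
  toFun x := x.a + x.b + x.c + x.d
  map_one' := by simp
  map_zero' := by simp
  map_add' x y := by simp; ring
  map_mul' x y := by
    simp
    have h2 : (2 : ZMod 2) = 0 := by decide
    generalize (x.a : ZMod 2) = a
    generalize (x.b : ZMod 2) = b
    generalize (x.c : ZMod 2) = c
    generalize (x.d : ZMod 2) = d
    generalize (y.a : ZMod 2) = A
    generalize (y.b : ZMod 2) = B
    generalize (y.c : ZMod 2) = C
    generalize (y.d : ZMod 2) = F
    revert a b c d A B C F
    decide +kernel

lemma r2_zero (x : O) : r2 x = 0 ↔ pi ∣ x := by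
  rw [pi_dvd]
  have h1 := ZMod.intCast_zmod_eq_zero_iff_dvd (x.a + x.b + x.c + x.d) 2
  push_cast at h1
  rw [even_iff_two_dvd, ← h1]; rfl

lemma nd (x : O) : ¬ pi ∣ x ↔ r2 x = 1 := by
  rw [← r2_zero]
  generalize r2 x = y
  revert y; decide

@[simp] lemma r2_pi : r2 pi = 0 := by decide
@[simp] lemma r2_I : r2 I = 1 := by decide
@[simp] lemma r2_E : r2 E = 1 := by decide
@[simp] lemma r2_tau : r2 tau = 1 := by decide
@[simp] lemma r2_q : r2 q = 1 := by decide
@[simp] lemma r2_p1 : r2 p1 = 1 := by decide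
@[simp] lemma r2_p2 : r2 p2 = 1 := by decide
@[simp] lemma r2_t0 : r2 t0 = 0 := by decide
@[simp] lemma r2_D : r2 D = 0 := by decide
@[simp] lemma r2_two : r2 2 = 0 := by decide

lemma nd_mul {x y : O} (hx : ¬ pi ∣ x) (hy : ¬ pi ∣ y) : ¬ pi ∣ x * y := by
  rw [nd] at *; simp [hx, hy]
lemma nd_pow {x : O} (hx : ¬ pi ∣ x) (n : ℕ) : ¬ pi ∣ x ^ n := by
  rw [nd] at *; simp [hx]
lemma nd_ne {x : O} (hx : ¬ pi ∣ x) : x ≠ 0 := by rintro rfl; exact hx (dvd_zero _)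
lemma pp (k : ℕ) : pi ^ k ≠ 0 := pow_ne_zero _ prime_pi.ne_zero

lemma VAL {f g u t : O} {S s : ℕ} (h1 : f * g = pi ^ S * u) (hu : ¬ pi ∣ u)
    (h2 : f + g = pi ^ s * t) (ht : ¬ pi ∣ t) (hs : 2 * s < S) :
    (∃ f0 g0, f = pi ^ (S - s) * f0 ∧ g = pi ^ s * g0 ∧ ¬ pi ∣ f0 ∧ ¬ pi ∣ g0) ∨
    (∃ f0 g0, g = pi ^ (S - s) * f0 ∧ f = pi ^ s * g0 ∧ ¬ pi ∣ f0 ∧ ¬ pi ∣ g0) := by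
  have h0 : f * g ≠ 0 := by rw [h1]; exact mul_ne_zero (pp _) (nd_ne hu)
  obtain ⟨a, f0, rfl, hf0⟩ := strip prime_pi (left_ne_zero_of_mul h0)
  obtain ⟨b, g0, rfl, hg0⟩ := strip prime_pi (right_ne_zero_of_mul h0)
  have hab : a + b = S := by
    have e : pi ^ (a + b) * (f0 * g0) = pi ^ S * u := by rw [← h1]; ring
    exact (strip_unique prime_pi e (nd_mul hf0 hg0) hu).1
  have key : ∀ (a b : ℕ) (f0 g0 : O), ¬ pi ∣ f0 → a < b → pi ^ a * f0 + pi ^ b * g0 = pi ^ s * t → a = s := by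
    intro a b f0 g0 hf hlt h
    obtain ⟨c, rfl⟩ := Nat.exists_eq_add_of_lt hlt
    have e : pi ^ a * (f0 + pi * (pi ^ c * g0)) = pi ^ s * t := by rw [← h]; ring
    refine (strip_unique prime_pi e ?_ ht).1
    rw [nd] at *
    simp [hf]
  rcases lt_trichotomy a b with h | h | h
  · have := key a b f0 g0 hf0 h h2
    right
    refine ⟨g0, f0, ?_, ?_, hg0, hf0⟩
    · congr 2; omega
    · rw [this]
  · subst h
    have e : pi ^ s * t = pi ^ a * (f0 + g0) := by rw [← h2]; ring
    have := strip_le prime_pi e ht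
    omega
  · have := key b a g0 f0 hg0 h (by rw [← h2]; ring)
    left
    refine ⟨f0, g0, ?_, ?_, hf0, hg0⟩
    · congr 2; omega
    · rw [this]

/-- common factor removal -/
lemma reduce {x y : O} (hx : ¬ pi ∣ x) {k : ℕ} {y0 : O} (hy : y = pi ^ k * y0) (hy0 : ¬ pi ∣ y0) :
    ∃ c x' y' y0', x = c * x' ∧ y = c * y' ∧ ¬ pi ∣ c ∧ ¬ pi ∣ x' ∧ y' = pi ^ k * y0' ∧
      ¬ pi ∣ y0' ∧ ∀ p, Prime p → p ∣ x' → p ∣ y' → False := by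
  obtain ⟨x', y', c, hr, rfl, hc⟩ := UniqueFactorizationMonoid.exists_reduced_factors x (nd_ne hx) y
  have hc' : ¬ pi ∣ c := fun h => hx (h.mul_right _)
  have hy' : y' ≠ 0 := by
    rintro rfl
    rw [mul_zero] at hc
    rw [← hc] at hy
    exact mul_ne_zero (pp _) (nd_ne hy0) hy.symm
  obtain ⟨j, y0', rfl, h0⟩ := strip prime_pi hy'
  have e : pi ^ j * (c * y0') = pi ^ k * y0 := by rw [← hy, ← hc]; ring
  obtain ⟨rfl, _⟩ := strip_unique prime_pi e (nd_mul hc' h0) hy0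
  exact ⟨c, x', _, y0', rfl, hc.symm, hc', fun h => hx (h.mul_left _), rfl, h0,
    fun p hp h1 h2 => hp.not_isUnit (hr h1 h2)⟩

lemma f9_zero {x : O} (h : pi ^ 9 ∣ x) : f9 x = 0 := by
  rw [← map_zero f9, f9_eq', sub_zero]; exact h

lemma sq_dvd {a b : O} {x : O} (h : x ^ 2 = a ^ 2 * b) (ha : a ≠ 0) : ∃ y, x = a * y ∧ y ^ 2 = b := by
  have : a ^ 2 ∣ x ^ 2 := ⟨b, h⟩
  rw [IsIntegrallyClosed.pow_dvd_pow_iff two_ne_zero] at this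
  obtain ⟨y, rfl⟩ := this
  refine ⟨y, rfl, mul_left_cancel₀ (pow_ne_zero 2 ha) ?_⟩
  rw [← h]; ring

end Q4

namespace Q4

lemma quartic_diff (h n Y y r al be ga : O) (h1 : Y ^ 2 = al * h ^ 4 + be * h ^ 2 * n ^ 2 + ga * n ^ 4)
    (h2 : y ^ 2 = al * r ^ 4 + be * r ^ 2 + ga) (Sn Sd : O) (hSn : Sn = h * n * y + r * Y)
    (hSd : Sd = h ^ 2 - r ^ 2 * n ^ 2) :
    ((Sn ^ 2 - al * r ^ 2 * Sd ^ 2) * h - y * Sn * Sd * n) ^ 2 =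
      (r * n) ^ 2 * (Sn ^ 4 + be * Sn ^ 2 * Sd ^ 2 + al * ga * Sd ^ 4) := by
  have hga : ga = y ^ 2 - al * r ^ 4 - be * r ^ 2 := by linear_combination -h2
  subst hga
  have e : r ^ 2 * Sd * (Sn ^ 2 - al * r ^ 2 * Sd ^ 2) * (Y ^ 2 - (al * h ^ 4 + be * h ^ 2 * n ^ 2 + (y ^ 2 - al * r ^ 4 - be * r ^ 2) * n ^ 4)) = 0 := by
    rw [h1]; ring
  rw [hSn, hSd] at *
  linear_combination e

def D2 : O := t0 * p2
def D0 : O := I * E ^ 3 * p1 * p2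
def e2 : O := -I * E ^ 2

lemma D_D2 : D = 2 * D2 := by decide
lemma D_D0 : D = pi ^ 6 * D0 := by decide
lemma two_e2 : (2 : O) = pi ^ 4 * e2 := by decide
lemma nd_D0 : ¬ pi ∣ D0 := by rw [nd]; decide
lemma nd_e2 : ¬ pi ∣ e2 := by rw [nd]; decide
lemma nd_I : ¬ pi ∣ I := by rw [nd]; decide

lemma finB : ∀ d ∈ dL, ∀ s1 ∈ sqL, ∀ s2 ∈ sqL, ∀ s3 ∈ sqL,
    ¬ V9 (d * s2 * (e2 * s1 - tau * D0 * s3 - d * s2) - I * (D0 * D0) * (s3 * s3)) := by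
  decide +kernel

lemma caseB {h m n n0 : O} {j : ℕ} (hh : ¬ pi ∣ h) (hm : ¬ pi ∣ m) (hn : n = pi ^ (4 * j + 2) * n0)
    (hn0 : ¬ pi ∣ n0)
    (heq : (h * m) ^ 2 = I * p2 * q * h ^ 4 + (-(tau * D)) * h ^ 2 * n ^ 2 + (-I * t0 ^ 2 * p2) * n ^ 4) :
    False := by
  obtain ⟨r, hr⟩ : ∃ r : O, r = I * pi * p1 := ⟨_, rfl⟩
  obtain ⟨y0, hy0⟩ : ∃ y0 : O, y0 = 6 - 8 * pi + 3 * pi ^ 3 := ⟨_, rfl⟩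
  have hyr : (pi ^ 2 * p1 * y0) ^ 2 = (I * p2 * q) * r ^ 4 + (-(tau * D)) * r ^ 2 + (-I * t0 ^ 2 * p2) := by
    rw [hr, hy0]; decide
  obtain ⟨Sn, hSn⟩ : ∃ Sn : O, Sn = h * n * (pi ^ 2 * p1 * y0) + r * (h * m) := ⟨_, rfl⟩
  obtain ⟨Sd, hSd⟩ : ∃ Sd : O, Sd = h ^ 2 - r ^ 2 * n ^ 2 := ⟨_, rfl⟩
  have hid := quartic_diff h n (h * m) (pi ^ 2 * p1 * y0) r _ _ _ heq hyr Sn Sd hSn hSd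
  have hrn : r * n ≠ 0 := by
    refine mul_ne_zero (by rw [hr]; decide) ?_
    rw [hn]; exact mul_ne_zero (pp _) (nd_ne hn0)
  obtain ⟨w1, -, hw1⟩ := sq_dvd hid hrn
  have hSd' : ¬ pi ∣ Sd := by
    rw [nd] at *; rw [hSd, hr]; simp [hh]
  have hSn' : Sn = pi ^ 1 * (pi * h * n * p1 * y0 + I * p1 * h * m) := by rw [hSn, hr]; ring
  have hSn0 : ¬ pi ∣ pi * h * n * p1 * y0 + I * p1 * h * m := by
    rw [nd] at *; simp [hh, hm]
  obtain ⟨c, B, A, A0, h1, h2, hc, hB, hA, hA0, hcop⟩ := reduce hSd' hSn' hSn0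
  rw [h1, h2] at hw1
  have hc2 : c ^ 2 ≠ 0 := pow_ne_zero _ (nd_ne hc)
  obtain ⟨w2, -, hw2⟩ := sq_dvd (b := A ^ 4 - tau * D * A ^ 2 * B ^ 2 + q * D2 ^ 2 * B ^ 4)
    (x := w1) (a := c ^ 2) (by rw [hw1]; unfold D2; linear_combination (-(p2 ^ 2 * q * t0 ^ 2) * (c*B) ^ 4) * I_sq) hc2
  obtain ⟨J, hJ⟩ : ∃ J : O, J = A ^ 2 - tau * D2 * B ^ 2 + w2 := ⟨_, rfl⟩
  have hprod : J * (2 * A ^ 2 - tau * D * B ^ 2 - J) = I * D ^ 2 * B ^ 4 := by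
    have e : tau ^ 2 - q = 4 * I := by decide
    rw [hJ]
    rw [D_D2] at *
    linear_combination -hw2 + D2 ^ 2 * B ^ 4 * e
  have hB0 := nd_ne hB
  have hne : J * (2 * A ^ 2 - tau * D * B ^ 2 - J) ≠ 0 := by
    rw [hprod]; exact mul_ne_zero (by decide) (pow_ne_zero _ hB0)
  have hJne := left_ne_zero_of_mul hne
  obtain ⟨J', hJ'⟩ : ∃ J' : O, J' = 2 * A ^ 2 - tau * D * B ^ 2 - J := ⟨_, rfl⟩
  have hJ'ne := right_ne_zero_of_mul hne
  rw [← hJ'] at hJ'ne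
  obtain ⟨a, J1, hJ1, hJ1n⟩ := strip prime_pi hJne
  obtain ⟨b, J1', hJ1', hJ1'n⟩ := strip prime_pi hJ'ne
  have hab : a + b = 12 := by
    have e : pi ^ (a + b) * (J1 * J1') = pi ^ 12 * (I * D0 ^ 2 * B ^ 4) := by
      rw [← hJ', D_D0, hJ1', hJ1] at hprod
      linear_combination hprod
    refine (strip_unique prime_pi e (nd_mul hJ1n hJ1'n) ?_).1
    exact nd_mul (nd_mul nd_I (nd_pow nd_D0 _)) (nd_pow hB _)
  have hsum : J + J' = pi ^ 6 * (e2 * A0 ^ 2 - tau * D0 * B ^ 2) := by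
    rw [hJ', hA, D_D0, two_e2]; ring
  have key : ∀ (a b : ℕ) (x y z : O), ¬ pi ∣ x → a + b = 12 → pi ^ a * x + pi ^ b * y = pi ^ 6 * z → 6 ≤ a := by
    intro a b x y z hx hab h
    by_contra hlt
    obtain ⟨c, hc⟩ := Nat.exists_eq_add_of_lt (show a < b by omega)
    have e : pi ^ a * (x + pi * (pi ^ c * y)) = pi ^ 6 * z := by rw [← h, hc]; ring
    have := strip_le prime_pi e (by rw [nd] at *; simp [hx])
    omega
  have ha := key a b J1 J1' _ hJ1n hab (by rw [← hsum, hJ1, hJ1'])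
  have hb := key b a J1' J1 _ hJ1'n (by omega) (by rw [← hsum, hJ1, hJ1', add_comm])
  have ha6 : a = 2 * 3 := by omega
  rw [ha6] at hJ1
  obtain ⟨d, hd, l, hl⟩ := L1 (fun p hp h1 h2 => hcop p hp h2 h1) hJne hB0 hprod hJ1 hJ1n
  have hdn : ¬ pi ∣ d := by
    have : ∀ d ∈ dL, r2 d = 1 := by decide
    rw [nd]; exact this d hd
  have hlne : l ≠ 0 := by rintro rfl; apply hJne; rw [hl]; ring
  obtain ⟨k, l1, rfl, hl1⟩ := strip prime_pi hlne
  have hk : k = 3 := by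
    have e : pi ^ (2 * k) * (d * l1 ^ 2) = pi ^ (2 * 3) * J1 := by rw [← hJ1, hl]; ring
    have := (strip_unique prime_pi e (nd_mul hdn (nd_pow hl1 _)) hJ1n).1
    omega
  subst hk
  have hfin : d * l1 ^ 2 * (e2 * A0 ^ 2 - tau * D0 * B ^ 2 - d * l1 ^ 2) = I * (D0 * D0) * (B ^ 2 * B ^ 2) := by
    apply mul_left_cancel₀ (pp 12)
    rw [hl, hA, D_D0, two_e2] at hprod
    linear_combination hprod
  obtain ⟨s1, hs1, e1⟩ := sq9 hA0
  obtain ⟨s2, hs2, e2'⟩ := sq9 hl1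
  obtain ⟨s3, hs3, e3⟩ := sq9 hB
  apply finB d hd s1 hs1 s2 hs2 s3 hs3
  rw [← f9_eq]
  have := congrArg f9 hfin
  simp only [map_mul, map_sub, map_pow, e1, e2', e3] at this ⊢
  exact this

end Q4

namespace Q4

lemma finA : ∀ d ∈ dL, ∀ s1 ∈ sqL, ∀ s2 ∈ sqL, ∀ s3 ∈ sqL,
    ¬ V9 (s1 - (d * I * s2 + tau * D2 * pi ^ 4 * s3)) := by
  decide +kernel

lemma D2_primes {p : O} (hp : Prime p) (h : p ∣ D2) : ∃ s ∈ [pi, p1, p2], p ∣ s := by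
  apply D_primes hp
  rw [D_D2]; exact h.mul_left _

/-- first half of the descent: a square case -/
lemma caseA {h m n n0 : O} {j : ℕ} (hh : ¬ pi ∣ h) (hn : n = pi ^ (4 * j + 2) * n0)
    (hn0 : ¬ pi ∣ n0)
    (heq : (2 * h * m) ^ 2 = (2 * h ^ 2 - tau * D * n ^ 2) ^ 2 - 4 * I * D ^ 2 * n ^ 4)
    (IH : ∀ j', j' < j → ∀ m n w n0 : O, ¬ pi ∣ m → n = pi ^ (4 * j' + 2) * n0 → ¬ pi ∣ n0 →
      w ^ 2 = m ^ 4 + 2 * tau * D * m ^ 2 * n ^ 2 + 4 * I * D ^ 2 * n ^ 4 → False) : False := by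
  obtain ⟨c, h, n, n0, rfl, rfl, hc, hh, hn, hn0, hcop⟩ := reduce hh hn hn0
  have e1 : (2 * h * m) ^ 2 = c ^ 2 * ((2 * h ^ 2 - tau * D * n ^ 2) ^ 2 - 4 * I * D ^ 2 * n ^ 4) := by
    apply mul_left_cancel₀ (pow_ne_zero 2 (nd_ne hc))
    linear_combination heq
  obtain ⟨t, -, ht⟩ := sq_dvd e1 (nd_ne hc)
  clear heq e1
  -- wlog the sign of t
  suffices key : ∀ t : O, t ^ 2 = (2 * h ^ 2 - tau * D * n ^ 2) ^ 2 - 4 * I * D ^ 2 * n ^ 4 →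
      (∃ f0 g0, 2 * h ^ 2 - tau * D * n ^ 2 - t = pi ^ (20 + 16 * j) * f0 ∧
        2 * h ^ 2 - tau * D * n ^ 2 + t = pi ^ 8 * g0 ∧ ¬ pi ∣ f0 ∧ ¬ pi ∣ g0) → False by
    have hv := VAL (f := 2 * h ^ 2 - tau * D * n ^ 2 - t) (g := 2 * h ^ 2 - tau * D * n ^ 2 + t)
      (S := 28 + 16 * j) (s := 8) (u := e2 ^ 2 * I * D0 ^ 2 * n0 ^ 4)
      (t := e2 * (e2 * h ^ 2 - pi ^ 2 * tau * D0 * n ^ 2)) (by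
        have e4 : (4 : O) = pi ^ 8 * e2 ^ 2 := by decide
        have : (2 * h ^ 2 - tau * D * n ^ 2 - t) * (2 * h ^ 2 - tau * D * n ^ 2 + t) = 4 * I * D ^ 2 * n ^ 4 := by
          linear_combination -ht
        rw [this, e4, D_D0, hn]; ring)
      (nd_mul (nd_mul (nd_mul (nd_pow nd_e2 _) nd_I) (nd_pow nd_D0 _)) (nd_pow hn0 _))
      (by
        have : (2 * h ^ 2 - tau * D * n ^ 2 - t) + (2 * h ^ 2 - tau * D * n ^ 2 + t) = 2 * (2 * h ^ 2 - tau * D * n ^ 2) := by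
          ring
        rw [this, two_e2, D_D0]; ring)
      (nd_mul nd_e2 (by have := nd_e2; rw [nd] at *; simp [this, hh])) (by omega)
    rw [show 28 + 16 * j - 8 = 20 + 16 * j by omega] at hv
    rcases hv with hv | ⟨f0, g0, h1, h2, h3, h4⟩
    · exact key t ht hv
    · exact key (-t) (by rw [neg_sq, ht]) ⟨f0, g0, by rw [← h1]; ring, by rw [← h2]; ring, h3, h4⟩
  clear ht t
  rintro t ht ⟨f0, g0, hf, hg, hf0, hg0⟩
  have e4 : pi ^ 8 = 4 * (E ^ 2 * 0 + (-I * E ^ 2 - E ^ 2 * 0 ) ^ 2 * 0 + (I * (E - (1 - I)) ^ 2) ^ 2) := by decide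
  obtain ⟨k, hk⟩ : ∃ k : O, k = (I * (E - (1 - I)) ^ 2) ^ 2 := ⟨_, rfl⟩
  have hkn : ¬ pi ∣ k := by rw [nd, hk]; decide
  have e4 : pi ^ 8 = 4 * k := by rw [hk]; decide
  have h40 : (4 : O) ≠ 0 := by decide
  obtain ⟨g3, hg3⟩ : ∃ g3 : O, g3 = k * g0 := ⟨_, rfl⟩
  obtain ⟨f3, hf3⟩ : ∃ f3 : O, f3 = pi ^ 12 * (pi ^ (16 * j) * k * f0) := ⟨_, rfl⟩
  have hg3n : ¬ pi ∣ g3 := by rw [hg3]; exact nd_mul hkn hg0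
  have hg' : 2 * h ^ 2 - tau * D * n ^ 2 + t = 4 * g3 := by rw [hg, hg3, e4]; ring
  have hf' : 2 * h ^ 2 - tau * D * n ^ 2 - t = 4 * f3 := by
    rw [hf, hf3, pow_add, show (20 : ℕ) = 8 + 12 by rfl, pow_add, e4]; ring
  have hs : g3 + f3 = h ^ 2 - tau * D2 * n ^ 2 := by
    apply mul_left_cancel₀ h40
    rw [D_D2] at *
    linear_combination -hg' - hf'
  have hp : g3 * f3 = I * D2 ^ 2 * n ^ 4 := by
    apply mul_left_cancel₀ (pow_ne_zero 2 h40)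
    rw [D_D2] at *
    linear_combination -(4 * f3) * hg' - (2 * h ^ 2 - tau * (2 * D2) * n ^ 2 + t) * hf' - ht
  have hf9 : f9 f3 = 0 := f9_zero ⟨pi ^ 3 * (pi ^ (16 * j) * k * f0), by rw [hf3]; ring⟩
  have hnne : n ≠ 0 := by rw [hn]; exact mul_ne_zero (pp _) (nd_ne hn0)
  have hne : g3 * f3 ≠ 0 := by
    rw [hp]; exact mul_ne_zero (by decide) (pow_ne_zero _ hnne)
  rcases Nat.eq_zero_or_pos j with hj | hj
  · -- j = 0
    subst hj
    have hn2 : n = pi ^ 2 * n0 := by rw [hn]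
    have hJ : (2 * g3) * (2 * h ^ 2 - tau * D * n ^ 2 - 2 * g3) = I * D ^ 2 * n ^ 4 := by
      rw [D_D2]
      linear_combination 4 * hp - 4 * g3 * hs
    have h20 : (2 : O) ≠ 0 := by decide
    obtain ⟨d, hd, l, hl⟩ := L1 hcop (mul_ne_zero h20 (left_ne_zero_of_mul hne)) hnne hJ
      (k := 2) (J1 := e2 * g3) (by rw [two_e2]; ring) (nd_mul nd_e2 hg3n)
    have hdn : ¬ pi ∣ d := by
      have : ∀ d ∈ dL, r2 d = 1 := by decide
      rw [nd]; exact this d hd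
    have hlne : l ≠ 0 := by
      rintro rfl
      apply mul_ne_zero h20 (left_ne_zero_of_mul hne); rw [hl]; ring
    obtain ⟨a, l1, rfl, hl1⟩ := strip prime_pi hlne
    have ha : a = 2 := by
      have e : pi ^ (2 * a) * (d * l1 ^ 2) = pi ^ (2 * 2) * (e2 * g3) := by
        have : pi ^ (2 * 2) * (e2 * g3) = 2 * g3 := by rw [two_e2]; ring
        rw [this, hl]; ring
      have := (strip_unique prime_pi e (nd_mul hdn (nd_pow hl1 _)) (nd_mul nd_e2 hg3n)).1
      omega
    subst ha
    obtain ⟨e, he⟩ : ∃ e : O, e = -(E - (1 - I)) := ⟨_, rfl⟩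
    have hpe : (pi ^ 2) ^ 2 = 2 * (I * e ^ 2) := by rw [he]; decide
    have hg3' : g3 = d * I * (e * l1) ^ 2 := by
      apply mul_left_cancel₀ h20
      linear_combination hl + d * l1 ^ 2 * hpe
    have hel : ¬ pi ∣ e * l1 := nd_mul (by rw [nd, he]; decide) hl1
    obtain ⟨s1, hs1, e1⟩ := sq9 hh
    obtain ⟨s2, hs2, e2'⟩ := sq9 hel
    obtain ⟨s3, hs3, e3⟩ := sq9 hn0
    apply finA d hd s1 hs1 s2 hs2 s3 hs3
    rw [← f9_eq]
    have h5 : h ^ 2 = d * I * (e * l1) ^ 2 + tau * D2 * pi ^ 4 * n0 ^ 2 + f3 := by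
      rw [← hg3']
      rw [hn2] at hs
      linear_combination -hs
    have := congrArg f9 h5
    simp only [map_add, map_mul f9 (d * I), map_mul f9 (tau * D2 * pi ^ 4), hf9, add_zero] at this ⊢
    rw [map_pow, map_pow, map_pow, e1, e2', e3] at this
    exact this
  · -- j ≥ 1
    obtain ⟨i, rfl⟩ := Nat.exists_eq_add_of_lt hj
    rw [zero_add] at *
    have hn2 : n = pi ^ 6 * (pi ^ (4 * i) * n0) := by rw [hn]; ring
    have hc9 : f9 g3 = f9 (h ^ 2) := by
      have h5 : h ^ 2 = g3 + f3 + pi ^ 9 * (pi ^ 3 * tau * D2 * (pi ^ (4 * i) * n0) ^ 2) := by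
        rw [hn2] at hs
        linear_combination -hs
      rw [h5, map_add, map_add, hf9, f9_zero ⟨_, rfl⟩, add_zero, add_zero]
    have hIu : IsUnit I := isUnit_of_nrm (by decide)
    obtain ⟨T, hT, v, hv, l, hl⟩ := SCu [p1, p2] g3 (I * f3) (I * D2 * n ^ 2)
      (by simp [prime_p1, prime_p2]) (left_ne_zero_of_mul hne)
      (mul_ne_zero (by decide) (right_ne_zero_of_mul hne)) (by linear_combination I * hp) (by
        intro p hpr h1 h2
        rw [hIu.dvd_mul_left] at h2
        have hnpi : ¬ p ∣ pi := fun h => hg3n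
          (((hpr.associated_of_dvd prime_pi h).symm.dvd).trans h1)
        have h3 : p ∣ I * D2 ^ 2 * n ^ 4 := hp ▸ h1.mul_right _
        rcases hpr.dvd_or_dvd h3 with h3 | h3
        · rw [hIu.dvd_mul_left] at h3
          obtain ⟨s, hs1, hs2⟩ := D2_primes hpr (hpr.dvd_of_dvd_pow h3)
          rw [List.mem_cons] at hs1
          rcases hs1 with rfl | hs1
          · exact (hnpi hs2).elim
          · exact ⟨s, hs1, hs2⟩
        · have h4 := hpr.dvd_of_dvd_pow h3
          have h5 : p ∣ h ^ 2 := by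
            have : h ^ 2 = g3 + f3 + tau * D2 * n * n := by linear_combination -hs
            rw [this]; exact (h1.add h2).add (h4.mul_left _)
          exact (hcop p hpr (hpr.dvd_of_dvd_pow h5) h4).elim)
    have hln : ¬ pi ∣ l := by
      intro hc
      exact hg3n (by rw [hl]; exact (dvd_pow hc two_ne_zero).mul_left _)
    rw [hl] at hc9
    rcases ind9 hv (hT.trans (by decide)) hh hln hc9 with ⟨hv1, hT1⟩ | ⟨_, hT1⟩
    · rw [hv1, hT1] at hl
      simp at hl
      obtain ⟨n'', hn''⟩ : ∃ n'' : O, n'' = pi ^ (4 * i + 2) * (I * (E - (1 - I)) ^ 2 * n0) := ⟨_, rfl⟩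
      have hnn : n = 2 * n'' := by
        have e : pi ^ 4 = 2 * (I * (E - (1 - I)) ^ 2) := by decide
        rw [hn2, hn'', pow_add, show (6 : ℕ) = 4 + 2 by rfl, pow_add, e]; ring
      refine IH i (by omega) l n'' (l * h) (I * (E - (1 - I)) ^ 2 * n0) hln hn'' (nd_mul (by rw [nd]; decide) hn0) ?_
      rw [D_D2]
      rw [hl, hnn] at hp hs
      linear_combination hp - l ^ 2 * hs
    · have : q ∈ T := by rw [hT1]; simp
      have := hT.subset this
      revert this; decide

theorem claim (j : ℕ) : ∀ m n w n0 : O, ¬ pi ∣ m → n = pi ^ (4 * j + 2) * n0 → ¬ pi ∣ n0 →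
      w ^ 2 = m ^ 4 + 2 * tau * D * m ^ 2 * n ^ 2 + 4 * I * D ^ 2 * n ^ 4 → False := by
  induction j using Nat.strong_induction_on with
  | _ j IH =>
  intro m n w n0 hm hn hn0 heq
  obtain ⟨c, m, n, n0, rfl, rfl, hc, hm, hn, hn0, hcop⟩ := reduce hm hn hn0
  obtain ⟨w, -, hw⟩ := sq_dvd (a := c ^ 2) (x := w)
    (b := m ^ 4 + 2 * tau * D * m ^ 2 * n ^ 2 + 4 * I * D ^ 2 * n ^ 4)
    (by rw [heq]; ring) (pow_ne_zero 2 (nd_ne hc))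
  clear heq
  have hq : tau ^ 2 - 4 * I = q := by decide
  suffices key : ∀ w : O, w ^ 2 = m ^ 4 + 2 * tau * D * m ^ 2 * n ^ 2 + 4 * I * D ^ 2 * n ^ 4 →
      (∃ f0 g0, m ^ 2 + tau * D * n ^ 2 - w = pi ^ (16 + 16 * j) * f0 ∧
        m ^ 2 + tau * D * n ^ 2 + w = pi ^ 4 * g0 ∧ ¬ pi ∣ f0 ∧ ¬ pi ∣ g0) → False by
    have hv := VAL (f := m ^ 2 + tau * D * n ^ 2 - w) (g := m ^ 2 + tau * D * n ^ 2 + w)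
      (S := 20 + 16 * j) (s := 4) (u := q * D0 ^ 2 * n0 ^ 4)
      (t := e2 * (m ^ 2 + tau * D * n ^ 2)) (by
        have : (m ^ 2 + tau * D * n ^ 2 - w) * (m ^ 2 + tau * D * n ^ 2 + w) = q * D ^ 2 * n ^ 4 := by
          linear_combination -hw + D ^ 2 * n ^ 4 * hq
        rw [this, D_D0, hn]; ring)
      (nd_mul (nd_mul (by rw [nd]; decide) (nd_pow nd_D0 _)) (nd_pow hn0 _))
      (by
        have : (m ^ 2 + tau * D * n ^ 2 - w) + (m ^ 2 + tau * D * n ^ 2 + w) = 2 * (m ^ 2 + tau * D * n ^ 2) := by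
          ring
        rw [this, two_e2]; ring)
      (nd_mul nd_e2 (by rw [nd] at *; simp [hm])) (by omega)
    rw [show 20 + 16 * j - 4 = 16 + 16 * j by omega] at hv
    rcases hv with hv | ⟨f0, g0, h1, h2, h3, h4⟩
    · exact key w hw hv
    · exact key (-w) (by rw [neg_sq, hw]) ⟨f0, g0, by rw [← h1]; ring, by rw [← h2]; ring, h3, h4⟩
  clear hw w
  rintro w hw ⟨f0, g0, hf, hg, hf0, hg0⟩
  obtain ⟨k, hk⟩ : ∃ k : O, k = I * (E - (1 - I)) ^ 2 := ⟨_, rfl⟩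
  have hkn : ¬ pi ∣ k := by rw [nd, hk]; decide
  have e4 : pi ^ 4 = 2 * k := by rw [hk]; decide
  have h20 : (2 : O) ≠ 0 := by decide
  obtain ⟨g, hg3⟩ : ∃ g : O, g = k * g0 := ⟨_, rfl⟩
  obtain ⟨f, hf3⟩ : ∃ f : O, f = pi ^ 12 * (pi ^ (16 * j) * k * f0) := ⟨_, rfl⟩
  have hgn : ¬ pi ∣ g := by rw [hg3]; exact nd_mul hkn hg0
  have hg' : m ^ 2 + tau * D * n ^ 2 + w = 2 * g := by rw [hg, hg3, e4]; ring
  have hf' : m ^ 2 + tau * D * n ^ 2 - w = 2 * f := by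
    rw [hf, hf3, pow_add, show (16 : ℕ) = 4 + 12 by rfl, pow_add, e4]; ring
  have hs : g + f = m ^ 2 + tau * D * n ^ 2 := by
    apply mul_left_cancel₀ h20
    linear_combination -hg' - hf'
  have hp4 : 4 * g * f = q * D ^ 2 * n ^ 4 := by
    linear_combination -(2 * f) * hg' - (m ^ 2 + tau * D * n ^ 2 + w) * hf' - hw + D ^ 2 * n ^ 4 * hq
  have hp : g * f = q * D2 ^ 2 * n ^ 4 := by
    apply mul_left_cancel₀ (pow_ne_zero 2 h20)
    rw [D_D2] at hp4
    linear_combination hp4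
  have hf9 : f9 f = 0 := f9_zero ⟨pi ^ 3 * (pi ^ (16 * j) * k * f0), by rw [hf3]; ring⟩
  have hnne : n ≠ 0 := by rw [hn]; exact mul_ne_zero (pp _) (nd_ne hn0)
  have hne : g * f ≠ 0 := by
    rw [hp]; exact mul_ne_zero (by decide) (pow_ne_zero _ hnne)
  have hc9 : f9 g = f9 (m ^ 2) := by
    have h5 : m ^ 2 = g + f - pi ^ 9 * (pi * tau * D0 * (pi ^ (4 * j) * n0) ^ 2) := by
      rw [hn, D_D0] at hs
      linear_combination -hs
    rw [h5, map_sub, map_add, hf9, f9_zero ⟨_, rfl⟩, add_zero, sub_zero]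
  obtain ⟨T, hT, v, hv, h, hl⟩ := SCu [p1, p2, q] g (q * f) (q * D2 * n ^ 2)
    (by simp [prime_p1, prime_p2, prime_q]) (left_ne_zero_of_mul hne)
    (mul_ne_zero (by decide) (right_ne_zero_of_mul hne)) (by linear_combination q * hp) (by
      intro p hpr h1 h2
      have hnpi : ¬ p ∣ pi := fun h => hgn
        (((hpr.associated_of_dvd prime_pi h).symm.dvd).trans h1)
      rcases hpr.dvd_or_dvd h2 with h2 | h2
      · exact ⟨q, by simp, h2⟩
      have h3 : p ∣ q * D2 ^ 2 * n ^ 4 := hp ▸ h1.mul_right _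
      rcases hpr.dvd_or_dvd h3 with h3 | h3
      · rcases hpr.dvd_or_dvd h3 with h3 | h3
        · exact ⟨q, by simp, h3⟩
        obtain ⟨s, hs1, hs2⟩ := D2_primes hpr (hpr.dvd_of_dvd_pow h3)
        rw [List.mem_cons] at hs1
        rcases hs1 with rfl | hs1
        · exact (hnpi hs2).elim
        · exact ⟨s, by simp at hs1 ⊢; tauto, hs2⟩
      · have h4 := hpr.dvd_of_dvd_pow h3
        have h5 : p ∣ m ^ 2 := by
          have : m ^ 2 = g + f - tau * D * n * n := by linear_combination -hs
          rw [this]; exact (h1.add h2).sub (h4.mul_left _)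
        exact (hcop p hpr (hpr.dvd_of_dvd_pow h5) h4).elim)
  have hhn : ¬ pi ∣ h := by
    intro hc
    exact hgn (by rw [hl]; exact (dvd_pow hc two_ne_zero).mul_left _)
  rw [hl] at hc9
  rcases ind9 hv hT hm hhn hc9 with ⟨hv1, hT1⟩ | ⟨hv1, hT1⟩
  · rw [hv1, hT1] at hl
    simp at hl
    refine caseA hhn hn hn0 (m := m) ?_ IH
    rw [hl] at hp4 hs
    linear_combination -4 * h ^ 2 * hs + hp4 - D ^ 2 * n ^ 4 * hq
  · rw [hv1, hT1] at hl
    simp at hl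
    refine caseB hhn hm hn hn0 (m := m) ?_
    rw [hl] at hp hs
    have hx : I * h ^ 2 * f = t0 ^ 2 * p2 * n ^ 4 := by
      apply mul_left_cancel₀ (show p2 * q ≠ 0 by decide)
      unfold D2 at hp
      linear_combination hp
    linear_combination -h ^ 2 * hs - I * hx + h ^ 2 * f * I_sq

end Q4

namespace Q4

instance : CharZero O := ⟨fun m n h => by
  have := congrArg Q4.a h
  simpa using this⟩

lemma odd_val {p x y d n : O} (hp : Prime p) (hx : ¬ p ∣ x) (hy : ¬ p ∣ y) (hn : n ≠ 0)
    (h : x * d ^ 2 = p * y * n ^ 2) : False := by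
  have hd : d ≠ 0 := by
    rintro rfl
    have h0 : p * y * n ^ 2 = 0 := by rw [← h]; ring
    have hy0 : y ≠ 0 := by rintro rfl; exact hy (dvd_zero _)
    exact mul_ne_zero (mul_ne_zero hp.ne_zero hy0) (pow_ne_zero 2 hn) h0
  obtain ⟨k, d', rfl, hd'⟩ := strip hp hd
  obtain ⟨j, n', rfl, hn'⟩ := strip hp hn
  have h1 : p ^ (2 * k) * (x * d' ^ 2) = p ^ (2 * j + 1) * (y * n' ^ 2) := by
    linear_combination h
  have := (strip_unique hp h1
    (fun h => (hp.dvd_or_dvd h).elim hx (fun h => hd' (hp.dvd_of_dvd_pow h)))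
    (fun h => (hp.dvd_or_dvd h).elim hy (fun h => hn' (hp.dvd_of_dvd_pow h)))).1
  omega

lemma tauprime {p : O} (hp : Prime p) {e c : ℤ} (hec : IsCoprime e c) (h1 : p ∣ (e : O))
    (h2 : p ∣ (c : O)) : False := by
  obtain ⟨x, y, h⟩ := hec
  apply hp.not_isUnit
  apply isUnit_of_dvd_one
  have : ((x * e + y * c : ℤ) : O) = 1 := by rw [h]; simp
  rw [← this]; push_cast
  exact dvd_add (h1.mul_left _) (h2.mul_left _)

lemma r2_int (n : ℤ) : r2 (n : O) = (n : ZMod 2) := map_intCast r2 n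

lemma nd_odd {n : ℤ} (h : Odd n) : ¬ pi ∣ (n : O) := by
  rw [nd, r2_int]
  exact (ZMod.intCast_eq_one_iff_odd).2 h

lemma finC : ∀ k ∈ [-1, 0, 1, (2 : ℤ)], ∀ v ∈ uL, ∀ s ∈ sqL,
    V9 (v * p1 * s - (-E * p1 + (k : O) * pi ^ 2 * e2)) → k = 0 ∧ v = E := by
  decide +kernel

lemma five_dvd {p : O} (hp : Prime p) (h : p ∣ tau) {e : ℤ} (he : p ∣ (e : O)) : (5 : ℤ) ∣ e := by
  by_contra h5
  have hc : IsCoprime (5 : ℤ) e := by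
    rw [Int.prime_iff_natAbs_prime.2 (by norm_num : Nat.Prime (Int.natAbs 5)) |>.coprime_iff_not_dvd]
    exact h5
  refine tauprime hp hc ?_ he
  have : ((5 : ℤ) : O) = tau * (tau * q) := by decide
  rw [this]; exact h.mul_right _

lemma c17 {p : O} (hp : Prime p) {c : ℤ} (h17 : ¬ (17 : ℤ) ∣ c) (h : p ∣ (17 : O)) (hc : p ∣ (c : O)) :
    False := by
  have hc' : IsCoprime (17 : ℤ) c := by
    rw [Int.prime_iff_natAbs_prime.2 (by norm_num : Nat.Prime (Int.natAbs 17)) |>.coprime_iff_not_dvd]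
    exact h17
  exact tauprime hp hc' (by exact_mod_cast h) hc

lemma r1_int (n : ℤ) : r1 (n : O) = (n : ZMod 17) := map_intCast r1 n

lemma t0_primes {p : O} (hp : Prime p) (h : p ∣ t0) : p ∣ pi ∨ p ∣ p1 := by
  rw [t0_eq2] at h
  rcases hp.dvd_or_dvd h with h | h
  · left; apply two_primes hp; rw [two_eq]; exact (h.pow (two_ne_zero)).mul_left _
  · exact Or.inr h

end Q4

namespace Q4

lemma sq_odd8 {c : ℤ} (h : Odd c) : ∃ k, c ^ 2 = 1 + 8 * k := by
  obtain ⟨m, rfl⟩ := h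
  obtain ⟨r, hr⟩ := Int.even_mul_succ_self m
  exact ⟨r, by linear_combination 4 * hr⟩

lemma prime17_not {c e : ℤ} (hec : IsCoprime e c) (h : (17 : ℤ) ∣ e - 3 * c ^ 2) : ¬ (17 : ℤ) ∣ c := by
  intro hc
  have he : (17 : ℤ) ∣ e := by
    have := dvd_add h ((hc.pow (two_ne_zero)).mul_left 3 : (17 : ℤ) ∣ 3 * c ^ 2)
    simpa using this
  have := hec.isUnit_of_dvd' he hc
  rw [Int.isUnit_iff] at this; omega

lemma C1 {e c n : ℤ} (hec : IsCoprime e c) (he : Odd e) (hc : Odd c) (h17 : (17 : ℤ) ∣ e - 3 * c ^ 2)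
    (h : e ^ 4 - 2 * e ^ 2 * c ^ 4 + 5 * c ^ 8 = 68 * n ^ 2) (hn : n ≠ 0) :
    (8 : ℤ) ∣ e - 3 * c ^ 2 ∧ ∃ k : O, (e : O) - tau * c ^ 2 = t0 * k ^ 2 := by
  have hc17 := prime17_not hec h17
  have hp5 : Prime (5 : ℤ) := Int.prime_iff_natAbs_prime.2 (by norm_num)
  have h5 : ¬ (5 : ℤ) ∣ e := by
    rintro ⟨e', rfl⟩
    have h1 : (5 : ℤ) ∣ 68 * n ^ 2 := by
      rw [← h]; exact ⟨125 * e' ^ 4 - 10 * e' ^ 2 * c ^ 4 + c ^ 8, by ring⟩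
    have h2 : (5 : ℤ) ∣ n := by
      rcases hp5.dvd_or_dvd h1 with h1 | h1
      · norm_num at h1
      · exact hp5.dvd_of_dvd_pow h1
    obtain ⟨n', rfl⟩ := h2
    have h3 : (5 : ℤ) ∣ c ^ 8 := ⟨68 * n' ^ 2 - 25 * e' ^ 4 + 2 * e' ^ 2 * c ^ 4, by linarith⟩
    have := hec.isUnit_of_dvd' (dvd_mul_right 5 e') (hp5.dvd_of_dvd_pow h3)
    rw [Int.isUnit_iff] at this; omega
  obtain ⟨A, hA⟩ : ∃ A : O, A = e - tau * c ^ 2 := ⟨_, rfl⟩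
  obtain ⟨A', hA'⟩ : ∃ A : O, A = e + tau * c ^ 2 := ⟨_, rfl⟩
  obtain ⟨B, hB⟩ : ∃ A : O, A = e ^ 2 - q * c ^ 4 := ⟨_, rfl⟩
  have hz : (e : O) ^ 4 - 2 * e ^ 2 * c ^ 4 + 5 * c ^ 8 = 68 * n ^ 2 := by exact_mod_cast h
  have hprod : A * (A' * B) = 68 * (n : O) ^ 2 := by
    rw [← hz, hA, hA', hB, q_eq]
    linear_combination (-(c : O) ^ 4 * (e ^ 2 - (1 - 2 * I) * c ^ 4)) * tau_sq - 4 * (c : O) ^ 8 * I_sq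
  have hn' : (n : O) ≠ 0 := by exact_mod_cast hn
  have h68 : (68 : O) ≠ 0 := by decide
  have hne : A * (A' * B) ≠ 0 := by rw [hprod]; exact mul_ne_zero h68 (pow_ne_zero 2 hn')
  have hA0 : A ≠ 0 := left_ne_zero_of_mul hne
  have hAB0 : A' * B ≠ 0 := right_ne_zero_of_mul hne
  have hsc := SCu [pi, p1] A (17 * (A' * B)) (34 * n) (by
      intro s hs; simp at hs; rcases hs with rfl | rfl; exacts [prime_pi, prime_p1]) hA0
      (mul_ne_zero (by decide) hAB0) (by linear_combination 17 * hprod) (by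
    intro p hp h1 h2
    suffices h : p ∣ pi ∨ p ∣ p1 by
      rcases h with h | h
      · exact ⟨pi, by simp, h⟩
      · exact ⟨p1, by simp, h⟩
    have hpc : ¬ p ∣ (c : O) := by
      intro hpc
      refine tauprime hp hec ?_ hpc
      have : (e : O) = A + tau * c * c := by rw [hA]; ring
      rw [this]; exact dvd_add h1 (hpc.mul_left _)
    rcases hp.dvd_or_dvd h2 with h2 | h2
    · obtain ⟨m, hm⟩ := h17
      have hm' : (e : O) - 3 * c ^ 2 = 17 * m := by exact_mod_cast hm
      have h3 : p ∣ t0 * c ^ 2 := by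
        have : t0 * (c : O) ^ 2 = A - 17 * m := by rw [hA, t0_eq]; linear_combination -hm'
        rw [this]; exact dvd_sub h1 (h2.mul_right _)
      rcases hp.dvd_or_dvd h3 with h3 | h3
      · exact t0_primes hp h3
      · exact (hpc (hp.dvd_of_dvd_pow h3)).elim
    · left
      apply two_primes hp
      rcases hp.dvd_or_dvd h2 with h2 | h2
      · have h3 : p ∣ 2 * e := by
          have : (2 : O) * e = A + A' := by rw [hA, hA']; ring
          rw [this]; exact dvd_add h1 h2
        have h4 : p ∣ 2 * tau * c ^ 2 := by
          have : (2 : O) * tau * c ^ 2 = A' - A := by rw [hA, hA']; ring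
          rw [this]; exact dvd_sub h2 h1
        rcases hp.dvd_or_dvd h4 with h4 | h4
        · rcases hp.dvd_or_dvd h4 with h4 | h4
          · exact h4
          · rcases hp.dvd_or_dvd h3 with h3 | h3
            · exact h3
            · exact (h5 (five_dvd hp h4 h3)).elim
        · exact (hpc (hp.dvd_of_dvd_pow h4)).elim
      · have h3 : p ∣ 2 * (2 * I) * c ^ 4 := by
          have : 2 * (2 * I) * (c : O) ^ 4 = B - A * A' := by
            rw [hA, hA', hB, q_eq]; linear_combination -(c : O) ^ 4 * tau_sq
          rw [this]; exact dvd_sub h2 (h1.mul_right _)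
        rcases hp.dvd_or_dvd h3 with h3 | h3
        · rcases hp.dvd_or_dvd h3 with h3 | h3
          · exact h3
          · rcases hp.dvd_or_dvd h3 with h3 | h3
            · exact h3
            · exact (hp.not_isUnit (isUnit_of_dvd_unit h3 (isUnit_of_nrm (by decide)))).elim
        · exact (hpc (hp.dvd_of_dvd_pow h3)).elim)
  obtain ⟨T, hT, v, hv, d, hd⟩ := hsc
  -- pi-valuation of A
  obtain ⟨kc, hkc⟩ := sq_odd8 hc
  obtain ⟨k, hk⟩ : ∃ k : ℤ, e = 3 + 2 * k := by obtain ⟨m, rfl⟩ := he; exact ⟨m - 1, by ring⟩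
  have hkc' : (c : O) ^ 2 = 1 + 8 * kc := by exact_mod_cast hkc
  have hk' : (e : O) = 3 + 2 * k := by exact_mod_cast hk
  obtain ⟨A0, hA0d⟩ : ∃ A0 : O, A0 = -E * p1 + k * pi ^ 2 * e2 + pi ^ 10 * e2 ^ 3 * (-tau * kc) := ⟨_, rfl⟩
  have ht0 : t0 = pi ^ 2 * (-E * p1) := by decide
  have h8 : (8 : O) = pi ^ 12 * e2 ^ 3 := by decide
  have hAA0 : A = pi ^ 2 * A0 := by
    rw [hA, hkc', hk', hA0d]
    linear_combination ht0 - t0_eq + k * two_e2 - tau * kc * h8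
  have hA0nd : ¬ pi ∣ A0 := by
    rw [nd, hA0d]
    simp only [map_add, map_mul, map_neg, map_pow]
    have h1 : r2 pi = 0 := by decide
    have h2 : r2 E = 1 := by decide
    have h3 : r2 p1 = 1 := by decide
    rw [h1, h2, h3]; simp
  have hvnd : ∀ v ∈ uL, ¬ pi ∣ v := by
    intro v hv; rw [nd]; revert v; decide
  have hvnd1 : ∀ v ∈ uL, ¬ p1 ∣ v := by
    intro v hv; rw [← r1_zero]; revert v; decide
  have hp1nd : ¬ pi ∣ p1 := by rw [nd]; decide
  have hc1 : r1 (c : O) ≠ 0 := by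
    rw [r1_int, Ne, ZMod.intCast_zmod_eq_zero_iff_dvd]; exact_mod_cast hc17
  have he1 : r1 (e : O) = 3 * r1 (c : O) ^ 2 := by
    rw [r1_int, r1_int, ← sub_eq_zero]
    have := (ZMod.intCast_zmod_eq_zero_iff_dvd (e - 3 * c ^ 2) 17).2 (by exact_mod_cast h17)
    push_cast at this; exact this
  have hT' : T = [] ∨ T = [pi] ∨ T = [p1] ∨ T = [pi, p1] := by
    have := List.mem_sublists.2 hT
    simpa [List.sublists, or_comm, or_left_comm] using this
  have hTp : T = [p1] := by
    rcases hT' with rfl | rfl | rfl | rfl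
    · exfalso
      simp only [List.prod_nil, mul_one] at hd
      obtain ⟨y, hy⟩ : ∃ y : O, (68 : O) = p1 * y ∧ ¬ p1 ∣ y := by
        refine ⟨conj p1 * 4 * p2 * I, by decide, ?_⟩
        rw [← r1_zero]; decide
      refine odd_val prime_p1 (x := v * (A' * B)) (y := y) (d := d) (n := n) ?_ hy.2 hn' ?_
      · intro h
        rcases prime_p1.dvd_or_dvd h with h | h
        · exact hvnd1 v hv h
        · have hfin : ∀ x : ZMod 17, (3 * x ^ 2 + 3 * x ^ 2) * ((3 * x ^ 2) ^ 2 - (-7) * x ^ 4) = 0 → x = 0 := by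
            decide +kernel
          apply hc1; apply hfin
          rw [← r1_zero, hA', hB] at h
          simp only [map_add, map_mul, map_sub, map_pow, he1] at h
          have h1 : r1 tau = 3 := by decide
          have h2 : r1 q = -7 := by decide
          rw [h1, h2] at h; exact h
      · rw [← hy.1, ← hprod, hd]; ring
    · exfalso
      refine pi_parity (k := 1) (J := A) (m := v) (d := d) hAA0 hA0nd ?_ (hvnd v hv)
      rw [hd]; simp only [List.prod_cons, List.prod_nil, mul_one]; ring
    · rfl
    · exfalso
      refine pi_parity (k := 1) (J := A) (m := v * p1) (d := d) hAA0 hA0nd ?_ (nd_mul (hvnd v hv) hp1nd)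
      rw [hd]; simp only [List.prod_cons, List.prod_nil, mul_one]; ring
  subst hTp
  simp only [List.prod_cons, List.prod_nil, mul_one] at hd
  have hpd : pi ∣ d := by
    have : pi ∣ v * p1 * d ^ 2 := by rw [← hd, hAA0]; exact (dvd_pow_self _ two_ne_zero).mul_right _
    rcases prime_pi.dvd_or_dvd this with h | h
    · exact (nd_mul (hvnd v hv) hp1nd h).elim
    · exact prime_pi.dvd_of_dvd_pow h
  obtain ⟨d', rfl⟩ := hpd
  have hA0' : A0 = v * p1 * d' ^ 2 := by
    apply mul_left_cancel₀ (pp 2)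
    rw [← hAA0, hd]; ring
  have hd'nd : ¬ pi ∣ d' := by
    intro h; apply hA0nd; rw [hA0']; exact (h.pow two_ne_zero).mul_left _
  obtain ⟨s, hs, hs'⟩ := sq9 hd'nd
  obtain ⟨k', j, hk'm, hkj⟩ : ∃ k' j : ℤ, k' ∈ [-1, 0, 1, (2 : ℤ)] ∧ k = k' + 4 * j := by
    have : k % 4 = 0 ∨ k % 4 = 1 ∨ k % 4 = 2 ∨ k % 4 = 3 := by omega
    rcases this with h | h | h | h
    · exact ⟨0, k / 4, by simp, by omega⟩
    · exact ⟨1, k / 4, by simp, by omega⟩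
    · exact ⟨2, k / 4, by simp, by omega⟩
    · exact ⟨-1, k / 4 + 1, by simp, by omega⟩
  have hf : f9 (v * p1 * s) = f9 (-E * p1 + (k' : O) * pi ^ 2 * e2) := by
    rw [map_mul, ← hs', ← map_pow, ← map_mul, ← hA0', f9_eq', hA0d]
    have h4 : (4 : O) = pi ^ 8 * e2 ^ 2 := by decide
    have hkj' : (k : O) = k' + 4 * j := by exact_mod_cast hkj
    refine ⟨pi * e2 ^ 3 * (j + (-tau * kc)), ?_⟩
    rw [hkj']
    linear_combination (j * pi ^ 2 * e2) * h4
  rw [f9_eq] at hf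
  obtain ⟨hk0, rfl⟩ := finC k' hk'm v hv s hs hf
  refine ⟨?_, I * d', ?_⟩
  · rw [hkc, hk, hkj, hk0]; exact ⟨j - 3 * kc, by ring⟩
  · rw [← hA, hd, t0_eq2, onei]; linear_combination E * p1 * pi ^ 2 * d' ^ 2 * I_sq

end Q4

namespace Q4

lemma conj_sub' (x y : O) : conj (x - y) = conj x - conj y := by
  ext <;> simp [conj] <;> ring
lemma conj_int (n : ℤ) : conj (n : O) = n := by
  ext <;> simp [conj]

lemma nu_p2 : ∀ x : ZMod 17, 9 * x ^ 4 - 10 * x ^ 4 = 0 → x = 0 := by decide +kernel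

lemma C2 {e c n : ℤ} (hec : IsCoprime e c) (he : Odd e) (hc : Odd c) (h17 : (17 : ℤ) ∣ e - 3 * c ^ 2)
    (h : e ^ 4 - 2 * e ^ 2 * c ^ 4 + 5 * c ^ 8 = 68 * n ^ 2) (hn : n ≠ 0)
    {k : O} (hk : (e : O) - tau * c ^ 2 = t0 * k ^ 2) :
    ∃ l : O, ¬ pi ∣ l ∧ (e : O) ^ 2 - q * c ^ 4 = 2 * p2 * l ^ 2 := by
  have hc17 := prime17_not hec h17
  obtain ⟨B, hB⟩ : ∃ A : O, A = e ^ 2 - q * c ^ 4 := ⟨_, rfl⟩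
  have hz : (e : O) ^ 4 - 2 * e ^ 2 * c ^ 4 + 5 * c ^ 8 = 68 * n ^ 2 := by exact_mod_cast h
  obtain ⟨v, hv⟩ : ∃ v : O, v = k * conj k := ⟨_, rfl⟩
  have htt : conj tau = -tau := by decide
  have hk' : (e : O) + tau * c ^ 2 = conj t0 * conj k ^ 2 := by
    have := congrArg conj hk
    rw [conj_sub', conj_mul, conj_mul, htt, pow_two, conj_mul, conj_int, conj_int, pow_two, conj_mul] at this
    linear_combination this
  have hAA : (e : O) ^ 2 - (1 + 2 * I) * c ^ 4 = (8 - 2 * I) * v ^ 2 := by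
    have h1 : t0 * conj t0 = 8 - 2 * I := by decide
    rw [← h1, hv]
    linear_combination ((e : O) + tau * c ^ 2) * hk + t0 * k ^ 2 * hk' + (c : O) ^ 4 * tau_sq
  have hprod : ((8 - 2 * I) * v ^ 2) * B = 68 * (n : O) ^ 2 := by
    rw [← hz, ← hAA, hB, q_eq]
    linear_combination - 4 * (c : O) ^ 8 * I_sq
  have h8 : (8 - 2 * I : O) ≠ 0 := by decide
  have hvB : v ^ 2 * B = 2 * p2 * (n : O) ^ 2 := by
    apply mul_left_cancel₀ h8
    have : (8 - 2 * I) * (2 * p2) = (68 : O) := by decide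
    linear_combination hprod - (n : O) ^ 2 * this
  have hn' : (n : O) ≠ 0 := by exact_mod_cast hn
  have hv0 : v ≠ 0 := by
    rintro rfl
    have : (2 * p2 : O) * (n : O) ^ 2 ≠ 0 := mul_ne_zero (by decide) (pow_ne_zero 2 hn')
    apply this; rw [← hvB]; ring
  obtain ⟨y, hy1, hy2⟩ := sq_dvd (x := 2 * p2 * n) (a := v) (b := 2 * p2 * B)
    (by linear_combination (-2 * p2) * hvB) hv0
  have hp2y : p2 ∣ y := prime_p2.dvd_of_dvd_pow (n := 2) (by rw [hy2]; exact ⟨2 * B, by ring⟩)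
  obtain ⟨y, rfl⟩ := hp2y
  have hB1 : p2 * y ^ 2 = 2 * B := by
    apply mul_left_cancel₀ prime_p2.ne_zero; linear_combination hy2
  have hp2B : p2 ∣ B := by
    have : p2 ∣ 2 * B := ⟨_, hB1.symm⟩
    rcases prime_p2.dvd_or_dvd this with h | h
    · rw [p2_dvd] at h; exact absurd h (by decide)
    · exact h
  obtain ⟨B', hB'⟩ := hp2B
  have hB2 : y ^ 2 = (1 + I) ^ 2 * (-I * B') := by
    apply mul_left_cancel₀ prime_p2.ne_zero
    rw [hB1, hB']
    linear_combination (p2 * B') * two_eq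
  have hI1 : (1 + I : O) ≠ 0 := by decide
  obtain ⟨y, rfl, hB3⟩ := sq_dvd hB2 hI1
  -- B = 2 * unit
  obtain ⟨kc, hkc⟩ := sq_odd8 hc
  obtain ⟨ke, hke⟩ := sq_odd8 he
  have hkc' : (c : O) ^ 2 = 1 + 8 * kc := by exact_mod_cast hkc
  have hke' : (e : O) ^ 2 = 1 + 8 * ke := by exact_mod_cast hke
  obtain ⟨X, hX⟩ : ∃ X : O, X = 2 * ke - 4 * q * (kc + 4 * kc ^ 2) := ⟨_, rfl⟩
  have hB4 : B = 2 * (I + 2 * X) := by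
    rw [hX]
    have : (c : O) ^ 4 = (1 + 8 * kc) ^ 2 := by rw [← hkc']; ring
    rw [hB, this, hke', q_eq]; ring
  have hB5 : 2 * (-I * (I + 2 * X)) = p2 * y ^ 2 := by
    rw [hB3]; linear_combination I * hB4 - I * hB'
  have h2y : (1 + I) ^ 2 ∣ p2 * y ^ 2 := by
    rw [← hB5]; exact (show (1 + I) ^ 2 ∣ (2 : O) from ⟨-I, by decide⟩).mul_right _
  have h2y' : (1 + I) ^ 2 ∣ y ^ 2 := by
    have : y ^ 2 = -I * (p2 * y ^ 2) + (1 + I) ^ 2 * (2 * y ^ 2) := by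
      have : (1 : O) = -I * p2 + (1 + I) ^ 2 * 2 := by decide
      linear_combination y ^ 2 * this
    rw [this]; exact dvd_add (h2y.mul_left _) ⟨_, rfl⟩
  rw [IsIntegrallyClosed.pow_dvd_pow_iff two_ne_zero] at h2y'
  obtain ⟨z, rfl⟩ := h2y'
  have hfin : B = 2 * p2 * (I * z) ^ 2 := by
    have h1 : I ^ 2 * B' = - B' := by rw [I_sq]; ring
    have h2 : (1 + I) ^ 2 = 2 * I := by decide
    have h3 : B' = -2 * z ^ 2 := by
      rw [mul_pow, h2] at hB3
      apply mul_left_cancel₀ (show I ≠ 0 by decide)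
      linear_combination hB3
    rw [hB', h3, mul_pow, I_sq]; ring
  refine ⟨I * z, ?_, by rw [← hB, hfin]⟩
  have h1 : p2 * (I * z) ^ 2 = I + 2 * X := by
    apply mul_left_cancel₀ (show (2 : O) ≠ 0 by decide)
    rw [← hB4, hfin]; ring
  intro hz
  have h2 : pi ∣ p2 * (I * z) ^ 2 := (hz.pow two_ne_zero).mul_left _
  rw [h1] at h2
  apply nd_I
  have : pi ∣ 2 := by rw [two_e2]; exact (dvd_pow_self _ (by norm_num)).mul_right _
  exact (dvd_add_left (this.mul_right _)).1 h2

theorem stepC_even {e c n : ℤ} (hec : IsCoprime e c) (he : Odd e) (hc : Odd c)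
    (h17 : (17 : ℤ) ∣ e - 3 * c ^ 2)
    (h : e ^ 4 - 2 * e ^ 2 * c ^ 4 + 5 * c ^ 8 = 68 * n ^ 2) (hn : n ≠ 0) : e = 3 * c ^ 2 := by
  by_contra hne
  obtain ⟨h8, k, hk⟩ := C1 hec he hc h17 h hn
  obtain ⟨l, hl, hB⟩ := C2 hec he hc h17 h hn hk
  have hh0 : e - 3 * c ^ 2 ≠ 0 := sub_ne_zero.2 hne
  obtain ⟨m, hm⟩ := h8
  have hm0 : m ≠ 0 := by rintro rfl; simp at hm; exact hh0 hm
  obtain ⟨m0, hm1, hm2⟩ := (Int.finiteMultiplicity_iff (a := 2) (b := m)).2 ⟨by decide, hm0⟩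
    |>.exists_eq_pow_mul_and_not_dvd
  generalize multiplicity 2 m = j at hm1
  have hm0odd : Odd m0 := by rw [← Int.not_even_iff_odd, even_iff_two_dvd]; exact hm2
  obtain ⟨H, hH⟩ : ∃ H : O, H = k ^ 2 - c ^ 2 := ⟨_, rfl⟩
  have hm' : (e : O) - 3 * c ^ 2 = 8 * m := by exact_mod_cast hm
  have hm1' : (m : O) = 2 ^ j * m0 := by exact_mod_cast hm1
  have ht0 : t0 = pi ^ 2 * (-E * p1) := by decide
  have hepnd : ¬ pi ∣ (-E * p1) := by rw [nd]; decide
  have hp2nd : ¬ pi ∣ p2 := by rw [nd]; decide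
  have h8 : (8 : O) = pi ^ 12 * e2 ^ 3 := by decide
  have h2j : (2 : O) ^ j = pi ^ (4 * j) * e2 ^ j := by rw [two_e2, mul_pow, pow_mul]
  -- h = a power of pi times a unit
  obtain ⟨h0, hh0d⟩ : ∃ h0 : O, h0 = e2 ^ (j + 3) * m0 := ⟨_, rfl⟩
  have hh0nd : ¬ pi ∣ h0 := by rw [hh0d]; exact nd_mul (nd_pow nd_e2 _) (nd_odd hm0odd)
  have hh : (e : O) - 3 * c ^ 2 = pi ^ (4 * j + 12) * h0 := by
    rw [hm', hm1', h2j, h8, hh0d]; ring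
  have htH : t0 * H = pi ^ (4 * j + 12) * h0 := by
    rw [← hh, hH]; rw [t0_eq] at hk ⊢; linear_combination -hk
  have hH0 : H ≠ 0 := by
    rintro h; rw [h, mul_zero] at htH
    exact mul_ne_zero (pp _) (nd_ne hh0nd) htH.symm
  obtain ⟨i, H0, hHi, hH0nd⟩ := strip prime_pi hH0
  have hi : 2 + i = 4 * j + 12 := by
    refine (strip_unique prime_pi (x := (-E * p1) * H0) (y := h0) ?_ (nd_mul hepnd hH0nd) hh0nd).1
    rw [← htH, hHi, ht0]; ring
  obtain rfl : i = 4 * j + 10 := by omega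
  -- main argument, given the right sign
  have main : ∀ l N0 : O, (e : O) ^ 2 - q * c ^ 4 = 2 * p2 * l ^ 2 → ¬ pi ∣ N0 →
      c * k + l = pi ^ 4 * N0 → False := by
    intro l N0 hB hN0 hN
    obtain ⟨g, hg⟩ : ∃ g : O, g = 2 * p2 := ⟨_, rfl⟩
    have hcne : (c : O) ≠ 0 := nd_ne (nd_odd hc)
    have hgg : t0 ^ 2 + 2 * tau * t0 + 4 * I = g := by rw [hg]; decide
    have hgl : g * l ^ 2 = t0 ^ 2 * k ^ 4 + 2 * tau * t0 * k ^ 2 * c ^ 2 + 4 * I * c ^ 4 := by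
      have h1 : tau ^ 2 - q = 4 * I := by decide
      rw [← h1, hg, ← hB]
      linear_combination ((e : O) + tau * c ^ 2 + t0 * k ^ 2) * hk
    have hq := quartic_diff k c (g * l) g 1 (g * t0 ^ 2) (g * (2 * tau * t0)) (g * (4 * I))
      (by linear_combination g * hgl) (by linear_combination -g * hgg) (g * (c * k + l)) H
      (by ring) (by rw [hH]; ring)
    rw [one_mul] at hq
    obtain ⟨W, -, hW⟩ := sq_dvd hq hcne
    have hgpi : g = pi ^ 4 * (e2 * p2) := by rw [hg]; decide
    have hM : g * (c * k + l) = pi ^ 8 * (e2 * p2 * N0) := by rw [hgpi, hN]; ring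
    have hHn : H = pi ^ 8 * (pi ^ (4 * j + 2) * H0) := by rw [hHi]; ring
    rw [hM] at hW
    obtain ⟨n, hn⟩ : ∃ n : O, n = pi ^ (4 * j + 2) * H0 := ⟨_, rfl⟩
    rw [← hn] at hHn
    rw [hHn] at hW
    have hD : D = g * t0 := by rw [hg]; decide
    obtain ⟨w, -, hw⟩ := sq_dvd (a := pi ^ 16) (b := (e2 * p2 * N0) ^ 4 +
      2 * tau * D * (e2 * p2 * N0) ^ 2 * n ^ 2 + 4 * I * D ^ 2 * n ^ 4) (x := W)
      (by rw [hW, hD]; ring) (pp _)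
    exact claim j _ n w H0 (nd_mul (nd_mul nd_e2 hp2nd) hN0) hn hH0nd hw
  -- valuations of N+ and N-
  obtain ⟨kc, hkc⟩ := sq_odd8 hc
  have hkc' : (c : O) ^ 2 = 1 + 8 * kc := by exact_mod_cast hkc
  obtain ⟨Y, hY⟩ : ∃ Y : O, Y = (3 * tau - 5 + I) * c ^ 2 - t0 * 4 * m := ⟨_, rfl⟩
  have hYnd : ¬ pi ∣ Y := by
    intro hd
    have h1 : pi ∣ (3 * tau - 5 + I) * c ^ 2 := by
      have : (3 * tau - 5 + I) * (c : O) ^ 2 = Y + t0 * 4 * m := by rw [hY]; ring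
      rw [this]
      refine dvd_add hd (Dvd.dvd.mul_right (Dvd.dvd.mul_left ?_ _) _)
      exact (pi_dvd _).2 (by decide)
    exact nd_mul (by rw [nd]; decide) (nd_pow (nd_odd hc) 2) h1
  have hNN : D * ((c * k + l) * (c * k - l)) = ((e : O) - 3 * c ^ 2) * (2 * Y) := by
    have hD : D = 2 * p2 * t0 := by decide
    have h1 : D * ((c * k + l) * (c * k - l)) = 2 * p2 * c ^ 2 * ((e : O) - tau * c ^ 2)
        - t0 * (e ^ 2 - q * c ^ 4) := by
      rw [hk, hB, hD]; ring
    have h2 : (e : O) = 3 * c ^ 2 + 8 * m := by linear_combination hm'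
    rw [h1, hY, h2, t0_eq, p2_eq, q_eq]; ring
  have hXne : (c * k + l) * (c * k - l) ≠ 0 := by
    intro h; rw [h, mul_zero, hh] at hNN
    exact mul_ne_zero (mul_ne_zero (pp _) (nd_ne hh0nd)) (mul_ne_zero two_ne_zero (nd_ne hYnd)) hNN.symm
  obtain ⟨S, u, hS, hu⟩ := strip prime_pi hXne
  have hS' : 6 + S = 4 * j + 16 := by
    refine (strip_unique prime_pi (x := D0 * u) (y := h0 * e2 * Y) ?_ (nd_mul nd_D0 hu)
      (nd_mul (nd_mul hh0nd nd_e2) hYnd)).1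
    rw [hS, hh, D_D0, two_e2] at hNN
    linear_combination hNN
  have hune : ¬ pi ∣ -u := by rwa [dvd_neg]
  have hl2 : ¬ pi ∣ e2 * l := nd_mul nd_e2 hl
  have := VAL (f := c * k + l) (g := l - c * k) (S := S) (s := 4) (u := -u) (t := e2 * l)
    (by linear_combination -hS) hune (by linear_combination l * two_e2) hl2 (by omega)
  rcases this with ⟨f0, g0, -, h2, -, h4⟩ | ⟨f0, g0, -, h2, -, h4⟩
  · refine main (-l) (-g0) (by rw [hB]; ring) (by rwa [dvd_neg]) ?_
    linear_combination -h2
  · exact main l g0 hB h4 h2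

end Q4

namespace Q4

def r5 : O →+* ZMod 5 where
  toFun x := x.a + 2 * x.b + 2 * x.c + 4 * x.d
  map_one' := by simp
  map_zero' := by simp
  map_add' x y := by simp; ring
  map_mul' x y := by
    have h5 : (5 : ZMod 5) = 0 := by decide
    simp
    generalize (x.a : ZMod 5) = xa
    generalize (x.b : ZMod 5) = xb
    generalize (x.c : ZMod 5) = xc
    generalize (x.d : ZMod 5) = xd
    generalize (y.a : ZMod 5) = ya
    generalize (y.b : ZMod 5) = yb
    generalize (y.c : ZMod 5) = yc
    generalize (y.d : ZMod 5) = yd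
    linear_combination (-xb * yb - 2 * xb * yd - 2 * xd * yb - xc * yc - 3 * xd * yd) * h5

lemma finD1 : ∀ v ∈ uL, ∀ s ∈ sqL, ¬ V9 (v * p1 * s - (-1)) := by
  decide +kernel
lemma finD2 : ∀ v ∈ uL, ∀ s ∈ sqL, V9 (v * p1 * s - (1 + 2 * tau)) → v = E := by
  decide +kernel
lemma finD5 : ∀ e c n d : ZMod 5, e ^ 4 - 8 * e ^ 2 * c ^ 4 + 80 * c ^ 8 = 17 * n ^ 2 → e = 2 * 1 * d ^ 2 → e = 0 := by
  decide +kernel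

theorem stepC_odd {e c n : ℤ} (hec : IsCoprime e c) (he : Odd e)
    (h17 : (17 : ℤ) ∣ e + 6 * c ^ 2)
    (h : e ^ 4 - 8 * e ^ 2 * c ^ 4 + 80 * c ^ 8 = 17 * n ^ 2) (hn : n ≠ 0)
    (h8 : (Odd c ∧ e % 8 = 1) ∨ (Even c ∧ e % 8 = 7)) : False := by
  have hc17 : ¬ (17 : ℤ) ∣ c := by
    intro hc
    have he : (17 : ℤ) ∣ e := by
      have := dvd_sub h17 ((hc.pow (two_ne_zero)).mul_left 6 : (17 : ℤ) ∣ 6 * c ^ 2)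
      simpa using this
    have := hec.isUnit_of_dvd' he hc
    rw [Int.isUnit_iff] at this; omega
  have hp5 : Prime (5 : ℤ) := Int.prime_iff_natAbs_prime.2 (by norm_num)
  have h5 : ¬ (5 : ℤ) ∣ e := by
    rintro ⟨e', rfl⟩
    have h1 : (5 : ℤ) ∣ 17 * n ^ 2 := by
      rw [← h]; exact ⟨125 * e' ^ 4 - 40 * e' ^ 2 * c ^ 4 + 16 * c ^ 8, by ring⟩
    have h2 : (5 : ℤ) ∣ n := by
      rcases hp5.dvd_or_dvd h1 with h1 | h1
      · norm_num at h1
      · exact hp5.dvd_of_dvd_pow h1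
    obtain ⟨n', rfl⟩ := h2
    have h3 : (5 : ℤ) ∣ c ^ 8 := ⟨17 * n' ^ 2 - 25 * e' ^ 4 + 8 * e' ^ 2 * c ^ 4 - 3 * c ^ 8, by linarith⟩
    have := hec.isUnit_of_dvd' (dvd_mul_right 5 e') (hp5.dvd_of_dvd_pow h3)
    rw [Int.isUnit_iff] at this; omega
  obtain ⟨A, hA⟩ : ∃ A : O, A = e + 2 * tau * c ^ 2 := ⟨_, rfl⟩
  obtain ⟨A', hA'⟩ : ∃ A : O, A = e - 2 * tau * c ^ 2 := ⟨_, rfl⟩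
  obtain ⟨B, hB⟩ : ∃ A : O, A = e ^ 2 - 4 * q * c ^ 4 := ⟨_, rfl⟩
  have hz : (e : O) ^ 4 - 8 * e ^ 2 * c ^ 4 + 80 * c ^ 8 = 17 * n ^ 2 := by exact_mod_cast h
  have hprod : A * (A' * B) = 17 * (n : O) ^ 2 := by
    rw [← hz, hA, hA', hB, q_eq]
    linear_combination (-4 * (c : O) ^ 4 * (e ^ 2 - 4 * (1 - 2 * I) * c ^ 4)) * tau_sq - 64 * (c : O) ^ 8 * I_sq
  have hn' : (n : O) ≠ 0 := by exact_mod_cast hn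
  have h17n : (17 : O) ≠ 0 := by decide
  have hne : A * (A' * B) ≠ 0 := by rw [hprod]; exact mul_ne_zero h17n (pow_ne_zero 2 hn')
  have hA0 : A ≠ 0 := left_ne_zero_of_mul hne
  have hAB0 : A' * B ≠ 0 := right_ne_zero_of_mul hne
  have hpi2 : pi ∣ 2 := by rw [two_e2]; exact (dvd_pow_self _ (by norm_num)).mul_right _
  have hAnd : ¬ pi ∣ A := by
    rw [hA]; intro h
    exact nd_odd he ((dvd_add_left ((hpi2.mul_right _).mul_right _)).1 h)
  have hpA : ∀ p, Prime p → p ∣ A → ¬ p ∣ 2 := by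
    intro p hp h1 h2
    exact hAnd ((hp.associated_of_dvd prime_pi (two_primes hp h2)).dvd'.trans h1)
  have hsc := SCu [p1] A (17 * (A' * B)) (17 * n) (by
      intro s hs; simp at hs; rcases hs with rfl; exact prime_p1) hA0
      (mul_ne_zero (by decide) hAB0) (by linear_combination 17 * hprod) (by
    intro p hp h1 h2
    refine ⟨p1, by simp, ?_⟩
    have hp2 := hpA p hp h1
    have hpc : ¬ p ∣ (c : O) := by
      intro hpc
      refine tauprime hp hec ?_ hpc
      have : (e : O) = A - 2 * tau * c * c := by rw [hA]; ring
      rw [this]; exact dvd_sub h1 (hpc.mul_left _)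
    rcases hp.dvd_or_dvd h2 with h2 | h2
    · obtain ⟨m, hm⟩ := h17
      have hm' : (e : O) + 6 * c ^ 2 = 17 * m := by exact_mod_cast hm
      have h3 : p ∣ 2 * t0 * c ^ 2 := by
        have : 2 * t0 * (c : O) ^ 2 = 17 * m - A := by rw [hA, t0_eq]; linear_combination hm'
        rw [this]; exact dvd_sub (h2.mul_right _) h1
      rcases hp.dvd_or_dvd h3 with h3 | h3
      · rcases hp.dvd_or_dvd h3 with h3 | h3
        · exact (hp2 h3).elim
        · rcases t0_primes hp h3 with h3 | h3
          · exact (hp2 (h3.trans hpi2)).elim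
          · exact h3
      · exact (hpc (hp.dvd_of_dvd_pow h3)).elim
    · exfalso
      rcases hp.dvd_or_dvd h2 with h2 | h2
      · have h3 : p ∣ 2 * e := by
          have : (2 : O) * e = A + A' := by rw [hA, hA']; ring
          rw [this]; exact dvd_add h1 h2
        have h4 : p ∣ 2 * 2 * tau * c ^ 2 := by
          have : (2 : O) * 2 * tau * c ^ 2 = A - A' := by rw [hA, hA']; ring
          rw [this]; exact dvd_sub h1 h2
        rcases hp.dvd_or_dvd h4 with h4 | h4
        · rcases hp.dvd_or_dvd h4 with h4 | h4
          · exact ((hp.dvd_or_dvd h4).elim hp2 hp2)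
          · rcases hp.dvd_or_dvd h3 with h3 | h3
            · exact hp2 h3
            · exact (h5 (five_dvd hp h4 h3)).elim
        · exact (hpc (hp.dvd_of_dvd_pow h4)).elim
      · have h3 : p ∣ (2 ^ 4 * I) * c ^ 4 := by
          have : (2 ^ 4 * I) * (c : O) ^ 4 = B - A * A' := by
            rw [hA, hA', hB, q_eq]; linear_combination -4 * (c : O) ^ 4 * tau_sq
          rw [this]; exact dvd_sub h2 (h1.mul_right _)
        rcases hp.dvd_or_dvd h3 with h3 | h3
        · rcases hp.dvd_or_dvd h3 with h3 | h3
          · exact hp2 (hp.dvd_of_dvd_pow h3)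
          · exact (hp.not_isUnit (isUnit_of_dvd_unit h3 (isUnit_of_nrm (by decide)))).elim
        · exact (hpc (hp.dvd_of_dvd_pow h3)).elim)
  obtain ⟨T, hT, v, hv, d, hd⟩ := hsc
  have hvnd1 : ∀ v ∈ uL, ¬ p1 ∣ v := by
    intro v hv; rw [← r1_zero]; revert v; decide
  have hc1 : r1 (c : O) ≠ 0 := by
    rw [r1_int, Ne, ZMod.intCast_zmod_eq_zero_iff_dvd]; exact_mod_cast hc17
  have he1 : r1 (e : O) = -6 * r1 (c : O) ^ 2 := by
    rw [r1_int, r1_int, ← sub_eq_zero]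
    have := (ZMod.intCast_zmod_eq_zero_iff_dvd (e + 6 * c ^ 2) 17).2 (by exact_mod_cast h17)
    push_cast at this; linear_combination this
  have hT' : T = [] ∨ T = [p1] := by
    have := List.mem_sublists.2 hT
    simpa [List.sublists, or_comm, or_left_comm] using this
  have hTp : T = [p1] := by
    rcases hT' with rfl | rfl
    · exfalso
      simp only [List.prod_nil, mul_one] at hd
      obtain ⟨y, hy⟩ : ∃ y : O, (17 : O) = p1 * y ∧ ¬ p1 ∣ y := by
        refine ⟨conj p1 * p2 * I, by decide, ?_⟩
        rw [← r1_zero]; decide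
      refine odd_val prime_p1 (x := v * (A' * B)) (y := y) (d := d) (n := n) ?_ hy.2 hn' ?_
      · intro h
        rcases prime_p1.dvd_or_dvd h with h | h
        · exact hvnd1 v hv h
        · have hfin : ∀ x : ZMod 17, (-6 * x ^ 2 - 2 * 3 * x ^ 2) * ((-6 * x ^ 2) ^ 2 - 4 * (-7) * x ^ 4) = 0 → x = 0 := by
            decide +kernel
          apply hc1; apply hfin
          rw [← r1_zero, hA', hB] at h
          simp only [map_add, map_mul, map_sub, map_pow, he1, map_ofNat] at h
          have h1 : r1 tau = 3 := by decide
          have h2 : r1 q = -7 := by decide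
          rw [h1, h2] at h; exact h
      · rw [← hy.1, ← hprod, hd]; ring
    · rfl
  subst hTp
  simp only [List.prod_cons, List.prod_nil, mul_one] at hd
  have hdnd : ¬ pi ∣ d := by
    intro h; apply hAnd; rw [hd]; exact (h.pow two_ne_zero).mul_left _
  obtain ⟨s, hs, hs'⟩ := sq9 hdnd
  have hfA : f9 (v * p1 * s) = f9 A := by
    rw [hd, map_mul, ← hs', ← map_pow, ← map_mul]
  have h8' : (8 : O) = pi ^ 9 * (pi ^ 3 * e2 ^ 3) := by decide
  rcases h8 with ⟨hc, h8⟩ | ⟨hc, h8⟩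
  · obtain ⟨kc, hkc⟩ := sq_odd8 hc
    obtain ⟨k, hk⟩ : ∃ k : ℤ, e = 1 + 8 * k := ⟨e / 8, by omega⟩
    have hkc' : (c : O) ^ 2 = 1 + 8 * kc := by exact_mod_cast hkc
    have hk' : (e : O) = 1 + 8 * k := by exact_mod_cast hk
    have hf : f9 A = f9 (1 + 2 * tau) := by
      rw [f9_eq', hA, hkc', hk']
      exact ⟨(pi ^ 3 * e2 ^ 3) * (k + 2 * tau * kc), by linear_combination (k + 2 * tau * kc) * h8'⟩
    rw [← hfA, f9_eq] at hf
    obtain rfl := finD2 v hv s hs hf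
    have h55 := congrArg r5 hd
    rw [hA] at h55
    simp only [map_add, map_mul, map_pow, map_ofNat] at h55
    have h1 : r5 tau = 0 := by decide
    have h2 : r5 E = 2 := by decide
    have h3 : r5 p1 = 1 := by decide
    rw [h1, h2, h3, mul_zero, zero_mul, add_zero] at h55
    have h6 := finD5 (r5 e) (r5 c) (r5 n) (r5 d) (by
      have := congrArg r5 hz
      simpa only [map_add, map_mul, map_pow, map_ofNat, map_sub] using this) h55
    rw [map_intCast, ZMod.intCast_zmod_eq_zero_iff_dvd] at h6
    exact h5 (by exact_mod_cast h6)
  · obtain ⟨kc, hkc⟩ := hc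
    obtain ⟨k, hk⟩ : ∃ k : ℤ, e = -1 + 8 * k := ⟨e / 8 + 1, by omega⟩
    have hkc' : (c : O) = kc + kc := by exact_mod_cast hkc
    have hk' : (e : O) = -1 + 8 * k := by exact_mod_cast hk
    have hf : f9 A = f9 (-1) := by
      rw [f9_eq', hA, hkc', hk']
      exact ⟨(pi ^ 3 * e2 ^ 3) * (k + tau * kc ^ 2), by linear_combination (k + tau * kc ^ 2) * h8'⟩
    rw [← hfA, f9_eq] at hf
    exact finD1 v hv s hs hf
end Q4

namespace Q4

lemma pow_cop {a b c : ℤ} (k : ℕ) (ha : 0 ≤ a) (hab : IsCoprime a b) (h : a * b = c ^ k) :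
    ∃ d, 0 ≤ d ∧ a = d ^ k := by
  obtain ⟨d, hd⟩ := exists_associated_pow_of_mul_eq_pow' hab h
  rw [Int.associated_iff_natAbs] at hd
  refine ⟨d.natAbs, by positivity, ?_⟩
  have : (a.natAbs : ℤ) = a := Int.natAbs_of_nonneg ha
  rw [← this, ← hd, Int.natAbs_pow]; simp

lemma cop_of {x y : ℤ} (h : ∀ p : ℤ, Prime p → p ∣ x → p ∣ y → False) (h0 : x ≠ 0) : IsCoprime x y :=
  isCoprime_of_prime_dvd (fun h => h0 h.1) (fun p hp h1 h2 => h p hp h1 h2)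

lemma cop_no {x y p : ℤ} (h : IsCoprime x y) (hp : Prime p) (h1 : p ∣ x) (h2 : p ∣ y) : False :=
  hp.not_isUnit (h.isUnit_of_dvd' h1 h2)

lemma pyth {x y z : ℤ} (h : x ^ 2 + y ^ 2 = z ^ 2) (hc : IsCoprime x y) (hx : Odd x) (hz : 0 < z) :
    ∃ m n : ℤ, x = m ^ 2 - n ^ 2 ∧ y = 2 * m * n ∧ z = m ^ 2 + n ^ 2 ∧ IsCoprime m n ∧
      ((Even m ∧ Odd n) ∨ (Odd m ∧ Even n)) ∧ 0 ≤ m := by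
  have h' : PythagoreanTriple x y z := by unfold PythagoreanTriple; linarith
  obtain ⟨m, n, h1, h2, h3, h4, h5, h6⟩ := h'.coprime_classification' (Int.isCoprime_iff_gcd_eq_one.1 hc)
    (Int.odd_iff.1 hx) hz
  refine ⟨m, n, h1, h2, h3, Int.isCoprime_iff_gcd_eq_one.2 h4, ?_, h6⟩
  rw [Int.even_iff, Int.odd_iff, Int.even_iff, Int.odd_iff]; exact h5

/-- `z² + s⁴ = r⁴` gives `R⁴ + 4 S⁴ = r²`. -/
lemma D4a {z s r : ℤ} (h : z ^ 2 + s ^ 4 = r ^ 4) (hz : Odd z) (hc : IsCoprime z s) (hs : s ≠ 0) (hr : r ≠ 0) :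
    ∃ R S : ℤ, Odd R ∧ IsCoprime R S ∧ S ≠ 0 ∧ R ^ 4 + 4 * S ^ 4 = r ^ 2 := by
  obtain ⟨m, n, h1, h2, h3, h4, h5, h6⟩ := pyth (x := z) (y := s ^ 2) (z := r ^ 2)
    (by linear_combination h) hc.pow_right hz (by positivity)
  have hs2 : 0 < s ^ 2 := by positivity
  have hm : 0 < m := by
    rcases h6.lt_or_eq with h | h
    · exact h
    · rw [← h] at h2; simp at h2; exact absurd h2 hs
  have hn : 0 < n := by
    rw [h2] at hs2
    exact (pos_iff_pos_of_mul_pos hs2).1 (by positivity)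
  have hse : Even s := by
    have : Even (s ^ 2) := ⟨m * n, by rw [h2]; ring⟩
    exact (Int.even_pow.1 this).1
  obtain ⟨t, ht⟩ := hse
  have key : ∀ m n : ℤ, 0 < m → 0 < n → IsCoprime m n → Odd m → Even n → s ^ 2 = 2 * m * n →
      r ^ 2 = m ^ 2 + n ^ 2 → ∃ R S : ℤ, Odd R ∧ IsCoprime R S ∧ S ≠ 0 ∧ R ^ 4 + 4 * S ^ 4 = r ^ 2 := by
    intro m n hm hn h4 hmo hne h2 h3
    obtain ⟨n', rfl⟩ := hne
    have h7 : m * n' = t ^ 2 := by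
      rw [ht] at h2; linarith
    have hc' : IsCoprime m n' := by
      rw [← two_mul] at h4; exact h4.of_mul_right_right
    obtain ⟨R, hR0, hR⟩ := pow_cop 2 hm.le hc' h7
    obtain ⟨S, hS0, hS⟩ := pow_cop 2 (by omega) hc'.symm (by rw [mul_comm]; exact h7)
    refine ⟨R, S, ?_, ?_, ?_, ?_⟩
    · rw [hR] at hmo; exact (Int.odd_pow' two_ne_zero).1 hmo
    · rw [hR, hS] at hc'; exact (IsCoprime.pow_iff two_pos two_pos).1 hc'
    · rintro rfl; simp at hS; omega
    · rw [h3, hS, hR]; ring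
  rcases h5 with ⟨h5, h5'⟩ | ⟨h5, h5'⟩
  · exact key n m hn hm h4.symm h5' h5 (by rw [h2]; ring) (by rw [h3]; ring)
  · exact key m n hm hn h4 h5 h5' h2 h3

lemma odd_sq_mod {x : ℤ} (h : Odd x) : x ^ 2 % 4 = 1 := by
  obtain ⟨k, hk⟩ := sq_odd8 h; omega
lemma even_sq_mod {x : ℤ} (h : Even x) : x ^ 2 % 4 = 0 := by
  obtain ⟨k, rfl⟩ := h; ring_nf; omega

theorem D4 (N : ℕ) : ∀ R S x : ℤ, x.natAbs ≤ N → Odd R → IsCoprime R S → S ≠ 0 →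
    R ^ 4 + 4 * S ^ 4 = x ^ 2 → False := by
  induction N with
  | zero =>
    intro R S x hx hR hc hS h
    have : x = 0 := by omega
    subst this
    have : 0 < S ^ 4 := by positivity
    nlinarith [sq_nonneg (R ^ 2)]
  | succ N ih =>
    intro R S x hx hR hc hS h
    wlog hx0 : 0 ≤ x generalizing x
    · exact this (-x) (by rwa [Int.natAbs_neg]) (by rw [h]; ring) (by omega)
    have hS4 : 0 < S ^ 2 := by positivity
    have hxp : 0 < x := by
      rcases hx0.lt_or_eq with h0 | h0
      · exact h0
      · rw [← h0] at h; nlinarith [sq_nonneg (R ^ 2)]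
    have hR2 : ¬ (2 : ℤ) ∣ R := by rw [← even_iff_two_dvd, Int.not_even_iff_odd]; exact hR
    have hR2' : IsCoprime (2 : ℤ) R := (Int.prime_two.coprime_iff_not_dvd).2 hR2
    obtain ⟨m, n, h1, h2, h3, h4, h5, h6⟩ := pyth (x := R ^ 2) (y := 2 * S ^ 2) (z := x)
      (by linear_combination h) (IsCoprime.mul_right hR2'.symm.pow_left hc.pow)
      (hR.pow) hxp
    have hmn : m * n = S ^ 2 := by linarith
    have hm : 0 < m := by
      rcases h6.lt_or_eq with h | h
      · exact h
      · rw [← h] at hmn; nlinarith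
    have hn : 0 < n := by
      rw [← hmn] at hS4
      exact (pos_iff_pos_of_mul_pos hS4).1 hm
    obtain ⟨M, hM0, hM⟩ := pow_cop 2 hm.le h4 hmn
    obtain ⟨K, hK0, hK⟩ := pow_cop 2 hn.le h4.symm (by rw [mul_comm]; exact hmn)
    have hMo : Odd m ∧ Even n := by
      rcases h5 with ⟨h5, h5'⟩ | h5
      · have := odd_sq_mod hR
        have := odd_sq_mod h5'
        have := even_sq_mod h5
        omega
      · exact h5
    have hMne : M ≠ 0 := by rintro rfl; simp at hM; omega
    have hKne : K ≠ 0 := by rintro rfl; simp at hK; omega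
    have hRK : IsCoprime R K := by
      refine cop_of (fun p hp hp1 hp2 => ?_) (by rintro rfl; simp at hR)
      have hpn : p ∣ n := by rw [hK]; exact hp2.pow two_ne_zero
      refine cop_no h4 hp ?_ hpn
      apply hp.dvd_of_dvd_pow (n := 2)
      have : m ^ 2 = R * R + n * n := by linarith
      rw [this]; exact dvd_add (hp1.mul_right _) (hpn.mul_right _)
    obtain ⟨R', S', hR', hc', hS', h'⟩ := D4a (z := R) (s := K) (r := M)
      (by rw [h1, hM, hK]; ring) hR hRK hKne hMne
    refine ih R' S' M ?_ hR' hc' hS' h'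
    have : M < x := by
      rw [h3]; nlinarith [hM, hM0]
    omega

lemma split5 {u v b : ℤ} (hu : 0 < u) (hv : 0 < v) (hc : IsCoprime u v) (h : u * v = 5 * b ^ 8) :
    ∃ g d : ℤ, b ^ 4 = g ^ 4 * d ^ 4 ∧ u + v = g ^ 8 + 5 * d ^ 8 ∧ IsCoprime g d := by
  have key : ∀ u v : ℤ, 0 < u → 0 < v → IsCoprime u v → u * v = 5 * b ^ 8 → (5 : ℤ) ∣ v →
      ∃ g d : ℤ, b ^ 4 = g ^ 4 * d ^ 4 ∧ u + v = g ^ 8 + 5 * d ^ 8 ∧ IsCoprime g d := by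
    rintro u v hu hv hc h ⟨w, rfl⟩
    have h' : u * w = b ^ 8 := by linarith
    have hc' : IsCoprime u w := hc.of_mul_right_right
    obtain ⟨g, hg0, hg⟩ := pow_cop 8 hu.le hc' h'
    obtain ⟨d, hd0, hd⟩ := pow_cop 8 (by omega) hc'.symm (by rw [mul_comm]; exact h')
    refine ⟨g, d, ?_, by rw [hg, hd], ?_⟩
    · refine (pow_left_inj₀ (by positivity) (by positivity) two_ne_zero).1 ?_
      rw [hg, hd] at h'; linear_combination -h'
    · rw [hg, hd] at hc'; exact (IsCoprime.pow_iff (by norm_num) (by norm_num)).1 hc'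
  have hp5 : Prime (5 : ℤ) := Int.prime_iff_natAbs_prime.2 (by norm_num)
  rcases hp5.dvd_or_dvd (⟨_, h⟩ : (5 : ℤ) ∣ u * v) with h5 | h5
  · obtain ⟨g, d, h1, h2, h3⟩ := key v u hv hu hc.symm (by rw [mul_comm]; exact h) h5
    exact ⟨g, d, h1, by rw [add_comm, h2], h3⟩
  · exact key u v hu hv hc h h5

/-- a common prime of `u`, `v` with `u v = 5 b⁸` divides `b` -/
lemma five_b {u v b p : ℤ} (h : u * v = 5 * b ^ 8) (hp : Prime p) (h1 : p ∣ u) (h2 : p ∣ v) : p ∣ b := by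
  have hp5 : Prime (5 : ℤ) := Int.prime_iff_natAbs_prime.2 (by norm_num)
  have h3 : p * p ∣ 5 * b ^ 8 := by rw [← h]; exact mul_dvd_mul h1 h2
  rcases hp.dvd_or_dvd ((dvd_mul_right p p).trans h3) with h4 | h4
  · have ha := hp.associated_of_dvd hp5 h4
    have h5 : (5 : ℤ) * 5 ∣ 5 * b ^ 8 := (mul_dvd_mul ha.dvd' ha.dvd').trans h3
    have h6 := Int.dvd_of_mul_dvd_mul_left (by norm_num) h5
    exact h4.trans (hp5.dvd_of_dvd_pow h6)
  · exact hp.dvd_of_dvd_pow h4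

end Q4

namespace Q4

lemma cop2 {x : ℤ} (h : Odd x) : IsCoprime (2 : ℤ) x :=
  (Int.prime_two.coprime_iff_not_dvd).2 (by rw [← even_iff_two_dvd, Int.not_even_iff_odd]; exact h)

lemma pos_of_mul {m n s : ℤ} (hm : 0 ≤ m) (h : m * n = s) (hs : 0 < s) : 0 < m ∧ 0 < n := by
  have h1 : 0 < m := by
    rcases hm.lt_or_eq with h0 | h0
    · exact h0
    · rw [← h0] at h; simp at h; omega
  exact ⟨h1, by rw [← h] at hs; exact (pos_iff_pos_of_mul_pos hs).1 h1⟩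

lemma both_pos {u v : ℤ} (h1 : 0 < u + v) (h2 : 0 < u * v) : 0 < u ∧ 0 < v := by
  rcases pos_and_pos_or_neg_and_neg_of_mul_pos h2 with h | h
  · exact h
  · omega

theorem stepB_odd {e c n : ℤ} (hec : IsCoprime e c) (he : Odd e) (hc0 : c ≠ 0)
    (h : e ^ 4 - 8 * e ^ 2 * c ^ 4 + 80 * c ^ 8 = n ^ 2) : False := by
  wlog hn : 0 ≤ n generalizing n
  · exact this (n := -n) (by rw [h]; ring) (by omega)
  have hc4 : 0 < c ^ 4 := by positivity
  have hnp : 0 < n := by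
    rcases hn.lt_or_eq with h0 | h0
    · exact h0
    · rw [← h0] at h; nlinarith [sq_nonneg (e ^ 2 - 4 * c ^ 4), mul_pos hc4 hc4]
  have hxo : Odd (e ^ 2 - 4 * c ^ 4) := he.pow.sub_even ⟨2 * c ^ 4, by ring⟩
  obtain ⟨m, k, h1, h2, h3, h4, h5, h6⟩ := pyth (x := e ^ 2 - 4 * c ^ 4) (y := 8 * c ^ 4) (z := n)
    (by linear_combination h) (by
      have h8 : (8 : ℤ) * c ^ 4 = 2 ^ 3 * c ^ 4 := by norm_num
      rw [h8]
      refine IsCoprime.mul_right (cop2 hxo).symm.pow_right (IsCoprime.pow_right ?_)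
      refine cop_of (fun p hp hp1 hp2 => ?_) (by intro h; rw [h] at hxo; simp at hxo)
      refine cop_no hec hp (hp.dvd_of_dvd_pow (n := 2) ?_) hp2
      have : e ^ 2 = (e ^ 2 - 4 * c ^ 4) + c * (4 * c ^ 3) := by ring
      rw [this]; exact dvd_add hp1 (hp2.mul_right _)) hxo hnp
  have hmk : m * k = 4 * c ^ 4 := by linarith
  obtain ⟨hm, hk⟩ := pos_of_mul h6 hmk (by positivity)
  have hpar : Odd m ∧ Even k := by
    rcases h5 with ⟨h5, h5'⟩ | h5
    · have := odd_sq_mod he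
      have := odd_sq_mod h5'
      have := even_sq_mod h5
      omega
    · exact h5
  have h4k : (4 : ℤ) ∣ k := by
    have : IsCoprime (4 : ℤ) m := by
      have : (4 : ℤ) = 2 ^ 2 := by norm_num
      rw [this]; exact (cop2 hpar.1).pow_left
    exact this.dvd_of_dvd_mul_left ⟨_, hmk⟩
  obtain ⟨k', rfl⟩ := h4k
  have hmk' : m * k' = c ^ 4 := by linarith
  have h4' : IsCoprime m k' := h4.of_mul_right_right
  obtain ⟨al, hal0, hal⟩ := pow_cop 4 hm.le h4' hmk'
  obtain ⟨be, hbe0, hbe⟩ := pow_cop 4 (by omega) h4'.symm (by rw [mul_comm]; exact hmk')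
  have hcab : c ^ 4 = al ^ 4 * be ^ 4 := by rw [← hmk', hal, hbe]
  have hab : IsCoprime al be := by
    rw [hal, hbe] at h4'; exact (IsCoprime.pow_iff (by norm_num) (by norm_num)).1 h4'
  have halo : Odd al := by
    have := hpar.1; rw [hal] at this; exact (Int.odd_pow' (by norm_num)).1 this
  have hbp : 0 < be := by
    rcases hbe0.lt_or_eq with h0 | h0
    · exact h0
    · rw [← h0] at hbe; simp at hbe; omega
  have hap : 0 < al := by
    rcases hal0.lt_or_eq with h0 | h0
    · exact h0
    · rw [← h0] at hal; simp at hal; omega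
  have hee : e ^ 2 = al ^ 8 + 4 * al ^ 4 * be ^ 4 - 16 * be ^ 8 := by
    rw [hal, hbe] at h1; linear_combination h1 + 4 * hcab
  have hXo : Odd (al ^ 4 + 2 * be ^ 4) := halo.pow.add_even ⟨be ^ 4, by ring⟩
  obtain ⟨u, hu⟩ : ∃ u, al ^ 4 + 2 * be ^ 4 - e = u + u := hXo.sub_odd he
  obtain ⟨v, hv⟩ : ∃ v, al ^ 4 + 2 * be ^ 4 + e = v + v := hXo.add_odd he
  have huv : u * v = 5 * be ^ 8 := by
    have : (u + u) * (v + v) = 4 * (5 * be ^ 8) := by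
      rw [← hu, ← hv]; linear_combination -hee
    linarith
  have hsum : u + v = al ^ 4 + 2 * be ^ 4 := by linarith
  obtain ⟨hup, hvp⟩ := both_pos (u := u) (v := v) (by rw [hsum]; positivity) (by rw [huv]; positivity)
  have huvc : IsCoprime u v := by
    refine cop_of (fun p hp hp1 hp2 => ?_) hup.ne'
    have hpb := five_b huv hp hp1 hp2
    refine cop_no hab hp (hp.dvd_of_dvd_pow (n := 4) ?_) hpb
    have : al ^ 4 = u + v - be * (2 * be ^ 3) := by rw [hsum]; ring
    rw [this]; exact dvd_sub (dvd_add hp1 hp2) (hpb.mul_right _)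
  obtain ⟨g, d, hgd, hs, hgdc⟩ := split5 hup hvp huvc huv
  have hal4 : (g ^ 4 - d ^ 4) ^ 2 + (2 * d ^ 4) ^ 2 = (al ^ 2) ^ 2 := by
    linear_combination hsum - hs + 2 * hgd
  have hd0 : d ≠ 0 := by
    rintro rfl; simp at hgd; omega
  have hgo : Odd (g ^ 4 - d ^ 4) := by
    rw [← Int.not_even_iff_odd]; intro hev
    have h1 : Even ((al ^ 2) ^ 2) := by
      rw [← hal4]; exact (hev.pow_of_ne_zero two_ne_zero).add ⟨2 * d ^ 8, by ring⟩
    exact Int.not_even_iff_odd.2 ((halo.pow).pow) h1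
  obtain ⟨M, N, i1, i2, i3, i4, i5, i6⟩ := pyth hal4 (by
    refine IsCoprime.mul_right (cop2 hgo).symm (IsCoprime.pow_right ?_)
    refine cop_of (fun p hp hp1 hp2 => ?_) (by intro h; rw [h] at hgo; simp at hgo)
    refine cop_no hgdc hp (hp.dvd_of_dvd_pow (n := 4) ?_) hp2
    have : g ^ 4 = (g ^ 4 - d ^ 4) + d * d ^ 3 := by ring
    rw [this]; exact dvd_add hp1 (hp2.mul_right _)) hgo (by positivity)
  have hMN : M * N = d ^ 4 := by linarith
  obtain ⟨hM, hN⟩ := pos_of_mul i6 hMN (by positivity)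
  obtain ⟨mu, hmu0, hmu⟩ := pow_cop 4 hM.le i4 hMN
  obtain ⟨nu, hnu0, hnu⟩ := pow_cop 4 hN.le i4.symm (by rw [mul_comm]; exact hMN)
  refine not_fermat_42 (a := mu ^ 2) (b := nu ^ 2) (c := al) ?_ ?_ ?_
  · apply pow_ne_zero; rintro rfl; simp at hmu; omega
  · apply pow_ne_zero; rintro rfl; simp at hnu; omega
  · rw [i3, hmu, hnu]; ring

theorem stepB_even {e c n : ℤ} (hec : IsCoprime e c) (he : Odd e) (hc : Odd c)
    (h : e ^ 4 - 2 * e ^ 2 * c ^ 4 + 5 * c ^ 8 = 4 * n ^ 2) : e ^ 2 = 1 ∧ c ^ 2 = 1 := by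
  wlog hn : 0 ≤ n generalizing n
  · exact this (n := -n) (by rw [h]; ring) (by omega)
  have hc0 : c ≠ 0 := by rintro rfl; simp at hc
  have hc4 : 0 < c ^ 4 := by positivity
  have hnp : 0 < n := by
    rcases hn.lt_or_eq with h0 | h0
    · exact h0
    · rw [← h0] at h; nlinarith [sq_nonneg (e ^ 2 - c ^ 4), mul_pos hc4 hc4]
  obtain ⟨y, hy⟩ : ∃ y, e ^ 2 - c ^ 4 = y + y := he.pow.sub_odd hc.pow
  obtain ⟨P, Q, h1, h2, h3, h4, h5, h6⟩ := pyth (x := c ^ 4) (y := y) (z := n)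
    (by
      have : 4 * ((c ^ 4) ^ 2 + y ^ 2) = 4 * n ^ 2 := by
        rw [← h]; linear_combination (-(e ^ 2 - c ^ 4) - (y + y)) * hy
      linarith) (by
      refine IsCoprime.pow_left ?_
      refine cop_of (fun p hp hp1 hp2 => ?_) hc0
      refine cop_no hec hp (hp.dvd_of_dvd_pow (n := 2) ?_) hp1
      have : e ^ 2 = y * 2 + c * c ^ 3 := by linarith
      rw [this]; exact dvd_add (hp2.mul_right _) (hp1.mul_right _)) hc.pow hnp
  have hPQ : (P + Q) * (P - Q) = c ^ 4 := by rw [h1]; ring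
  have hPp : 0 < P := by
    rcases h6.lt_or_eq with h0 | h0
    · exact h0
    · rw [← h0] at h1; nlinarith [sq_nonneg Q]
  obtain ⟨hp, hm⟩ := both_pos (u := P + Q) (v := P - Q) (by linarith) (by rw [hPQ]; exact hc4)
  have hPQo : Odd (P + Q) := by
    rcases h5 with ⟨h5, h5'⟩ | ⟨h5, h5'⟩
    · exact h5.add_odd h5'
    · exact h5.add_even h5'
  have hPQo' : Odd (P - Q) := by
    have : P - Q = P + Q - (Q + Q) := by ring
    rw [this]; exact hPQo.sub_even ⟨Q, rfl⟩
  have hPQc : IsCoprime (P + Q) (P - Q) := by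
    refine cop_of (fun p hp hp1 hp2 => ?_) hp.ne'
    have hP2 : p ∣ 2 * P := by
      have := dvd_add hp1 hp2; ring_nf at this; rwa [mul_comm] at this
    have hQ2 : p ∣ 2 * Q := by
      have := dvd_sub hp1 hp2; ring_nf at this; rwa [mul_comm] at this
    have hp2' : ¬ p ∣ 2 := fun h => cop_no (cop2 hPQo) hp h hp1
    exact cop_no h4 hp ((hp.dvd_or_dvd hP2).resolve_left hp2') ((hp.dvd_or_dvd hQ2).resolve_left hp2')
  obtain ⟨al, hal0, hal⟩ := pow_cop 4 hp.le hPQc hPQ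
  obtain ⟨be, hbe0, hbe⟩ := pow_cop 4 hm.le hPQc.symm (by rw [mul_comm]; exact hPQ)
  have hcab : c ^ 4 = al ^ 4 * be ^ 4 := by rw [← hPQ, hal, hbe]
  have hab : IsCoprime al be := by
    rw [hal, hbe] at hPQc; exact (IsCoprime.pow_iff (by norm_num) (by norm_num)).1 hPQc
  have halo : Odd al := by
    have := hPQo; rw [hal] at this; exact (Int.odd_pow' (by norm_num)).1 this
  have hbeo : Odd be := by
    have := hPQo'; rw [hbe] at this; exact (Int.odd_pow' (by norm_num)).1 this
  have hap : 0 < al := by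
    rcases hal0.lt_or_eq with h0 | h0
    · exact h0
    · rw [← h0] at halo; simp at halo
  have hbp : 0 < be := by
    rcases hbe0.lt_or_eq with h0 | h0
    · exact h0
    · rw [← h0] at hbeo; simp at hbeo
  have hee : e ^ 2 = al ^ 8 + al ^ 4 * be ^ 4 - be ^ 8 := by
    have : al ^ 8 - be ^ 8 = (P + Q) ^ 2 - (P - Q) ^ 2 := by rw [hal, hbe]; ring
    linear_combination hy + 2 * h2 + hcab - this
  obtain ⟨u, hu⟩ : ∃ u, u = 2 * al ^ 4 + be ^ 4 - 2 * e := ⟨_, rfl⟩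
  obtain ⟨v, hv⟩ : ∃ v, v = 2 * al ^ 4 + be ^ 4 + 2 * e := ⟨_, rfl⟩
  have huo : Odd u := by
    have : u = be ^ 4 + 2 * (al ^ 4 - e) := by rw [hu]; ring
    rw [this]; exact hbeo.pow.add_even (even_two_mul _)
  have huv : u * v = 5 * be ^ 8 := by
    rw [hu, hv]; linear_combination -4 * hee
  have hsum : u + v = 2 * (2 * al ^ 4 + be ^ 4) := by rw [hu, hv]; ring
  obtain ⟨hup, hvp⟩ := both_pos (u := u) (v := v) (by rw [hsum]; positivity) (by rw [huv]; positivity)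
  have huvc : IsCoprime u v := by
    refine cop_of (fun p hp hp1 hp2 => ?_) hup.ne'
    have hpb := five_b huv hp hp1 hp2
    have hp2' : ¬ p ∣ 2 := fun h => cop_no (cop2 huo) hp h hp1
    refine cop_no hab hp (hp.dvd_of_dvd_pow (n := 4) ?_) hpb
    have h4a : p ∣ 2 * (2 * al ^ 4) := by
      have : 2 * (2 * al ^ 4) = u + v - be * (2 * be ^ 3) := by rw [hsum]; ring
      rw [this]; exact dvd_sub (dvd_add hp1 hp2) (hpb.mul_right _)
    exact (hp.dvd_or_dvd ((hp.dvd_or_dvd h4a).resolve_left hp2')).resolve_left hp2'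
  obtain ⟨g, d, hgd, hs, hgdc⟩ := split5 hup hvp huvc huv
  have hgdo : Odd g ∧ Odd d := by
    have h1 : Odd (g ^ 4 * d ^ 4) := by rw [← hgd]; exact hbeo.pow
    rw [Int.odd_mul] at h1
    exact ⟨(Int.odd_pow' (by norm_num)).1 h1.1, (Int.odd_pow' (by norm_num)).1 h1.2⟩
  obtain ⟨w, hw⟩ : ∃ w, g ^ 4 - d ^ 4 = w + w := hgdo.1.pow.sub_odd hgdo.2.pow
  have hal4 : (d ^ 4) ^ 2 + w ^ 2 = (al ^ 2) ^ 2 := by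
    have : 4 * ((d ^ 4) ^ 2 + w ^ 2) = 4 * (al ^ 2) ^ 2 := by
      linear_combination (-(g ^ 4 - d ^ 4) - (w + w)) * hw - hs + hsum + 2 * hgd
    linarith
  have hd0 : d ≠ 0 := by
    rintro rfl; simp at hgd; omega
  have hdw : IsCoprime d w := by
    refine cop_of (fun p hp hp1 hp2 => ?_) hd0
    refine cop_no hgdc hp (hp.dvd_of_dvd_pow (n := 4) ?_) hp1
    have : g ^ 4 = w * 2 + d * d ^ 3 := by linarith
    rw [this]; exact dvd_add (hp2.mul_right _) (hp1.mul_right _)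
  obtain ⟨r, s, i1, i2, i3, i4, i5, i6⟩ := pyth hal4 hdw.pow_left hgdo.2.pow (by positivity)
  have hrs : r ^ 4 - s ^ 4 = (al * d ^ 2) ^ 2 := by
    linear_combination (-(r ^ 2 + s ^ 2)) * i1 - d ^ 4 * i3
  by_cases hs0 : s = 0
  · rw [hs0] at i2
    have hw0 : w = 0 := by rw [i2]; ring
    rw [hw0] at hdw hw
    have hd1 : d ^ 2 = 1 := by
      rw [isCoprime_zero_right, Int.isUnit_iff] at hdw
      rcases hdw with rfl | rfl <;> norm_num
    have hd4 : d ^ 4 = 1 := by rw [show d ^ 4 = (d ^ 2) ^ 2 by ring, hd1]; norm_num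
    have hg4 : g ^ 4 = 1 := by linarith
    have hb4 : be ^ 4 = 1 := by rw [hgd, hg4, hd4]; norm_num
    have ha4 : al ^ 4 = 1 := by
      have : al ^ 4 = (d ^ 4) ^ 2 + w ^ 2 := by rw [hal4]; ring
      rw [this, hd4, hw0]; norm_num
    constructor
    · rw [hee, show al ^ 8 = (al ^ 4) ^ 2 by ring, show be ^ 8 = (be ^ 4) ^ 2 by ring, ha4, hb4]; norm_num
    · have : c ^ 4 = 1 := by rw [hcab, ha4, hb4]; norm_num
      refine (pow_left_inj₀ (by positivity) (by positivity) two_ne_zero).1 ?_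
      rw [← pow_mul]; simpa using this
  · exfalso
    have hso : Odd r ∧ Even s := by
      rcases i5 with ⟨h5, h5'⟩ | h5
      · have := odd_sq_mod (hgdo.2.pow (n := 2))
        have := odd_sq_mod h5'
        have := even_sq_mod h5
        have : d ^ 4 = (d ^ 2) ^ 2 := by ring
        omega
      · exact h5
    have hr0 : r ≠ 0 := by rintro rfl; simp at hso
    obtain ⟨R, S, j1, j2, j3, j4⟩ := D4a (z := al * d ^ 2) (s := s) (r := r) (by linear_combination -hrs)
      (halo.mul hgdo.2.pow) (by
        refine cop_of (fun p hp hp1 hp2 => ?_) (mul_ne_zero hap.ne' (pow_ne_zero 2 hd0))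
        refine cop_no i4 hp (hp.dvd_of_dvd_pow (n := 4) ?_) hp2
        have : r ^ 4 = (al * d ^ 2) * (al * d ^ 2) + s * s ^ 3 := by linear_combination hrs
        rw [this]; exact dvd_add (hp1.mul_right _) (hp2.mul_right _)) hs0 hr0
    exact D4 _ R S r le_rfl j1 j2 j3 j4

end Q4

namespace Q4

lemma SQ {x y z : ℤ} (hx : 0 < x) (hy : 0 < y) (h : x * y = z ^ 2) :
    ∃ g r s : ℤ, 0 < g ∧ x = g * r ^ 2 ∧ y = g * s ^ 2 := by
  have hg : 0 < Int.gcd x y := Int.gcd_pos_of_ne_zero_left _ hx.ne'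
  obtain ⟨x', y', hc, hx', hy'⟩ := Int.exists_gcd_one hg
  generalize hgg : (Int.gcd x y : ℤ) = g at hx' hy'
  have hgp : 0 < g := by rw [← hgg]; exact_mod_cast hg
  have hx0 : 0 < x' := by rw [hx'] at hx; exact pos_of_mul_pos_left hx hgp.le
  have hy0 : 0 < y' := by rw [hy'] at hy; exact pos_of_mul_pos_left hy hgp.le
  have h1 : z ^ 2 = g ^ 2 * (x' * y') := by rw [← h, hx', hy']; ring
  have h2 : g ∣ z := by
    rw [← Int.pow_dvd_pow_iff two_ne_zero]; exact ⟨_, h1⟩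
  obtain ⟨z', rfl⟩ := h2
  have h3 : x' * y' = z' ^ 2 := by
    apply mul_left_cancel₀ (pow_ne_zero 2 hgp.ne'); rw [← h1]; ring
  have hc' := Int.isCoprime_iff_gcd_eq_one.2 hc
  obtain ⟨r, -, hr⟩ := pow_cop 2 hx0.le hc' h3
  obtain ⟨s, -, hs⟩ := pow_cop 2 hy0.le hc'.symm (by rw [mul_comm]; exact h3)
  exact ⟨g, r, s, hgp, by rw [hx', hr]; ring, by rw [hy', hs]; ring⟩

lemma g289 {a b g : ℤ} (hab : IsCoprime a b) (hgo : Odd g) (hF : g ∣ 4 * b ^ 3 - a ^ 3)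
    (hG : g ∣ (a ^ 2 - 4 * a * b) ^ 2 + 64 * b ^ 4) : g ∣ 289 := by
  have hgb : IsCoprime g b := by
    refine cop_of (fun p hp h1 h2 => ?_) (by rintro rfl; simp at hgo)
    refine cop_no hab hp (hp.dvd_of_dvd_pow (n := 3) ?_) h2
    have : a ^ 3 = b * (4 * b ^ 2) - (4 * b ^ 3 - a ^ 3) := by ring
    rw [this]; exact dvd_sub (h2.mul_right _) (h1.trans hF)
  have hg4 : IsCoprime g 4 := by
    have : (4 : ℤ) = 2 ^ 2 := by norm_num
    rw [this]; exact (cop2 hgo).symm.pow_right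
  have h1 : g ∣ (4 * b ^ 2) * (4 * a ^ 2 + a * b + 8 * b ^ 2) := by
    have : (4 * b ^ 2) * (4 * a ^ 2 + a * b + 8 * b ^ 2) = ((a ^ 2 - 4 * a * b) ^ 2 + 64 * b ^ 4)
      + (4 * b ^ 3 - a ^ 3) * (a - 8 * b) := by ring
    rw [this]; exact dvd_add hG (hF.mul_right _)
  have h2 := (IsCoprime.mul_right hg4 hgb.pow_right : IsCoprime g (4 * b ^ 2)).dvd_of_dvd_mul_left h1
  have h3 : g ∣ (4 * b ^ 4) * 289 := by
    have : (4 * b ^ 4) * 289 = (4 * a ^ 2 + a * b + 8 * b ^ 2) * (48 * b ^ 2 + 56 * a * b - 31 * a ^ 2)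
      - (4 * b ^ 3 - a ^ 3) * (124 * a - 193 * b) := by ring
    rw [this]; exact dvd_sub (h2.mul_right _) (hF.mul_right _)
  exact (IsCoprime.mul_right hg4 hgb.pow_right : IsCoprime g (4 * b ^ 4)).dvd_of_dvd_mul_left h3

lemma fin17 : ∀ a b : ZMod 17, 4 * b ^ 3 - a ^ 3 = 0 → (a ^ 2 - 4 * a * b) ^ 2 + 64 * b ^ 4 = 0 →
    a + 4 * b = 0 := by decide +kernel

lemma div289 {g : ℤ} (hg : 0 < g) (h : g ∣ 289) : g = 1 ∨ g = 17 ∨ g = 289 := by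
  lift g to ℕ using hg.le
  have h1 : g ∣ 17 ^ 2 := by
    have : ((g : ℕ) : ℤ) ∣ ((17 ^ 2 : ℕ) : ℤ) := by simpa using h
    exact_mod_cast this
  obtain ⟨m, hm, rfl⟩ := (Nat.dvd_prime_pow (by norm_num)).1 h1
  interval_cases m <;> simp

/-- Splitting off the square class, which must be that of `1` or `17`. -/
lemma SQ17 {x y z a b : ℤ} (hx : 0 < x) (hy : 0 < y) (h : x * y = z ^ 2) (hab : IsCoprime a b)
    (hxo : Odd x) (hF : x ∣ 4 * b ^ 3 - a ^ 3)
    (hG : y ∣ (a ^ 2 - 4 * a * b) ^ 2 + 64 * b ^ 4) :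
    ∃ d r s : ℤ, (d = 1 ∨ (d = 17 ∧ (17 : ℤ) ∣ a + 4 * b)) ∧ x = d * r ^ 2 ∧ y = d * s ^ 2 := by
  obtain ⟨g, r, s, hg, h1, h2⟩ := SQ hx hy h
  have hgo : Odd g := by rw [h1] at hxo; exact (Int.odd_mul.1 hxo).1
  have hgF : g ∣ 4 * b ^ 3 - a ^ 3 := (Dvd.intro _ h1.symm).trans hF
  have hgG : g ∣ (a ^ 2 - 4 * a * b) ^ 2 + 64 * b ^ 4 := (Dvd.intro _ h2.symm).trans hG
  rcases div289 hg (g289 hab hgo hgF hgG) with rfl | rfl | rfl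
  · exact ⟨1, r, s, Or.inl rfl, h1, h2⟩
  · refine ⟨17, r, s, Or.inr ⟨rfl, ?_⟩, h1, h2⟩
    have e1 := (ZMod.intCast_zmod_eq_zero_iff_dvd _ 17).2 hgF
    have e2 := (ZMod.intCast_zmod_eq_zero_iff_dvd _ 17).2 hgG
    have := fin17 (a : ZMod 17) (b : ZMod 17) (by push_cast at e1; exact e1)
      (by push_cast at e2; exact e2)
    exact (ZMod.intCast_zmod_eq_zero_iff_dvd _ 17).1 (by push_cast; exact this)
  · exact ⟨1, 17 * r, 17 * s, Or.inl rfl, by rw [h1]; ring, by rw [h2]; ring⟩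

end Q4

namespace Q4

lemma int_odd {a c w : ℤ} (hac : IsCoprime a c) (hc : c ≠ 0) (ha : Odd a)
    (hF : 0 < 4 * c ^ 6 - a ^ 3)
    (h : (4 * c ^ 6 - a ^ 3) * ((a ^ 2 - 4 * a * c ^ 2) ^ 2 + 64 * c ^ 8) = w ^ 2) : False := by
  have hG : 0 < (a ^ 2 - 4 * a * c ^ 2) ^ 2 + 64 * c ^ 8 := by positivity
  have hFo : Odd (4 * c ^ 6 - a ^ 3) := by
    have : Odd (a ^ 3) := ha.pow
    refine Even.sub_odd ?_ this
    exact ⟨2 * c ^ 6, by ring⟩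
  obtain ⟨d, r, s, hd, h1, h2⟩ := SQ17 (b := c ^ 2) hF hG h hac.pow_right hFo
    (dvd_of_eq (by ring)) (dvd_of_eq (by ring))
  have hec : IsCoprime (a - 2 * c ^ 2) c := by
    have := (IsCoprime.add_mul_right_left_iff (x := a) (y := c) (z := -2 * c)).2 hac
    ring_nf at this ⊢; exact this
  have heo : Odd (a - 2 * c ^ 2) := ha.sub_even ⟨c ^ 2, by ring⟩
  rcases hd with rfl | ⟨rfl, h17⟩
  · exact stepB_odd (n := s) hec heo hc (by linear_combination h2)
  · have hs : s ≠ 0 := by rintro rfl; simp at h2; exact hG.ne' h2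
    have hro : Odd r := by
      rw [h1] at hFo
      have := (Int.odd_mul.1 hFo).2
      exact (Int.odd_pow' (by norm_num)).1 this
    refine stepC_odd (n := s) hec heo ?_ (by linear_combination h2) hs ?_
    · obtain ⟨k, hk⟩ := h17
      exact ⟨k, by linear_combination hk⟩
    · obtain ⟨k, hk⟩ := sq_odd8 hro
      obtain ⟨m, hm⟩ := sq_odd8 ha
      have h3 : a * (1 + 8 * m) = 4 * c ^ 6 - 17 * (1 + 8 * k) := by
        rw [← hm, ← hk]; linear_combination -h1
      rcases Int.even_or_odd c with hce | hco
      · right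
        refine ⟨hce, ?_⟩
        obtain ⟨c', rfl⟩ := hce
        have h4 : a = 8 * (32 * c' ^ 6 - 17 * k - a * m) - 17 := by linear_combination h3
        have h5 : a - 2 * (c' + c') ^ 2 = 8 * (32 * c' ^ 6 - 17 * k - a * m - c' ^ 2) - 17 := by
          linear_combination h4
        omega
      · left
        refine ⟨hco, ?_⟩
        obtain ⟨n, hn⟩ := sq_odd8 hco
        have h4 : a - 2 * c ^ 2 = 8 * (4 * (3 * n + 24 * n ^ 2 + 64 * n ^ 3) - 17 * k - a * m - 2 * n)
            - 15 := by
          have : c ^ 6 = (1 + 8 * n) ^ 3 := by rw [← hn]; ring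
          rw [this] at h3
          linear_combination h3 - 2 * hn
        omega

lemma int_even {a c w : ℤ} (hac : IsCoprime (2 * a) c) (hco : Odd c) (ha0 : a ≠ 0)
    (hF : 0 < c ^ 6 - 2 * a ^ 3)
    (h : (c ^ 6 - 2 * a ^ 3) * ((a ^ 2 - 2 * a * c ^ 2) ^ 2 + 4 * c ^ 8) = w ^ 2) :
    a = - 2 * c ^ 2 := by
  have hc : c ≠ 0 := by rintro rfl; simp at hco
  have hG : 0 < (a ^ 2 - 2 * a * c ^ 2) ^ 2 + 4 * c ^ 8 := by positivity
  have hFo : Odd (c ^ 6 - 2 * a ^ 3) := (hco.pow).sub_even ⟨a ^ 3, by ring⟩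
  obtain ⟨d, r, s, hd, h1, h2⟩ := SQ17 (a := 2 * a) (b := c ^ 2) hF hG h hac.pow_right hFo
    ⟨4, by ring⟩ ⟨16, by ring⟩
  have hro : Odd r := by
    rw [h1] at hFo
    exact (Int.odd_pow' (by norm_num)).1 (Int.odd_mul.1 hFo).2
  have hae : Even a := by
    by_contra hao
    rw [Int.not_even_iff_odd] at hao
    obtain ⟨k, hk⟩ := sq_odd8 hro
    obtain ⟨n, hn⟩ := sq_odd8 hco
    obtain ⟨m, hm⟩ := sq_odd8 hao
    have h6 : c ^ 6 = (1 + 8 * n) ^ 3 := by rw [← hn]; ring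
    have h7 : a ^ 3 = a * (1 + 8 * m) := by rw [← hm]; ring
    rw [h6, h7, hk] at h1
    obtain ⟨q, hq⟩ := hao
    rcases hd with rfl | ⟨rfl, -⟩
    · have : 8 * (3 * n + 24 * n ^ 2 + 64 * n ^ 3 - 2 * a * m - k) = 2 * a := by
        linear_combination h1
      omega
    · have : 8 * (3 * n + 24 * n ^ 2 + 64 * n ^ 3 - 2 * a * m - 17 * k - 2) = 2 * a := by
        linear_combination h1
      omega
  obtain ⟨a, rfl⟩ := hae
  have hec : IsCoprime (c ^ 2 - 2 * a) c := by
    have h0 : IsCoprime (2 * a) c := by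
      have : IsCoprime (2 * (2 * a)) c := by convert hac using 1; ring
      exact this.of_mul_left_right
    have := (IsCoprime.add_mul_right_left_iff (x := -(2 * a)) (y := c) (z := c)).2 h0.neg_left
    ring_nf at this ⊢; exact this
  have heo : Odd (c ^ 2 - 2 * a) := (hco.pow).sub_even ⟨a, by ring⟩
  have hse : Even s := by
    by_contra hso
    rw [Int.not_even_iff_odd] at hso
    obtain ⟨k, hk⟩ := sq_odd8 hso
    rw [hk] at h2
    rcases hd with rfl | ⟨rfl, -⟩
    · have : 2 * (2 * ((2 * a ^ 2 - 2 * a * c ^ 2) ^ 2 + c ^ 8 - 2 * k)) = 1 := by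
        linear_combination h2
      omega
    · have : 2 * (2 * ((2 * a ^ 2 - 2 * a * c ^ 2) ^ 2 + c ^ 8 - 2 * 17 * k)) = 17 := by
        linear_combination h2
      omega
  obtain ⟨s, rfl⟩ := hse
  rcases hd with rfl | ⟨rfl, h17⟩
  · exfalso
    obtain ⟨he, hc2⟩ := stepB_even (n := s) hec heo hco (by linear_combination h2)
    rw [hc2] at he
    have h6 : c ^ 6 = 1 := by
      have : c ^ 6 = (c ^ 2) ^ 3 := by ring
      rw [this, hc2]; norm_num
    have : a * (a - 1) = 0 := by linarith
    rcases mul_eq_zero.1 this with h0 | h0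
    · exact ha0 (by rw [h0]; rfl)
    · have : a = 1 := by linarith
      rw [h6, this] at hF; norm_num at hF
  · have hs : s ≠ 0 := by rintro rfl; simp at h2; apply hG.ne'; simpa using h2
    have := stepC_even (n := s) hec heo hco (by
      obtain ⟨k, hk⟩ := h17
      have : (17 : ℤ) ∣ 2 * (c ^ 2 - 2 * a - 3 * c ^ 2) := ⟨-k, by linear_combination -hk⟩
      omega) (by linear_combination h2) hs
    linarith

lemma int_main {a b w : ℤ} (hab : IsCoprime a b) (hb : 0 < b) (ha0 : a ≠ 0)
    (h : b * ((4 * b ^ 3 - a ^ 3) * ((a ^ 2 - 4 * a * b) ^ 2 + 64 * b ^ 4)) = w ^ 2) :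
    a = - 4 * b := by
  have hcop : IsCoprime b ((4 * b ^ 3 - a ^ 3) * ((a ^ 2 - 4 * a * b) ^ 2 + 64 * b ^ 4)) := by
    apply IsCoprime.mul_right
    · have := (IsCoprime.add_mul_left_right_iff (x := b) (y := - a ^ 3) (z := 4 * b ^ 2)).2
        (hab.symm.pow_right.neg_right)
      ring_nf at this ⊢; exact this
    · have := (IsCoprime.add_mul_left_right_iff (x := b) (y := a ^ 4)
        (z := -8 * a ^ 3 + 16 * a ^ 2 * b + 64 * b ^ 3)).2 (hab.symm.pow_right)
      ring_nf at this ⊢; exact this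
  have hG : 0 < (a ^ 2 - 4 * a * b) ^ 2 + 64 * b ^ 4 := by positivity
  have hFG : 0 ≤ (4 * b ^ 3 - a ^ 3) * ((a ^ 2 - 4 * a * b) ^ 2 + 64 * b ^ 4) := by
    by_contra! hn
    nlinarith [mul_pos hb (neg_pos.2 hn), sq_nonneg w]
  obtain ⟨c, hc0, hbc⟩ := pow_cop 2 hb.le hcop h
  obtain ⟨w', -, hw⟩ := pow_cop 2 hFG hcop.symm (by rw [mul_comm]; exact h)
  have hF0 : 0 ≤ 4 * b ^ 3 - a ^ 3 := by
    by_contra! hn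
    nlinarith [mul_pos hG (neg_pos.2 hn)]
  have hF : 0 < 4 * b ^ 3 - a ^ 3 := by
    rcases hF0.lt_or_eq with h1 | h1
    · exact h1
    exfalso
    have h2 : IsUnit b := by
      have h3 : IsCoprime b (a ^ 3) := hab.symm.pow_right
      exact h3.isUnit_of_dvd ⟨4 * b ^ 2, by linear_combination h1⟩
    have hb1 : b = 1 := by
      rcases Int.isUnit_iff.1 h2 with h3 | h3
      · exact h3
      · omega
    rw [hb1] at h1
    have h4 : a ^ 3 = 4 := by linarith
    have h5 : a < 2 := by by_contra! h5; nlinarith [pow_le_pow_left₀ (by norm_num : (0:ℤ) ≤ 2) h5 3]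
    have h6 : 0 < a := by by_contra! h6; nlinarith [sq_nonneg a, mul_nonneg (neg_nonneg.2 h6) (sq_nonneg a)]
    interval_cases a; norm_num at h4
  subst hbc
  have hcz : c ≠ 0 := by rintro rfl; simp at hb
  have hac : IsCoprime a c := (IsCoprime.pow_right_iff (by norm_num)).1 hab
  rcases Int.even_or_odd' a with ⟨a', rfl | ha⟩
  · have hco : Odd c := by
      have h1 : IsCoprime 2 c := hac.of_mul_left_left
      by_contra hce
      rw [Int.not_odd_iff_even] at hce
      have := h1.isUnit_of_dvd hce.two_dvd
      rw [Int.isUnit_iff] at this; omega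
    have hw8 : (8 : ℤ) ∣ w' := by
      rw [← Int.pow_dvd_pow_iff two_ne_zero, ← hw]
      exact ⟨(c ^ 6 - 2 * a' ^ 3) * ((a' ^ 2 - 2 * a' * c ^ 2) ^ 2 + 4 * c ^ 8), by ring⟩
    obtain ⟨w1, rfl⟩ := hw8
    have := int_even (w := w1) hac hco (by rintro rfl; simp at ha0) (by nlinarith) (by
      apply mul_left_cancel₀ (by norm_num : (64 : ℤ) ≠ 0)
      linear_combination hw)
    rw [this]; ring
  · exact (int_odd (w := w') hac hcz ⟨a', ha⟩ (by convert hF using 1; ring)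
      (by linear_combination hw)).elim

lemma rat_main {v z : ℚ} (hv : v ≠ 0) (h : z ^ 2 = (4 - v ^ 3) * ((v ^ 2 - 4 * v) ^ 2 + 64)) :
    v = -4 := by
  have hb : (0 : ℤ) < v.den := by exact_mod_cast v.den_pos
  have hbq : ((v.den : ℤ) : ℚ) ≠ 0 := by exact_mod_cast hb.ne'
  have hcop : IsCoprime v.num (v.den : ℤ) := by
    rw [Int.isCoprime_iff_gcd_eq_one]; exact v.reduced
  have hvq : v = (v.num : ℚ) / ((v.den : ℤ) : ℚ) := by
    rw [Int.cast_natCast]; exact (Rat.num_div_den v).symm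
  have hn0 : v.num ≠ 0 := Rat.num_ne_zero.2 hv
  generalize v.num = a at *
  generalize (v.den : ℤ) = b at *
  have hsq : (((b * ((4 * b ^ 3 - a ^ 3) * ((a ^ 2 - 4 * a * b) ^ 2 + 64 * b ^ 4)) : ℤ)) : ℚ)
      = (z * b ^ 4) ^ 2 := by
    rw [mul_pow, h, hvq]; push_cast; field_simp
  have hsq2 : IsSquare ((b * ((4 * b ^ 3 - a ^ 3) * ((a ^ 2 - 4 * a * b) ^ 2 + 64 * b ^ 4)) : ℤ)) := by
    rw [← Rat.isSquare_intCast_iff, hsq]; exact ⟨_, sq _⟩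
  obtain ⟨w, hw⟩ := hsq2
  have := int_main hcop hb hn0 (hw.trans (sq w).symm)
  rw [hvq, this]; push_cast; field_simp

end Q4

namespace Q4

lemma curve_red {s y : ℚ}
    (h : y ^ 6 + (s ^ 3 - s ^ 2 - 9 * s + 45) * y ^ 4
      - (s - 3) * (s ^ 2 - 2 * s + 5) * (2 * s ^ 2 + 15 * s + 45) * y ^ 2
      + (s ^ 2 - 2 * s + 5) ^ 2 * (s ^ 3 + 9 * s ^ 2 + 27 * s + 135) = 0) :
    s = -8 ∧ y ^ 2 = 289 := by
  have hu : 0 < s ^ 2 - 2 * s + 5 := by nlinarith [sq_nonneg (s - 1)]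
  obtain ⟨Z, hZ⟩ : ∃ Z, y ^ 2 = (s ^ 2 - 2 * s + 5) * Z :=
    ⟨y ^ 2 / (s ^ 2 - 2 * s + 5), by rw [mul_div_cancel₀ _ hu.ne']⟩
  have hZ0 : 0 ≤ Z := by
    by_contra! hn
    nlinarith [mul_pos hu (neg_pos.2 hn), sq_nonneg y]
  have h1 : (Z - 1) ^ 2 * s ^ 3 + (Z - 1) * (Z ^ 2 - 9) * s ^ 2 - (Z + 3) ^ 2 * (2 * Z - 3) * s
      + 5 * (Z + 3) ^ 3 = 0 := by
    have e4 : y ^ 4 = ((s ^ 2 - 2 * s + 5) * Z) ^ 2 := by rw [← hZ]; ring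
    have e6 : y ^ 6 = ((s ^ 2 - 2 * s + 5) * Z) ^ 3 := by rw [← hZ]; ring
    rw [e4, e6, hZ] at h
    apply mul_left_cancel₀ (pow_ne_zero 2 hu.ne')
    linear_combination h
  have hZ3 : Z + 3 ≠ 0 := by linarith
  obtain ⟨v, hv⟩ : ∃ v, s * (Z - 1) = (v + 1) * (Z + 3) :=
    ⟨s * (Z - 1) / (Z + 3) - 1, by field_simp; ring⟩
  have hq : Z * (v ^ 2 + 4) = 4 - v ^ 3 := by
    apply mul_left_cancel₀ (pow_ne_zero 3 hZ3)
    have e : (s * (Z - 1)) ^ 3 + (Z ^ 2 - 9) * (s * (Z - 1)) ^ 2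
        - (Z + 3) ^ 2 * (2 * Z - 3) * (s * (Z - 1)) + 5 * (Z + 3) ^ 3 * (Z - 1) = 0 := by
      linear_combination (Z - 1) * h1
    rw [hv] at e
    linear_combination e
  have hv4 : v ^ 2 + 4 ≠ 0 := by positivity
  have hs : (v + 1) * (s * v ^ 2) = (v + 1) * (v ^ 3 - 3 * v ^ 2 - 16) := by
    linear_combination (-(v ^ 2 + 4)) * hv + (s - (v + 1)) * hq
  have hv0 : v ≠ 0 := by
    rintro rfl
    norm_num at hs
  have hs2 : s * v ^ 2 = v ^ 3 - 3 * v ^ 2 - 16 := by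
    by_cases hv1 : v + 1 = 0
    · have e : v = -1 := by linarith
      rw [e] at hq ⊢
      have e1 : Z = 1 := by linarith
      rw [e1] at h1
      linarith
    · exact mul_left_cancel₀ hv1 hs
  have hm : (y * v ^ 2) ^ 2 = (4 - v ^ 3) * ((v ^ 2 - 4 * v) ^ 2 + 64) := by
    have e1 : (y * v ^ 2) ^ 2 = ((s * v ^ 2) ^ 2 - 2 * v ^ 2 * (s * v ^ 2) + 5 * v ^ 4) * Z := by
      linear_combination v ^ 4 * hZ
    rw [hs2] at e1
    rw [e1]
    linear_combination ((v ^ 2 - 4 * v) ^ 2 + 64) * hq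
  have hvv := rat_main hv0 hm
  rw [hvv] at hs2 hm
  constructor <;> linarith

end Q4

/-- The rational points of the curve `ℬ₂ : x⁶ + p(t)x⁴ − q(t)x² + r(t) = 0`, where
`p(t) = 4(64t³ − 16t² − 36t + 45)`, `q(t) = 16(4t − 3)(16t² − 8t + 5)(32t² + 60t + 45)`
and `r(t) = 64(16t² − 8t + 5)²(64t³ + 144t² + 108t + 135)`, are exactly `(−2, ±34)`. -/
theorem curve_B2_points (t x : ℚ) :
    x ^ 6 + (4 * (64 * t ^ 3 - 16 * t ^ 2 - 36 * t + 45)) * x ^ 4 -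
      (16 * (4 * t - 3) * (16 * t ^ 2 - 8 * t + 5) * (32 * t ^ 2 + 60 * t + 45)) * x ^ 2 +
      64 * (16 * t ^ 2 - 8 * t + 5) ^ 2 * (64 * t ^ 3 + 144 * t ^ 2 + 108 * t + 135) = 0 ↔
    (t = -2 ∧ x = 34) ∨ (t = -2 ∧ x = -34) := by
  constructor
  · intro h
    obtain ⟨h1, h2⟩ := Q4.curve_red (s := 4 * t) (y := x / 2) (by linear_combination h / 64)
    have ht : t = -2 := by linarith
    have hx : (x - 34) * (x + 34) = 0 := by linear_combination 4 * h2
    rcases mul_eq_zero.1 hx with h3 | h3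
    · exact Or.inl ⟨ht, by linarith⟩
    · exact Or.inr ⟨ht, by linarith⟩
  · rintro (⟨rfl, rfl⟩ | ⟨rfl, rfl⟩) <;> norm_num
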